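/- arXiv:2001.09525 — 3 statements merged into one kernel-verified Lean document; each statement's English description precedes it below -/
import Mathlib

section
/- Let ABC be a triangle and let T' be a minimum area isosceles container for ABC. Then T' and ABC have a common side and equal angles at one endpoint of that side: there exist two distinct vertices P and Q of ABC that are also vertices of T', and the angle of ABC at P equals the angle of T' at P. -/
open EuclideanGeometry MeasureTheory Real

noncomputable section

/-- The Euclidean plane. -/
abbrev Pt : Type := EuclideanSpace ℝ (Fin 2)

/-- The closed triangular region with vertices `A`, `B`, `C`
(the convex hull of the three vertices). -/
def tri (A B C : Pt) : Set Pt := convexHull ℝ {A, B, C}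

/-- The area of the triangle `A B C`:
the 2-dimensional Lebesgue measure of its convex hull. -/
def triArea (A B C : Pt) : ℝ := (volume (tri A B C)).toReal

/-- A triangle is isosceles if at least two of its side lengths coincide. -/
def IsIsosceles (A B C : Pt) : Prop :=
  dist B C = dist C A ∨ dist C A = dist A B ∨ dist A B = dist B C

/-- `S P R` is an isosceles container for the triangle `A B C`:
it is a genuine isosceles triangle whose convex hull contains that of `A B C`. -/
def IsIsoscelesContainer (A B C S P R : Pt) : Prop :=
  AffineIndependent ℝ ![S, P, R] ∧ IsIsosceles S P R ∧ tri A B C ⊆ tri S P R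

/-- `S P R` is a minimum area isosceles container for the triangle `A B C`. -/
def IsMinIsoscelesContainer (A B C S P R : Pt) : Prop :=
  IsIsoscelesContainer A B C S P R ∧
    ∀ S' P' R' : Pt, IsIsoscelesContainer A B C S' P' R' →
      triArea S P R ≤ triArea S' P' R'

/-- `Z` lies on the ray starting at `X` passing through `Y`. -/
def OnRay (X Y Z : Pt) : Prop := SameRay ℝ (Y - X) (Z - X)

open scoped Classical in
/-- The angle of the triangle `A B C` at the vertex `X ∈ {A, B, C}`:
the undirected angle at `X` spanned by the two other vertices. -/
def vertexAngle (X A B C : Pt) : ℝ :=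
  if X = A then ∠ B A C else if X = B then ∠ A B C else ∠ A C B

section ObliqueCoordinates

open Filter Topology

/-- In oblique coordinates in which the isosceles triangle has its apex at the origin, its base
vertices at `(1, 0)` and `(0, 1)`, and apex angle with cosine `c`, the three points `(p i, r i)`
lie in an isosceles triangle with smaller area. -/
def HasSmaller (c : ℝ) (p r : Fin 3 → ℝ) : Prop :=
  ∃ s₁ s₂ e₁ e₂ f₁ f₂ : ℝ, 0 < e₁ * f₂ - f₁ * e₂ ∧ e₁ * f₂ - f₁ * e₂ < 1 ∧
    e₁ ^ 2 + e₂ ^ 2 + 2 * c * e₁ * e₂ = f₁ ^ 2 + f₂ ^ 2 + 2 * c * f₁ * f₂ ∧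
    ∀ i, ∃ α β : ℝ, 0 ≤ α ∧ 0 ≤ β ∧ α + β ≤ 1 ∧
      p i = s₁ + α * e₁ + β * f₁ ∧ r i = s₂ + α * e₂ + β * f₂

lemma HasSmaller.swap {c : ℝ} {p r : Fin 3 → ℝ} (h : HasSmaller c p r) : HasSmaller c r p := by
  obtain ⟨s₁, s₂, e₁, e₂, f₁, f₂, h0, h1, hq, hi⟩ := h
  refine ⟨s₂, s₁, f₂, f₁, e₂, e₁, by linarith, by linarith, by linarith, fun i => ?_⟩
  obtain ⟨α, β, ha, hb, hab, hp, hr⟩ := hi i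
  exact ⟨β, α, hb, ha, by linarith, by linarith, by linarith⟩

/-- Shrinking by a homothety centred at the apex. -/
lemma hasSmaller_of_base_free {c : ℝ} {p r : Fin 3 → ℝ} (hp : ∀ i, 0 ≤ p i) (hr : ∀ i, 0 ≤ r i)
    (h : ∀ i, p i + r i < 1) : HasSmaller c p r := by
  obtain ⟨k, hk0, hk1, hk⟩ : ∃ k : ℝ, 0 < k ∧ k < 1 ∧ ∀ i, p i + r i ≤ k := by
    have : ∀ᶠ k in 𝓝[<] (1 : ℝ), 0 < k ∧ k < 1 ∧ ∀ i, p i + r i ≤ k := by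
      filter_upwards [eventually_nhdsWithin_of_eventually_nhds (eventually_gt_nhds zero_lt_one),
        self_mem_nhdsWithin, Filter.eventually_all.2 fun i =>
          eventually_nhdsWithin_of_eventually_nhds (eventually_gt_nhds (h i))] with k h1 h2 h3
      exact ⟨h1, h2, fun i => (h3 i).le⟩
    exact this.exists
  refine ⟨0, 0, k, 0, 0, k, by nlinarith, by nlinarith, by ring, fun i =>
    ⟨p i / k, r i / k, by have := hp i; positivity, by have := hr i; positivity, ?_, ?_, ?_⟩⟩
  · rw [← add_div, div_le_one hk0]; exact hk i
  · field_simp; ring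
  · field_simp; ring

/-- Shrinking by a homothety centred at a base vertex. -/
lemma hasSmaller_of_leg_free {c : ℝ} {p r : Fin 3 → ℝ} (hr : ∀ i, 0 ≤ r i)
    (h : ∀ i, p i + r i ≤ 1) (hp : ∀ i, 0 < p i) : HasSmaller c p r := by
  obtain ⟨k, hk0, hk1, hk⟩ : ∃ k : ℝ, 0 < k ∧ k < 1 ∧ ∀ i, 1 - p i ≤ k := by
    have : ∀ᶠ k in 𝓝[<] (1 : ℝ), 0 < k ∧ k < 1 ∧ ∀ i, 1 - p i ≤ k := by
      filter_upwards [eventually_nhdsWithin_of_eventually_nhds (eventually_gt_nhds zero_lt_one),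
        self_mem_nhdsWithin, Filter.eventually_all.2 fun i =>
          eventually_nhdsWithin_of_eventually_nhds
            (eventually_gt_nhds (show 1 - p i < 1 by linarith [hp i]))] with k h1 h2 h3
      exact ⟨h1, h2, fun i => (h3 i).le⟩
    exact this.exists
  refine ⟨1 - k, 0, k, 0, 0, k, by nlinarith, by nlinarith, by ring, fun i =>
    ⟨(p i - (1 - k)) / k, r i / k, ?_, by have := hr i; positivity, ?_, ?_, ?_⟩⟩
  · exact div_nonneg (by linarith [hk i]) hk0.le
  · rw [← add_div, div_le_one hk0]; linarith [h i]
  · field_simp; ring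
  · field_simp; ring

/-- Replacing the triangle by a rotated similar copy, whose base and two legs pass through
`(x, 1 - x)`, `(y, 0)` and `(0, z)`. -/
lemma hasSmaller_of_rotation {c : ℝ} {p r : Fin 3 → ℝ} (hc : c ^ 2 < 1) {x y z t : ℝ}
    (ht : t ≠ 0) (hE : t * ((1 - 2 * x) * (1 - c) + y - z) ≤ 0)
    (hk : 0 < 1 + t * ((1 - 2 * x) * (1 - c) + y - z))
    (h : ∀ i, t * z ≤ p i * (1 + c * t) + t * r i ∧ -t * y ≤ (1 - c * t) * r i - t * p i ∧
      p i * (1 + c * t) + t * r i + ((1 - c * t) * r i - t * p i) ≤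
        1 + t * ((1 - 2 * x) * (1 - c))) :
    HasSmaller c p r := by
  set κ := 1 + t * ((1 - 2 * x) * (1 - c) + y - z) with hκ
  set N := 1 + (1 - c ^ 2) * t ^ 2 with hN
  have hN1 : 1 < N := by
    have : 0 < (1 - c ^ 2) * t ^ 2 := mul_pos (by linarith) (by positivity)
    linarith
  have hN0 : 0 < N := by linarith
  have hD : κ / N * (1 - c * t) * (κ / N * (1 + c * t)) - κ / N * (-t) * (κ / N * t)
      = κ ^ 2 / N := by
    field_simp; rw [hN]; ring
  refine ⟨t * z / N * (1 - c * t) - t * y / N * (-t), t * z / N * t - t * y / N * (1 + c * t),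
    κ / N * (1 - c * t), κ / N * t, κ / N * (-t), κ / N * (1 + c * t), ?_, ?_, by ring,
    fun i => ?_⟩
  · rw [hD]; positivity
  · rw [hD, div_lt_one hN0]
    have : κ ≤ 1 := by linarith
    nlinarith
  obtain ⟨h1, h2, h3⟩ := h i
  refine ⟨(p i * (1 + c * t) + t * r i - t * z) / κ, ((1 - c * t) * r i - t * p i + t * y) / κ,
    div_nonneg (by linarith) hk.le, div_nonneg (by linarith) hk.le, ?_, ?_, ?_⟩
  · rw [← add_div, div_le_one hk]; linarith
  · field_simp; rw [hN]; ring
  · field_simp; rw [hN]; ring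

/-- Narrowing the base symmetrically. -/
lemma hasSmaller_of_apex_of_base {c : ℝ} {p r : Fin 3 → ℝ}
    (h : ∀ i, p i = 0 ∧ r i = 0 ∨ 0 < p i ∧ 0 < r i ∧ p i + r i = 1) : HasSmaller c p r := by
  obtain ⟨k, ⟨hk0, hk1⟩, hk⟩ : ∃ k : ℝ, (0 < k ∧ k < 1 / 2) ∧
      ∀ i, p i = 0 ∧ r i = 0 ∨ k ≤ p i ∧ k ≤ r i ∧ p i + r i = 1 := by
    have : ∀ᶠ k in 𝓝[>] (0 : ℝ), (0 < k ∧ k < 1 / 2) ∧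
        ∀ i, p i = 0 ∧ r i = 0 ∨ k ≤ p i ∧ k ≤ r i ∧ p i + r i = 1 := by
      refine Filter.Eventually.and (Filter.Eventually.and self_mem_nhdsWithin
        (eventually_nhdsWithin_of_eventually_nhds (eventually_lt_nhds (by norm_num))))
        (Filter.eventually_all.2 fun i => ?_)
      rcases h i with h | ⟨h1, h2, h3⟩
      · exact Filter.Eventually.of_forall fun _ => Or.inl h
      · filter_upwards [eventually_nhdsWithin_of_eventually_nhds (eventually_lt_nhds h1),
          eventually_nhdsWithin_of_eventually_nhds (eventually_lt_nhds h2)] with k a b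
        exact Or.inr ⟨a.le, b.le, h3⟩
    exact this.exists
  obtain ⟨N, hN⟩ : ∃ N, N = 1 - 2 * k := ⟨_, rfl⟩
  have hk2 : 0 < N := by linarith
  refine ⟨0, 0, 1 - k, k, k, 1 - k, by nlinarith, by nlinarith, by ring, fun i => ?_⟩
  rcases hk i with ⟨h1, h2⟩ | ⟨h1, h2, h3⟩
  · exact ⟨0, 0, le_rfl, le_rfl, by norm_num, by simp [h1], by simp [h2]⟩
  · refine ⟨(p i - k) / N, (r i - k) / N, div_nonneg (by linarith) hk2.le,
      div_nonneg (by linarith) hk2.le, ?_, ?_, ?_⟩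
    · rw [← add_div, div_le_one hk2]; linarith
    · field_simp; rw [hN]; linear_combination (-k) * h3
    · field_simp; rw [hN]; linear_combination (-k) * h3

/-- Lowering the apex. -/
lemma hasSmaller_of_base_eq {c : ℝ} {p r : Fin 3 → ℝ} {x y : ℝ} (hx : 0 < x) (hy : 0 < y)
    (hxy : x + y < 1)
    (h : ∀ i, p i = 1 ∧ r i = 0 ∨ p i = 0 ∧ r i = 1 ∨ p i = x ∧ r i = y) :
    HasSmaller c p r := by
  obtain ⟨k, hk0, hkx, hky⟩ : ∃ k : ℝ, 0 < k ∧ k ≤ x / 2 ∧ k ≤ y / 2 :=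
    ⟨min (x / 2) (y / 2), by positivity, min_le_left _ _, min_le_right _ _⟩
  obtain ⟨N, hN⟩ : ∃ N, N = 1 - 2 * k := ⟨_, rfl⟩
  have hk2 : 0 < N := by linarith
  refine ⟨k, k, 1 - k, -k, -k, 1 - k, by nlinarith, by nlinarith, by ring, fun i => ?_⟩
  rcases h i with ⟨h1, h2⟩ | ⟨h1, h2⟩ | ⟨h1, h2⟩ <;> rw [h1, h2]
  · exact ⟨1, 0, by norm_num, le_rfl, by norm_num, by ring, by ring⟩
  · exact ⟨0, 1, le_rfl, by norm_num, by norm_num, by ring, by ring⟩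
  · refine ⟨(x - k + k * (y - x)) / N, (y - k + k * (x - y)) / N,
      div_nonneg (by nlinarith) hk2.le, div_nonneg (by nlinarith) hk2.le, ?_, ?_, ?_⟩
    · rw [← add_div, div_le_one hk2]; linarith
    · field_simp; rw [hN]; ring
    · field_simp; rw [hN]; ring

/-- Pivoting a leg about `(0, z)` while extending the base. -/
lemma hasSmaller_of_base_of_leg {c : ℝ} {p r : Fin 3 → ℝ} {z : ℝ} (hz : 0 < z) (hz1 : z < 1)
    (h : ∀ i, p i = 0 ∧ r i = z ∨ 0 ≤ r i ∧ r i ≤ 1 ∧ p i + r i = 1) :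
    HasSmaller c p r := by
  obtain ⟨k, hk1, hk⟩ : ∃ k : ℝ, 1 < k ∧ k = 1 + z * (1 - z) / 2 :=
    ⟨_, by nlinarith, rfl⟩
  obtain ⟨N, hN⟩ : ∃ N, N = 2 * k - 1 - z := ⟨_, rfl⟩
  have hd : 0 < N := by linarith
  have hk2 : k < 2 := by nlinarith
  have hz2 : 0 < 1 - z := by linarith
  obtain ⟨m, hm⟩ : ∃ m, m = k * (1 - z) / (2 * N) := ⟨_, rfl⟩
  have hm0 : 0 < m := by rw [hm]; positivity
  have hm' : m * (2 * k - 1 - z) = k * (1 - z) / 2 := by rw [← hN, hm]; field_simp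
  have hD : (k / 2 + m) * (k / 2 + m) - (-(k / 2) + m) * (-(k / 2) + m) = 2 * k * m := by ring
  refine ⟨1 - k / 2 - m, k / 2 - m, k / 2 + m, -(k / 2) + m, -(k / 2) + m, k / 2 + m, ?_, ?_,
    by ring, fun i => ?_⟩
  · rw [hD]; positivity
  · rw [hD]
    refine lt_of_mul_lt_mul_right ?_ hd.le
    have : k ^ 2 * (1 - z) < 2 * k - 1 - z := by
      have h1 : k - 1 < z * (k + 1) := by nlinarith
      nlinarith [mul_pos (sub_pos.2 hk1) (sub_pos.2 h1)]
    nlinarith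
  rcases h i with ⟨h1, h2⟩ | ⟨h1, h2, h3⟩
  · have hkm : 0 < k / 2 + m := by positivity
    rw [h1, h2]
    refine ⟨0, (z - k / 2 + m) / (k / 2 + m), le_rfl, div_nonneg ?_ hkm.le, ?_, ?_, ?_⟩
    · refine le_of_mul_le_mul_right ?_ hd
      nlinarith
    · rw [zero_add, div_le_one hkm]; linarith
    · field_simp; linear_combination 4 * hm'
    · field_simp; ring
  · refine ⟨1 - r i / k, r i / k, ?_, by positivity, by linarith, ?_, ?_⟩
    · rw [sub_nonneg, div_le_one (by linarith)]; linarith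
    · field_simp; linear_combination (2 * k) * h3
    · field_simp; ring
/-- A vector of unit length (for the oblique quadratic form) close to `(0, 1)`. -/
lemma exists_unit_vector {c : ℝ} (hc : c ^ 2 < 1) {a : ℝ} (ha : |a| ≤ 1) :
    ∃ b : ℝ, a ^ 2 + b ^ 2 + 2 * c * a * b = 1 ∧ b ≤ 1 - c * a ∧ 1 - c * a - a ^ 2 ≤ b := by
  have ha2 : a ^ 2 ≤ 1 := by rw [← sq_abs]; nlinarith [abs_nonneg a]
  have h0 : 0 ≤ 1 - (1 - c ^ 2) * a ^ 2 := by nlinarith [sq_nonneg a, sq_nonneg (c * a)]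
  have hs := Real.sq_sqrt h0
  have hs1 : √(1 - (1 - c ^ 2) * a ^ 2) ≤ 1 := by
    rw [Real.sqrt_le_one]; nlinarith [sq_nonneg a]
  have hs2 : 1 - a ^ 2 ≤ √(1 - (1 - c ^ 2) * a ^ 2) := by
    apply Real.le_sqrt_of_sq_le
    nlinarith [mul_nonneg (sq_nonneg a) (sub_nonneg.2 ha2), sq_nonneg (c * a)]
  exact ⟨-c * a + √(1 - (1 - c ^ 2) * a ^ 2), by linear_combination hs, by linarith, by linarith⟩

/-- Rotating a leg about the apex. -/
lemma hasSmaller_of_leg_eq {c : ℝ} {p r : Fin 3 → ℝ} (hc : c ^ 2 < 1) {x y : ℝ} (hx : 0 < x)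
    (hy : 0 < y) (hxy : x + y < 1)
    (h : ∀ i, p i = 0 ∧ r i = 0 ∨ p i = 1 ∧ r i = 0 ∨ p i = x ∧ r i = y) :
    HasSmaller c p r := by
  have hc1 := abs_lt.1 ((sq_lt_one_iff_abs_lt_one c).1 hc)
  obtain ⟨δ, hδ, hδx, hδy⟩ : ∃ δ : ℝ, 0 < δ ∧ δ ≤ x / 3 ∧ δ ≤ (1 - x - y) / 3 :=
    ⟨min (x / 3) ((1 - x - y) / 3), lt_min (by positivity) (by linarith), min_le_left _ _,
      min_le_right _ _⟩
  obtain ⟨a, ha, hca⟩ : ∃ a, |a| = δ ∧ 0 ≤ c * a := by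
    rcases le_total 0 c with h | h
    · exact ⟨δ, abs_of_pos hδ, mul_nonneg h hδ.le⟩
    · exact ⟨-δ, by rw [abs_neg, abs_of_pos hδ], by nlinarith⟩
  have ha1 := abs_le.1 ha.le
  have ha2 : a ^ 2 = δ ^ 2 := by rw [← sq_abs, ha]
  have hca' : c * a ≤ δ := by
    rw [← ha]
    exact (le_abs_self _).trans (by
      rw [abs_mul]; exact mul_le_of_le_one_left (abs_nonneg a) (abs_le.2 ⟨hc1.1.le, hc1.2.le⟩))
  obtain ⟨b, hb, hb1, hb2⟩ := exists_unit_vector hc (a := a) (by linarith)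
  have hb3 : 1 - 2 * δ ≤ b := by nlinarith
  have hb0 : 0 < b := by linarith
  refine ⟨0, 0, 1, 0, a, b, by linarith, by nlinarith, by linarith, fun i => ?_⟩
  rcases h i with ⟨h1, h2⟩ | ⟨h1, h2⟩ | ⟨h1, h2⟩ <;> rw [h1, h2]
  · exact ⟨0, 0, le_rfl, le_rfl, by norm_num, by ring, by ring⟩
  · exact ⟨1, 0, by norm_num, le_rfl, by norm_num, by ring, by ring⟩
  · refine ⟨(x * b - y * a) / b, y / b, div_nonneg (by nlinarith) hb0.le, by positivity, ?_, ?_, ?_⟩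
    · rw [← add_div, div_le_one hb0]; nlinarith
    · field_simp; ring
    · field_simp; ring

lemma eventually_pos_of_continuous {F : ℝ → ℝ} (hF : Continuous F) (h : 0 < F 0) :
    ∀ᶠ t in 𝓝 (0 : ℝ), 0 < F t :=
  hF.continuousAt.eventually (lt_mem_nhds h)

lemma exists_ne_zero_of_eventually {Q : ℝ → Prop} (h : ∀ᶠ t in 𝓝 (0 : ℝ), Q t) (E : ℝ) :
    ∃ t, t ≠ 0 ∧ t * E ≤ 0 ∧ Q t := by
  rcases le_total 0 E with hE | hE
  · obtain ⟨t, hQ, ht⟩ := ((eventually_nhdsWithin_of_eventually_nhds h).and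
      (eventually_mem_nhdsWithin (s := Set.Iio (0 : ℝ)))).exists
    exact ⟨t, ne_of_lt ht, mul_nonpos_of_nonpos_of_nonneg (le_of_lt ht) hE, hQ⟩
  · obtain ⟨t, hQ, ht⟩ := ((eventually_nhdsWithin_of_eventually_nhds h).and
      (eventually_mem_nhdsWithin (s := Set.Ioi (0 : ℝ)))).exists
    exact ⟨t, ne_of_gt ht, mul_nonpos_of_nonneg_of_nonpos (le_of_lt ht) hE, hQ⟩

/-- If every side contains exactly one of the points, rotating in one of the two directions
decreases the area. -/
lemma hasSmaller_of_no_flush {c : ℝ} {p r : Fin 3 → ℝ} (hc : c ^ 2 < 1) (hp : ∀ i, 0 ≤ p i)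
    (hr : ∀ i, 0 ≤ r i) (hpr : ∀ i, p i + r i ≤ 1) {i j k : Fin 3}
    (hi : p i + r i = 1) (hj : r j = 0) (hk : p k = 0) (hi' : ∀ l, p l + r l = 1 → l = i)
    (hj' : ∀ l, r l = 0 → l = j) (hk' : ∀ l, p l = 0 → l = k) : HasSmaller c p r := by
  set E := (1 - 2 * p i) * (1 - c) + p j - r k with hE
  have key : ∀ᶠ t in 𝓝 (0 : ℝ), 0 < 1 + t * E ∧
      ∀ l, t * r k ≤ p l * (1 + c * t) + t * r l ∧ -t * p j ≤ (1 - c * t) * r l - t * p l ∧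
      p l * (1 + c * t) + t * r l + ((1 - c * t) * r l - t * p l) ≤
        1 + t * ((1 - 2 * p i) * (1 - c)) := by
    refine (eventually_pos_of_continuous (by fun_prop) (by simp)).and
      (Filter.eventually_all.2 fun l => Filter.Eventually.and ?_ (Filter.Eventually.and ?_ ?_))
    · by_cases h : l = k
      · subst h; refine Filter.Eventually.of_forall fun t => ?_
        rw [hk]; linarith
      · have h0 : 0 < p l := lt_of_le_of_ne (hp l) fun h0 => h (hk' l h0.symm)
        filter_upwards [eventually_pos_of_continuous
          (F := fun t => p l * (1 + c * t) + t * r l - t * r k) (by fun_prop) (by simpa)]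
          with t ht using by linarith
    · by_cases h : l = j
      · subst h; refine Filter.Eventually.of_forall fun t => ?_
        rw [hj]; linarith
      · have h0 : 0 < r l := lt_of_le_of_ne (hr l) fun h0 => h (hj' l h0.symm)
        filter_upwards [eventually_pos_of_continuous
          (F := fun t => (1 - c * t) * r l - t * p l + t * p j) (by fun_prop) (by simpa)]
          with t ht using by linarith
    · by_cases h : l = i
      · subst h; refine Filter.Eventually.of_forall fun t => le_of_eq ?_
        linear_combination (1 + t * (1 - c)) * hi
      · have h0 : p l + r l < 1 := lt_of_le_of_ne (hpr l) fun h0 => h (hi' l h0)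
        filter_upwards [eventually_pos_of_continuous
          (F := fun t => 1 + t * ((1 - 2 * p i) * (1 - c)) -
            (p l * (1 + c * t) + t * r l + ((1 - c * t) * r l - t * p l)))
          (by fun_prop) (by simpa using h0)] with t ht using by linarith
  obtain ⟨t, ht, htE, h1, h2⟩ := exists_ne_zero_of_eventually key E
  exact hasSmaller_of_rotation hc ht htE h1 h2

/-- The apex and a point of each of one leg and the base, at a critical apex angle. -/
lemma hasSmaller_of_critical_angle {c : ℝ} {p r : Fin 3 → ℝ} (hc : c ^ 2 < 1) {x y : ℝ}
    (hx0 : 0 < x) (hx1 : x < 1) (hy0 : 0 < y) (hy1 : y < 1)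
    (h : ∀ i, p i = 0 ∧ r i = 0 ∨ p i = y ∧ r i = 0 ∨ p i = x ∧ r i = 1 - x)
    (hg : 2 * (x * c + (1 - x)) - c = 0) : HasSmaller c p r := by
  have key : ∀ᶠ t in 𝓝[>] (0 : ℝ),
      t * ((1 - 2 * x) * (1 - c) + y - 0) ≤ 0 ∧
      0 < 1 + t * ((1 - 2 * x) * (1 - c) + y - 0) ∧
      0 < y * (1 + c * t) ∧ 0 < 1 + t * ((1 - 2 * x) * (1 - c)) ∧
      0 < 1 + t * ((1 - 2 * x) * (1 - c)) - (y * (1 + c * t) - t * y) ∧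
      0 < x * (1 + c * t) + t * (1 - x) ∧ 0 < (1 - c * t) * (1 - x) - t * x + t * y := by
    refine Filter.Eventually.and ?_ (eventually_nhdsWithin_of_eventually_nhds ?_)
    · filter_upwards [self_mem_nhdsWithin] with t ht
      refine mul_nonpos_of_nonneg_of_nonpos (le_of_lt ht) ?_
      nlinarith
    · exact (eventually_pos_of_continuous (by fun_prop) (by simp)).and <|
        (eventually_pos_of_continuous (by fun_prop) (by simpa)).and <|
        (eventually_pos_of_continuous (by fun_prop) (by simp)).and <|
        (eventually_pos_of_continuous (by fun_prop) (by simpa)).and <|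
        (eventually_pos_of_continuous (by fun_prop) (by simpa)).and <|
        (eventually_pos_of_continuous (by fun_prop) (by simpa))
  obtain ⟨t, ht0, h1, h2, h3, h4, h5, h6, h7⟩ :=
    ((eventually_mem_nhdsWithin (s := Set.Ioi (0 : ℝ))).and key).exists
  have ht0 : 0 < t := ht0
  refine hasSmaller_of_rotation hc ht0.ne' h1 h2 fun i => ?_
  rcases h i with ⟨h1, h2⟩ | ⟨h1, h2⟩ | ⟨h1, h2⟩ <;> rw [h1, h2] <;>
    refine ⟨?_, ?_, ?_⟩ <;> nlinarith

/-- The apex and a point of each of one leg and the base. -/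
lemma hasSmaller_of_apex_of_leg_of_base {c : ℝ} {p r : Fin 3 → ℝ} (hc : c ^ 2 < 1) {x y : ℝ}
    (hx0 : 0 < x) (hx1 : x < 1) (hy0 : 0 < y) (hy1 : y < 1)
    (h : ∀ i, p i = 0 ∧ r i = 0 ∨ p i = y ∧ r i = 0 ∨ p i = x ∧ r i = 1 - x) :
    HasSmaller c p r := by
  by_cases hg : 2 * (x * c + (1 - x)) - c = 0
  · exact hasSmaller_of_critical_angle hc hx0 hx1 hy0 hy1 h hg
  have hc1 := abs_lt.1 ((sq_lt_one_iff_abs_lt_one c).1 hc)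
  set κ := x * c + (1 - x) with hκ
  have hκ1 : |κ| ≤ 1 := by rw [abs_le]; constructor <;> nlinarith
  have hκ2 : κ ^ 2 ≤ 1 := (sq_le_one_iff_abs_le_one κ).2 hκ1
  obtain ⟨δ, hδ, h1, h2, h3, h4, h5⟩ : ∃ δ : ℝ, 0 < δ ∧ δ ≤ 1 / 4 ∧ δ ≤ |2 * κ - c| / 3 ∧
      δ ≤ x / 4 ∧ δ ≤ (1 - x) / 4 ∧ δ ≤ (1 - y) / 8 := by
    have : ∀ᶠ δ in 𝓝[>] (0 : ℝ), 0 < δ ∧ δ < 1 / 4 ∧ δ < |2 * κ - c| / 3 ∧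
        δ < x / 4 ∧ δ < (1 - x) / 4 ∧ δ < (1 - y) / 8 := by
      refine Filter.Eventually.and self_mem_nhdsWithin
        (eventually_nhdsWithin_of_eventually_nhds ?_)
      exact (eventually_lt_nhds (by norm_num)).and <|
        (eventually_lt_nhds (by positivity)).and <|
        (eventually_lt_nhds (by positivity)).and <|
        (eventually_lt_nhds (by linarith)).and <| eventually_lt_nhds (by linarith)
    obtain ⟨δ, h0, h1, h2, h3, h4, h5⟩ := this.exists
    exact ⟨δ, h0, h1.le, h2.le, h3.le, h4.le, h5.le⟩
  obtain ⟨a, ha, hga⟩ : ∃ a, |a| = δ ∧ a * (2 * κ - c) = δ * |2 * κ - c| := by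
    rcases le_total 0 (2 * κ - c) with h | h
    · exact ⟨δ, abs_of_pos hδ, by rw [abs_of_nonneg h]⟩
    · exact ⟨-δ, by rw [abs_neg, abs_of_pos hδ], by rw [abs_of_nonpos h]; ring⟩
  have ha1 := abs_le.1 ha.le
  have ha2 : a ^ 2 = δ ^ 2 := by rw [← sq_abs, ha]
  have hca : |c * a| ≤ δ := by
    rw [← ha, abs_mul]
    exact mul_le_of_le_one_left (abs_nonneg a) (abs_le.2 ⟨hc1.1.le, hc1.2.le⟩)
  have hκa : |a * κ| ≤ δ := by rw [← ha, abs_mul]; exact mul_le_of_le_one_right (abs_nonneg a) hκ1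
  have hca := abs_le.1 hca
  have hκa := abs_le.1 hκa
  obtain ⟨b, hb, hb1, hb2⟩ := exists_unit_vector hc (a := a) (by linarith)
  have hb3 : 1 - 2 * δ ≤ b := by nlinarith
  have hb4 : b ≤ 1 + δ := by linarith
  have hb0 : 0 < b := by linarith
  obtain ⟨w, hw⟩ : ∃ w, w = x * b + (1 - x) * (1 - a) := ⟨_, rfl⟩
  have hw0 : 0 < w := by
    rw [hw]; exact add_pos (mul_pos hx0 hb0) (mul_pos (by linarith) (by linarith))
  have hw1 : w ≤ 1 - a * κ := by rw [hw, hκ]; nlinarith [mul_le_mul_of_nonneg_left hb1 hx0.le]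
  have hw2 : b - 2 * δ ≤ w := by
    rw [hw]; nlinarith [mul_nonneg (sub_nonneg.2 hx1.le) (show 0 ≤ 1 - a - b + 2 * δ by linarith),
      mul_pos hx0 hδ]
  have hwb : w ^ 2 < b := by
    have : w ^ 2 ≤ (1 - a * κ) ^ 2 := pow_le_pow_left₀ hw0.le hw1 2
    have h6 : δ * (3 * δ) ≤ δ * |2 * κ - c| := by gcongr; linarith
    have h7 : a ^ 2 * κ ^ 2 ≤ a ^ 2 := mul_le_of_le_one_right (sq_nonneg a) hκ2
    linarith [pow_pos hδ 2]
  have hD : w / b * (w / b * b) - w / b * a * 0 = w ^ 2 / b := by field_simp; ring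
  refine ⟨0, 0, w / b, 0, w / b * a, w / b * b, ?_, ?_, by linear_combination -(w / b) ^ 2 * hb,
    fun i => ?_⟩
  · rw [hD]; positivity
  · rw [hD, div_lt_one hb0]; exact hwb
  rcases h i with ⟨h1, h2⟩ | ⟨h1, h2⟩ | ⟨h1, h2⟩ <;> rw [h1, h2]
  · exact ⟨0, 0, le_rfl, le_rfl, by norm_num, by ring, by ring⟩
  · refine ⟨y * b / w, 0, by positivity, le_rfl, ?_, ?_, ?_⟩
    · rw [add_zero, div_le_one hw0]; nlinarith
    · field_simp; ring
    · ring
  · refine ⟨1 - (1 - x) / w, (1 - x) / w, ?_, ?_, by linarith, ?_, ?_⟩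
    · rw [sub_nonneg, div_le_one hw0]; linarith
    · exact div_nonneg (by linarith) hw0.le
    · field_simp; rw [hw]; ring
    · field_simp; ring
/-- A base vertex, a point of the leg at that vertex and a point of the upper part of the opposite
leg: there is a much smaller isosceles triangle with apex at the latter point. -/
lemma hasSmaller_of_two_mul_le {c : ℝ} {p r : Fin 3 → ℝ} (hc : c ^ 2 < 1) {z : ℝ} (hz : 0 < z)
    (hzc : 2 * z ≤ c)
    (h : ∀ i, r i = 0 ∧ 0 ≤ p i ∧ p i ≤ 1 ∨ p i = 0 ∧ r i = z) :
    HasSmaller c p r := by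
  have hc1 := abs_lt.1 ((sq_lt_one_iff_abs_lt_one c).1 hc)
  have h0 : 0 ≤ 1 + z ^ 2 - 2 * c * z := by nlinarith
  obtain ⟨ρ, hρ⟩ : ∃ ρ, ρ = √(1 + z ^ 2 - 2 * c * z) := ⟨_, rfl⟩
  have hρ2 : ρ ^ 2 = 1 + z ^ 2 - 2 * c * z := by rw [hρ, Real.sq_sqrt h0]
  have hzρ : z ≤ ρ := by rw [hρ]; apply Real.le_sqrt_of_sq_le; nlinarith
  have hρ0 : 0 < ρ := by linarith
  have hρ1 : ρ < 1 := by nlinarith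
  refine ⟨0, z, 0, -ρ, 1, -z, by linarith, by linarith, by linear_combination hρ2, fun i => ?_⟩
  rcases h i with ⟨h2, h3, h4⟩ | ⟨h1, h2⟩
  · refine ⟨z * (1 - p i) / ρ, p i, div_nonneg (mul_nonneg hz.le (by linarith)) hρ0.le, h3, ?_, ?_,
      ?_⟩
    · have : z * (1 - p i) / ρ ≤ 1 - p i := by
        rw [div_le_iff₀ hρ0]; nlinarith
      linarith
    · ring
    · rw [h2]; field_simp; ring
  · exact ⟨0, 0, le_rfl, le_rfl, by norm_num, by rw [h1]; ring, by rw [h2]; ring⟩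

/-- A base vertex, a point of the leg at that vertex and a point of the lower part of the opposite
leg: pivoting the opposite leg decreases the area. -/
lemma hasSmaller_of_lt_two_mul {c : ℝ} {p r : Fin 3 → ℝ} (hc : c ^ 2 < 1) {x z : ℝ}
    (hx : 0 < x) (hz0 : 0 < z) (hz1 : z < 1) (hzc : c < 2 * z)
    (h : ∀ i, r i = 0 ∧ x ≤ p i ∧ p i ≤ 1 ∨ p i = 0 ∧ r i = z) :
    HasSmaller c p r := by
  obtain ⟨k, hk0, hkx, hk1, hk2, hk3⟩ : ∃ k : ℝ, 0 < k ∧ k ≤ x ∧ k < 1 / 2 ∧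
      k < (2 * z - c) / 3 ∧ k < (1 - z ^ 2) / 4 := by
    have : ∀ᶠ k in 𝓝[>] (0 : ℝ), 0 < k ∧ k < x ∧ k < 1 / 2 ∧
      k < (2 * z - c) / 3 ∧ k < (1 - z ^ 2) / 4 := by
      refine Filter.Eventually.and self_mem_nhdsWithin
        (eventually_nhdsWithin_of_eventually_nhds ?_)
      exact (eventually_lt_nhds hx).and <| (eventually_lt_nhds (by norm_num)).and <|
        (eventually_lt_nhds (by linarith)).and <| eventually_lt_nhds (by nlinarith)
    exact this.exists.imp fun k h => ⟨h.1, h.2.1.le, h.2.2⟩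
  obtain ⟨n, hn⟩ : ∃ n, n = √(k ^ 2 + z ^ 2 - 2 * c * k * z) := ⟨_, rfl⟩
  have hlow : ((1 - k) ^ 2 * z) ^ 2 < k ^ 2 + z ^ 2 - 2 * c * k * z := by
    have h1 : (1 - k) ^ 4 ≤ 1 - 4 * k + 6 * k ^ 2 := by nlinarith [pow_pos hk0 3]
    have h2 : (1 - k) ^ 4 * z ^ 2 ≤ (1 - 4 * k + 6 * k ^ 2) * z ^ 2 := by gcongr
    have h3 : 3 * k * z ≤ 3 * k := by nlinarith
    have h4 : 0 < k * z * (2 * z - c - 3 * k * z) :=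
      mul_pos (mul_pos hk0 hz0) (by linarith)
    nlinarith
  have hlow0 : 0 < (1 - k) ^ 2 * z := mul_pos (pow_pos (by linarith) 2) hz0
  have hn2 : n ^ 2 = k ^ 2 + z ^ 2 - 2 * c * k * z := by
    rw [hn, Real.sq_sqrt ((sq_nonneg _).trans hlow.le)]
  have hnl : (1 - k) ^ 2 * z < n := by rw [hn]; exact Real.lt_sqrt_of_sq_lt hlow
  have hn0 : 0 < n := hlow0.trans hnl
  have hnk : n ≤ 1 - k := by
    have hc1 := abs_lt.1 ((sq_lt_one_iff_abs_lt_one c).1 hc)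
    have hkz : k * z ≤ k := by nlinarith
    have hckz : 0 ≤ k * z * (1 + c) := mul_nonneg (by positivity) (by linarith)
    rw [hn]
    refine (Real.sqrt_le_left (by linarith)).2 ?_
    nlinarith
  have hk' : 0 < 1 - k := by linarith
  have hD : (1 - k) * ((1 - k) / n * z) - (1 - k) / n * (-k) * 0 = (1 - k) ^ 2 * z / n := by
    field_simp; ring
  refine ⟨k, 0, 1 - k, 0, (1 - k) / n * (-k), (1 - k) / n * z, ?_, ?_, ?_, fun i => ?_⟩
  · rw [hD]; positivity
  · rw [hD, div_lt_one hn0]; exact hnl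
  · field_simp; linear_combination (1 - k) ^ 2 * hn2
  rcases h i with ⟨h2, h3, h4⟩ | ⟨h1, h2⟩
  · refine ⟨(p i - k) / (1 - k), 0, div_nonneg (by linarith) hk'.le, le_rfl, ?_, ?_, ?_⟩
    · rw [add_zero, div_le_one hk']; linarith
    · field_simp; ring
    · rw [h2]; ring
  · refine ⟨0, n / (1 - k), le_rfl, by positivity, ?_, ?_, ?_⟩
    · rw [zero_add, div_le_one hk']; exact hnk
    · rw [h1]; field_simp; ring
    · rw [h2]; field_simp; ring

/-- A base vertex and two interior points of the opposite leg. -/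
lemma hasSmaller_of_base_vertex_of_leg {c : ℝ} {p r : Fin 3 → ℝ} (hc : c ^ 2 < 1) {x : ℝ}
    (hx : 0 < x) {i₀ : Fin 3} (hi₀ : p i₀ = x)
    (h : ∀ i, p i = 0 ∧ r i = 1 ∨ r i = 0 ∧ x ≤ p i ∧ p i < 1) :
    HasSmaller c p r := by
  have hc1 := abs_lt.1 ((sq_lt_one_iff_abs_lt_one c).1 hc)
  have hx1 : x < 1 := by
    rcases h i₀ with h | h <;> linarith [h.1, h.2]
  rcases le_or_gt c 0 with hc0 | hc0
  · have key : ∀ᶠ t in 𝓝[<] (0 : ℝ),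
        t * ((1 - 2 * 0) * (1 - c) + x - 1) ≤ 0 ∧
        0 < 1 + t * ((1 - 2 * 0) * (1 - c) + x - 1) ∧
        ∀ i, p i = 0 ∧ r i = 1 ∨ (r i = 0 ∧ x ≤ p i) ∧
          0 < p i * (1 + c * t) - t ∧
          0 < 1 + t * (1 - c) - (p i * (1 + c * t) - t * p i) := by
      refine Filter.Eventually.and ?_ (Filter.Eventually.and
        (eventually_nhdsWithin_of_eventually_nhds
          (eventually_pos_of_continuous (by fun_prop) (by simp)))
        (Filter.eventually_all.2 fun i => ?_))
      · filter_upwards [self_mem_nhdsWithin] with t ht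
        exact mul_nonpos_of_nonpos_of_nonneg (le_of_lt ht) (by linarith)
      · rcases h i with h | ⟨h1, h2, h3⟩
        · exact Filter.Eventually.of_forall fun _ => Or.inl h
        · refine eventually_nhdsWithin_of_eventually_nhds ?_
          filter_upwards [eventually_pos_of_continuous
              (F := fun t => p i * (1 + c * t) - t) (by fun_prop) (by simp; linarith),
            eventually_pos_of_continuous
              (F := fun t => 1 + t * (1 - c) - (p i * (1 + c * t) - t * p i)) (by fun_prop)
              (by simpa)] with t a b using Or.inr ⟨⟨h1, h2⟩, a, b⟩
    obtain ⟨t, ht0, h1, h2, h3⟩ :=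
      ((eventually_mem_nhdsWithin (s := Set.Iio (0 : ℝ))).and key).exists
    have ht0 : t < 0 := ht0
    have htx : 0 < 1 + t * ((1 - c) - 1) + t * x := by linarith
    have hct : 0 ≤ c * t := mul_nonneg_of_nonpos_of_nonpos hc0 ht0.le
    refine hasSmaller_of_rotation hc ht0.ne h1 h2 fun i => ?_
    rcases h3 i with ⟨h1, h2⟩ | ⟨⟨h1, h2⟩, h3, h4⟩
    · rw [h1, h2]; refine ⟨?_, ?_, ?_⟩ <;> linarith
    · rw [h1]; refine ⟨by linarith, by nlinarith, by linarith⟩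
  · obtain ⟨ε, hε0, hεc, hεx⟩ : ∃ ε : ℝ, 0 < ε ∧ ε ≤ c ∧ ε ≤ (1 - c) * x / 2 :=
      ⟨min c ((1 - c) * x / 2), lt_min hc0 (by have := sub_pos.2 hc1.2; positivity),
        min_le_left _ _, min_le_right _ _⟩
    obtain ⟨q, hq⟩ : ∃ q, q = 1 - c + ε := ⟨_, rfl⟩
    have hq0 : 0 < q := by linarith
    obtain ⟨s, hs⟩ : ∃ s, s = c + (q ^ 2 - (1 - c ^ 2)) / (2 * q) := ⟨_, rfl⟩
    have hs' : (s - c) * (2 * q) = q ^ 2 - (1 - c ^ 2) := by rw [hs]; field_simp; ring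
    have hl : (c + q - s) * (2 * q) = q ^ 2 + (1 - c ^ 2) := by linear_combination -hs'
    have hl0 : 0 < c + q - s := by
      by_contra! hneg
      nlinarith
    have hl1 : c + q - s < 1 := by
      have : (c + q - s) * (2 * q) < 1 * (2 * q) := by rw [hl, hq]; nlinarith
      exact lt_of_mul_lt_mul_right this (by positivity)
    have hsx : s ≤ x := by
      have : (s - c) * (2 * q) ≤ (x - c) * (2 * q) := by rw [hs', hq]; nlinarith
      have := le_of_mul_le_mul_right this (by positivity)
      linarith
    refine ⟨s, 0, c + q - s, 0, -s, 1, by linarith, by linarith, ?_, fun i => ?_⟩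
    · linear_combination hl
    rcases h i with ⟨h1, h2⟩ | ⟨h1, h2, h3⟩
    · exact ⟨0, 1, le_rfl, by norm_num, by norm_num, by rw [h1]; ring, by rw [h2]; ring⟩
    · refine ⟨(p i - s) / (c + q - s), 0, div_nonneg (by linarith) hl0.le, le_rfl, ?_, ?_, ?_⟩
      · rw [add_zero, div_le_one hl0]; linarith
      · field_simp; ring
      · rw [h1]; ring
/-- Barycentric coordinates, with respect to the vertices `(0, 0)`, `(1, 0)`, `(0, 1)`, of the
point with coordinates `(x, y)`. -/
def bary (x y : ℝ) : Fin 3 → ℝ := ![1 - x - y, x, y]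

/-- Two of the points `(p i, r i)` are vertices of the triangle `(0, 0)`, `(1, 0)`, `(0, 1)`, and
the third one is on the side of this triangle through the first and not through the second. -/
def SharesSideAndAngle (p r : Fin 3 → ℝ) : Prop :=
  ∃ i j k l m : Fin 3, i ≠ j ∧ j ≠ k ∧ i ≠ k ∧ l ≠ m ∧
    bary (p i) (r i) l = 1 ∧ bary (p j) (r j) m = 1 ∧ bary (p k) (r k) m = 0

lemma SharesSideAndAngle.swap {p r : Fin 3 → ℝ} (h : SharesSideAndAngle p r) :
    SharesSideAndAngle r p := by
  obtain ⟨i, j, k, l, m, hij, hjk, hik, hlm, h1, h2, h3⟩ := h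
  have key : ∀ x y l, bary x y (Equiv.swap 1 2 l) = bary y x l := by
    intro x y l
    fin_cases l
    · have : Equiv.swap (1 : Fin 3) 2 0 = 0 := by decide
      simp only [Fin.zero_eta, this]
      simp [bary]; ring
    · simp [bary]
    · simp [bary]
  exact ⟨i, j, k, Equiv.swap 1 2 l, Equiv.swap 1 2 m, hij, hjk, hik, by simpa using hlm,
    by rwa [key], by rwa [key], by rwa [key]⟩

lemma Fin.eq_or_eq_or_eq_of_ne {i j k : Fin 3} (hij : i ≠ j) (hjk : j ≠ k) (hik : i ≠ k)
    (l : Fin 3) : l = i ∨ l = j ∨ l = k := by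
  omega

lemma Fin.exists_ne_ne {i j : Fin 3} (hij : i ≠ j) : ∃ k : Fin 3, j ≠ k ∧ i ≠ k := by
  revert i j; decide

section Cases

variable {c : ℝ} {p r : Fin 3 → ℝ}

/-- Two of the points are on the base, the third one is not on the second leg. -/
lemma hasSmaller_or_shares_of_base_of_pos (hp : ∀ i, 0 ≤ p i) (hr : ∀ i, 0 ≤ r i)
    (hpr : ∀ i, p i + r i ≤ 1) {i j k : Fin 3} (hij : i ≠ j) (hjk : j ≠ k) (hik : i ≠ k)
    (hi : p i + r i = 1) (hj : p j + r j = 1) (hk : p k + r k < 1) (hne : p i ≠ p j)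
    (hrk : 0 < r k) : HasSmaller c p r ∨ SharesSideAndAngle p r := by
  have cov := Fin.eq_or_eq_or_eq_of_ne hij hjk hik
  by_contra! ⟨hS, hN⟩
  -- the leg through `(1, 0)` is touched
  obtain ⟨l, hl⟩ : ∃ l, r l = 0 := by
    by_contra! h
    exact hS (hasSmaller_of_leg_free hp (fun i => by linarith [hpr i])
      fun i => lt_of_le_of_ne (hr i) (h i).symm).swap
  wlog hli : l = i generalizing i j l
  · have hlj : l = j := by
      rcases cov l with h | h | h
      · exact absurd h hli
      · exact h
      · rw [h] at hl; exact absurd hl hrk.ne'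
    exact this hij.symm hik hjk hj hi hne.symm
      (Fin.eq_or_eq_or_eq_of_ne hij.symm hik hjk) l hl hlj
  subst hli
  rcases (hp k).eq_or_lt with hpk | hpk
  · by_cases hpj : p j = 0
    · refine hN ⟨j, l, k, 2, 1, hij.symm, hik, hjk, by decide, ?_, ?_, ?_⟩ <;>
        simp [bary] <;> linarith
    · refine hS (hasSmaller_of_base_of_leg hrk (by linarith) fun m => ?_)
      rcases cov m with h | h | h <;> subst h
      · right; exact ⟨hl.ge, by linarith, hi⟩
      · right; exact ⟨hr m, by linarith [hp m], hj⟩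
      · left; exact ⟨hpk.symm, rfl⟩
  · obtain ⟨m, hm⟩ : ∃ m, p m = 0 := by
      by_contra! h
      exact hS (hasSmaller_of_leg_free hr hpr fun i => lt_of_le_of_ne (hp i) (h i).symm)
    have hmj : m = j := by
      rcases cov m with h | h | h
      · rw [h] at hm; linarith
      · exact h
      · rw [h] at hm; linarith
    subst hmj
    refine hS (hasSmaller_of_base_eq hpk hrk hk fun n => ?_)
    rcases cov n with h | h | h <;> subst h
    · left; exact ⟨by linarith, hl⟩
    · right; left; exact ⟨hm, by linarith⟩
    · right; right; exact ⟨rfl, rfl⟩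

/-- Two of the points are on the base. -/
lemma hasSmaller_or_shares_of_base (hp : ∀ i, 0 ≤ p i) (hr : ∀ i, 0 ≤ r i)
    (hpr : ∀ i, p i + r i ≤ 1) {i j k : Fin 3} (hij : i ≠ j) (hjk : j ≠ k) (hik : i ≠ k)
    (hi : p i + r i = 1) (hj : p j + r j = 1) (hk : p k + r k < 1) (hne : p i ≠ p j) :
    HasSmaller c p r ∨ SharesSideAndAngle p r := by
  have cov := Fin.eq_or_eq_or_eq_of_ne hij hjk hik
  rcases (hr k).eq_or_lt with hrk | hrk
  · rcases (hp k).eq_or_lt with hpk | hpk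
    · by_cases h : ∃ l, (l = i ∨ l = j) ∧ (p l = 0 ∨ r l = 0)
      · right
        wlog hl : ∃ l, l = i ∧ (p l = 0 ∨ r l = 0) generalizing i j
        · obtain ⟨l, hl1, hl2⟩ := h
          refine this hij.symm hik hjk hj hi hne.symm
            (Fin.eq_or_eq_or_eq_of_ne hij.symm hik hjk) ⟨l, hl1.symm, hl2⟩ ⟨l, ?_, hl2⟩
          rcases hl1 with h | h
          · exact absurd ⟨l, h, hl2⟩ hl
          · exact h
        obtain ⟨l, rfl, hl | hl⟩ := hl
        · refine ⟨l, k, j, 2, 0, hik, hjk.symm, hij, by decide, ?_, ?_, ?_⟩ <;>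
            simp [bary] <;> linarith
        · refine ⟨l, k, j, 1, 0, hik, hjk.symm, hij, by decide, ?_, ?_, ?_⟩ <;>
            simp [bary] <;> linarith
      · push Not at h
        left
        refine hasSmaller_of_apex_of_base fun m => ?_
        have pos : ∀ m, (m = i ∨ m = j) → 0 < p m ∧ 0 < r m := fun m hm =>
          ⟨lt_of_le_of_ne (hp m) (h m hm).1.symm, lt_of_le_of_ne (hr m) (h m hm).2.symm⟩
        rcases cov m with h | h | h
        · right; exact ⟨(pos m (Or.inl h)).1, (pos m (Or.inl h)).2, by rw [h]; exact hi⟩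
        · right; exact ⟨(pos m (Or.inr h)).1, (pos m (Or.inr h)).2, by rw [h]; exact hj⟩
        · left; rw [h]; exact ⟨hpk.symm, hrk.symm⟩
    · refine (hasSmaller_or_shares_of_base_of_pos (c := c) hr hp (fun i => by linarith [hpr i])
        hij hjk hik (by linarith) (by linarith) (by linarith) (fun h => hne (by linarith))
        hpk).imp HasSmaller.swap SharesSideAndAngle.swap
  · exact hasSmaller_or_shares_of_base_of_pos hp hr hpr hij hjk hik hi hj hk hne hrk

/-- Two of the points are on a leg. -/
lemma hasSmaller_or_shares_of_leg (hc : c ^ 2 < 1) (hp : ∀ i, 0 ≤ p i) (hr : ∀ i, 0 ≤ r i)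
    (hpr : ∀ i, p i + r i ≤ 1) {i j k : Fin 3} (hij : i ≠ j) (hjk : j ≠ k) (hik : i ≠ k)
    (hi : r i = 0) (hj : r j = 0) (hk : 0 < r k) (hne : p i ≠ p j) :
    HasSmaller c p r ∨ SharesSideAndAngle p r := by
  wlog hlt : p i < p j generalizing i j
  · exact this hij.symm hik hjk hj hi hne.symm (lt_of_le_of_ne (not_lt.1 hlt) hne.symm)
  have cov := Fin.eq_or_eq_or_eq_of_ne hij hjk hik
  by_contra! ⟨hS, hN⟩
  obtain ⟨l, hl⟩ : ∃ l, p l = 0 := by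
    by_contra! h
    exact hS (hasSmaller_of_leg_free hr hpr fun i => lt_of_le_of_ne (hp i) (h i).symm)
  obtain ⟨m, hm⟩ : ∃ m, p m + r m = 1 := by
    by_contra! h
    exact hS (hasSmaller_of_base_free hp hr fun i => lt_of_le_of_ne (hpr i) (h i))
  have hl' : p i = 0 ∨ p k = 0 := by
    rcases cov l with h | h | h <;> subst h
    · exact Or.inl hl
    · linarith [hp i]
    · exact Or.inr hl
  have hm' : p j = 1 ∨ p k + r k = 1 := by
    rcases cov m with h | h | h <;> subst h
    · linarith [hpr j]
    · left; linarith
    · exact Or.inr hm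
  have hpj : p j ≤ 1 := by linarith [hpr j]
  have hpi := hp i
  have hpk := hp k
  have hprk := hpr k
  by_cases hi0 : p i = 0
  · by_cases hj1 : p j = 1
    · by_cases hk0 : p k = 0
      · refine hN ⟨i, j, k, 0, 1, hij, hjk, hik, by decide, ?_, ?_, ?_⟩ <;>
          simp [bary] <;> linarith
      by_cases hk1 : p k + r k = 1
      · refine hN ⟨j, i, k, 1, 0, hij.symm, hik, hjk, by decide, ?_, ?_, ?_⟩ <;>
          simp [bary] <;> linarith
      refine hS (hasSmaller_of_leg_eq hc (lt_of_le_of_ne hpk (Ne.symm hk0)) hk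
        (lt_of_le_of_ne hprk hk1) fun n => ?_)
      rcases cov n with h | h | h <;> subst h
      exacts [Or.inl ⟨hi0, hi⟩, Or.inr (Or.inl ⟨hj1, hj⟩), Or.inr (Or.inr ⟨rfl, rfl⟩)]
    · have hk1 := hm'.resolve_left hj1
      by_cases hk0 : p k = 0
      · refine hN ⟨i, k, j, 0, 2, hik, hjk.symm, hij, by decide, ?_, ?_, ?_⟩ <;>
          simp [bary] <;> linarith
      refine hS (hasSmaller_of_apex_of_leg_of_base hc (lt_of_le_of_ne hpk (Ne.symm hk0))
        (by linarith) (by linarith) (lt_of_le_of_ne hpj hj1) fun n => ?_)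
      rcases cov n with h | h | h <;> subst h
      exacts [Or.inl ⟨hi0, hi⟩, Or.inr (Or.inl ⟨rfl, hj⟩), Or.inr (Or.inr ⟨rfl, by linarith⟩)]
  · have hk0 := hl'.resolve_left hi0
    have hi1 : 0 < p i := lt_of_le_of_ne hpi (Ne.symm hi0)
    by_cases hk1 : r k = 1
    · by_cases hj1 : p j = 1
      · refine hN ⟨j, k, i, 1, 2, hjk, hik.symm, hij.symm, by decide, ?_, ?_, ?_⟩ <;>
          simp [bary] <;> linarith
      refine hS (hasSmaller_of_base_vertex_of_leg hc hi1 (i₀ := i) rfl fun n => ?_)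
      rcases cov n with h | h | h <;> subst h
      exacts [Or.inr ⟨hi, le_rfl, by linarith⟩, Or.inr ⟨hj, hlt.le, lt_of_le_of_ne hpj hj1⟩,
        Or.inl ⟨hk0, hk1⟩]
    · rcases le_or_gt (2 * r k) c with hck | hck
      · refine hS (hasSmaller_of_two_mul_le hc hk hck fun n => ?_)
        rcases cov n with h | h | h <;> subst h
        exacts [Or.inl ⟨hi, hpi, by linarith⟩, Or.inl ⟨hj, by linarith, hpj⟩,
          Or.inr ⟨hk0, rfl⟩]
      · refine hS (hasSmaller_of_lt_two_mul hc hi1 hk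
          (lt_of_le_of_ne (by linarith) hk1) hck fun n => ?_)
        rcases cov n with h | h | h <;> subst h
        exacts [Or.inl ⟨hi, le_rfl, by linarith⟩, Or.inl ⟨hj, hlt.le, hpj⟩, Or.inr ⟨hk0, rfl⟩]

/-- Any three non-collinear points in an isosceles triangle are in a smaller isosceles triangle,
or share a side and an angle with the given one. -/
theorem hasSmaller_or_shares (hc : c ^ 2 < 1) (hp : ∀ i, 0 ≤ p i) (hr : ∀ i, 0 ≤ r i)
    (hpr : ∀ i, p i + r i ≤ 1)
    (hdet : ∀ i j k, i ≠ j → j ≠ k → i ≠ k →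
      (p j - p i) * (r k - r i) - (p k - p i) * (r j - r i) ≠ 0) :
    HasSmaller c p r ∨ SharesSideAndAngle p r := by
  by_cases hb : ∃ i j, i ≠ j ∧ p i + r i = 1 ∧ p j + r j = 1
  · obtain ⟨i, j, hij, hi, hj⟩ := hb
    obtain ⟨k, hjk, hik⟩ := Fin.exists_ne_ne hij
    have hd := hdet i j k hij hjk hik
    refine hasSmaller_or_shares_of_base hp hr hpr hij hjk hik hi hj
      (lt_of_le_of_ne (hpr k) fun h => hd ?_) fun h => hd ?_
    · rw [show r i = 1 - p i by linarith, show r j = 1 - p j by linarith,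
        show r k = 1 - p k by linarith]
      ring
    · rw [show r i = 1 - p i by linarith, show r j = 1 - p j by linarith, h]
      ring
  by_cases hb2 : ∃ i j, i ≠ j ∧ r i = 0 ∧ r j = 0
  · obtain ⟨i, j, hij, hi, hj⟩ := hb2
    obtain ⟨k, hjk, hik⟩ := Fin.exists_ne_ne hij
    have hd := hdet i j k hij hjk hik
    refine hasSmaller_or_shares_of_leg hc hp hr hpr hij hjk hik hi hj
      (lt_of_le_of_ne (hr k) fun h => hd ?_) fun h => hd ?_
    · rw [hi, hj, ← h]; ring
    · rw [hi, hj, h]; ring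
  by_cases hb3 : ∃ i j, i ≠ j ∧ p i = 0 ∧ p j = 0
  · obtain ⟨i, j, hij, hi, hj⟩ := hb3
    obtain ⟨k, hjk, hik⟩ := Fin.exists_ne_ne hij
    have hd := hdet i j k hij hjk hik
    refine (hasSmaller_or_shares_of_leg hc hr hp (fun i => by linarith [hpr i]) hij hjk hik hi hj
      (lt_of_le_of_ne (hp k) fun h => hd ?_) fun h => hd ?_).imp
      HasSmaller.swap SharesSideAndAngle.swap
    · rw [hi, hj, ← h]; ring
    · rw [hi, hj, h]; ring
  left
  by_contra hS
  obtain ⟨k, hk⟩ : ∃ l, p l = 0 := by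
    by_contra! h
    exact hS (hasSmaller_of_leg_free hr hpr fun i => lt_of_le_of_ne (hp i) (h i).symm)
  obtain ⟨j, hj⟩ : ∃ l, r l = 0 := by
    by_contra! h
    exact hS (hasSmaller_of_leg_free hp (fun i => by linarith [hpr i])
      fun i => lt_of_le_of_ne (hr i) (h i).symm).swap
  obtain ⟨i, hi⟩ : ∃ m, p m + r m = 1 := by
    by_contra! h
    exact hS (hasSmaller_of_base_free hp hr fun i => lt_of_le_of_ne (hpr i) (h i))
  refine hS (hasSmaller_of_no_flush hc hp hr hpr hi hj hk (fun l hl => ?_) (fun l hl => ?_)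
    fun l hl => ?_)
  · by_contra h; exact hb ⟨l, i, h, hl, hi⟩
  · by_contra h; exact hb2 ⟨l, j, h, hl, hj⟩
  · by_contra h; exact hb3 ⟨l, k, h, hl, hk⟩

end Cases

end ObliqueCoordinates

section Bridge

variable {A B C S P R X : Pt}

theorem mem_tri_iff :
    X ∈ tri S P R ↔ ∃ α β : ℝ, 0 ≤ α ∧ 0 ≤ β ∧ α + β ≤ 1 ∧
      X = S + α • (P - S) + β • (R - S) := by
  constructor
  · have hs : Convex ℝ {X | ∃ α β : ℝ, 0 ≤ α ∧ 0 ≤ β ∧ α + β ≤ 1 ∧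
        X = S + α • (P - S) + β • (R - S)} := by
      rintro _ ⟨α, β, hα, hβ, h, rfl⟩ _ ⟨α', β', hα', hβ', h', rfl⟩ a b ha hb hab
      refine ⟨a * α + b * α', a * β + b * β', by positivity, by positivity, by nlinarith, ?_⟩
      obtain rfl : b = 1 - a := by linarith
      module
    refine fun h ↦ convexHull_min ?_ hs h
    rintro Y (rfl | rfl | rfl)
    · exact ⟨0, 0, by simp⟩
    · exact ⟨1, 0, by simp⟩
    · exact ⟨0, 1, by simp⟩
  · rintro ⟨α, β, hα, hβ, h, rfl⟩
    have hS : S ∈ tri S P R := subset_convexHull _ _ (by simp)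
    have hP : P ∈ tri S P R := subset_convexHull _ _ (by simp)
    have hR : R ∈ tri S P R := subset_convexHull _ _ (by simp)
    have hsum : S + α • (P - S) + β • (R - S) =
        ∑ i, (![1 - α - β, α, β] : Fin 3 → ℝ) i • (![S, P, R] : Fin 3 → Pt) i := by
      simp [Fin.sum_univ_three]
      module
    rw [hsum]
    refine (convex_convexHull ℝ ({S, P, R} : Set Pt)).sum_mem ?_ ?_ ?_
    · intro i _
      fin_cases i <;> simp <;> linarith
    · simp [Fin.sum_univ_three]
      ring
    · intro i _
      fin_cases i <;> assumption

/-- The determinant of two vectors of the plane. -/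
def planeDet (u v : Pt) : ℝ := u 0 * v 1 - v 0 * u 1

theorem collinear_iff_planeDet_eq_zero :
    Collinear ℝ {S, P, R} ↔ planeDet (P - S) (R - S) = 0 := by
  rw [collinear_iff_of_mem (p₀ := S) (by simp)]
  constructor
  · rintro ⟨w, hw⟩
    obtain ⟨a, ha⟩ := hw P (by simp)
    obtain ⟨b, hb⟩ := hw R (by simp)
    simp [ha, hb, planeDet]
    ring
  · intro h
    by_cases h0 : P - S = 0
    · refine ⟨R - S, ?_⟩
      rintro Y (rfl | rfl | rfl)
      · exact ⟨0, by simp⟩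
      · exact ⟨0, by simpa [sub_eq_zero] using h0⟩
      · exact ⟨1, by simp⟩
    · suffices ∃ t : ℝ, R - S = t • (P - S) by
        obtain ⟨t, ht⟩ := this
        refine ⟨P - S, ?_⟩
        rintro Y (rfl | rfl | rfl)
        · exact ⟨0, by simp⟩
        · exact ⟨1, by simp⟩
        · exact ⟨t, by simp [← ht]⟩
      generalize P - S = u at *
      generalize R - S = v at *
      unfold planeDet at h
      by_cases hu : u 0 = 0
      · have hu1 : u 1 ≠ 0 := by
          intro hu1
          apply h0
          ext i
          fin_cases i <;> simpa
        refine ⟨v 1 / u 1, ?_⟩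
        have : v 0 = 0 := by
          have : v 0 * u 1 = 0 := by rw [hu] at h; linarith
          simpa [hu1] using this
        ext i
        fin_cases i <;> simp [hu, hu1, this]
      · refine ⟨v 0 / u 0, ?_⟩
        ext i
        fin_cases i
        · simp [hu]
        · simp
          field_simp
          linarith

theorem affineIndependent_iff_planeDet_ne_zero :
    AffineIndependent ℝ ![S, P, R] ↔ planeDet (P - S) (R - S) ≠ 0 := by
  rw [affineIndependent_iff_not_collinear_set, collinear_iff_planeDet_eq_zero]

theorem triArea_eq (S P R : Pt) :
    triArea S P R = |planeDet (P - S) (R - S)| * triArea 0 !₂[1, 0] !₂[0, 1] := by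
  set f : Pt →ₗ[ℝ] Pt :=
    Matrix.toLpLin 2 2 !![(P - S) 0, (R - S) 0; (P - S) 1, (R - S) 1] with hf
  have hdet : LinearMap.det f = planeDet (P - S) (R - S) := by
    rw [hf, Matrix.toLpLin_eq_toLin, LinearMap.det_toLin, Matrix.det_fin_two_of, planeDet]
  have hP : f !₂[1, 0] = P - S := by
    ext i
    fin_cases i <;> simp [hf, Matrix.toLpLin_apply]
  have hR : f !₂[0, 1] = R - S := by
    ext i
    fin_cases i <;> simp [hf, Matrix.toLpLin_apply]
  have himage : tri S P R = (fun X ↦ S + X) '' (f '' tri 0 !₂[1, 0] !₂[0, 1]) := by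
    ext X
    simp only [Set.mem_image, exists_exists_and_eq_and, mem_tri_iff]
    constructor
    · rintro ⟨α, β, h₁, h₂, h₃, rfl⟩
      exact ⟨_, ⟨α, β, h₁, h₂, h₃, rfl⟩, by
        simp only [zero_add, sub_zero, map_add, map_smul, hP, hR]; abel⟩
    · rintro ⟨_, ⟨α, β, h₁, h₂, h₃, rfl⟩, rfl⟩
      exact ⟨α, β, h₁, h₂, h₃, by
        simp only [zero_add, sub_zero, map_add, map_smul, hP, hR]; abel⟩
  rw [triArea, triArea, himage, Set.image_add_left,
    measure_preimage_add, Measure.addHaar_image_linearMap, hdet, ENNReal.toReal_mul,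
    ENNReal.toReal_ofReal (abs_nonneg _)]

theorem triArea_standard_pos : 0 < triArea 0 !₂[1, 0] !₂[0, 1] := by
  refine ENNReal.toReal_pos ?_ ?_
  · have hopen : IsOpen {X : Pt | 0 < X 0 ∧ 0 < X 1 ∧ X 0 + X 1 < 1} := by
      have h₀ : Continuous fun X : Pt ↦ X 0 := by fun_prop
      have h₁ : Continuous fun X : Pt ↦ X 1 := by fun_prop
      exact (isOpen_lt continuous_const h₀).inter
        ((isOpen_lt continuous_const h₁).inter (isOpen_lt (h₀.add h₁) continuous_const))
    refine ((hopen.measure_pos volume ⟨!₂[1 / 4, 1 / 4], ?_⟩).trans_le (measure_mono ?_)).ne'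
    · norm_num
    · rintro X ⟨h₀, h₁, h⟩
      refine mem_tri_iff.2 ⟨X 0, X 1, h₀.le, h₁.le, h.le, ?_⟩
      ext i
      fin_cases i <;> simp
  · exact (Set.Finite.isCompact_convexHull ℝ (Set.toFinite _)).measure_lt_top.ne

theorem sq_dist_eq (X Y : Pt) : dist X Y ^ 2 = (Y - X) 0 ^ 2 + (Y - X) 1 ^ 2 := by
  rw [dist_comm, EuclideanSpace.dist_eq, Real.sq_sqrt (by positivity), Fin.sum_univ_two,
    Real.dist_eq, Real.dist_eq, sq_abs, sq_abs, PiLp.sub_apply, PiLp.sub_apply]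

theorem inner_eq (u v : Pt) : inner ℝ u v = u 0 * v 0 + u 1 * v 1 := by
  rw [PiLp.inner_apply, Fin.sum_univ_two]
  simp
  ring

theorem eq_bary_smul (S P R : Pt) (x y : ℝ) {l m n : Fin 3} (hlm : l ≠ m) (hmn : m ≠ n)
    (hln : l ≠ n) :
    S + x • (P - S) + y • (R - S) = ![S, P, R] l + bary x y m • (![S, P, R] m - ![S, P, R] l) +
      bary x y n • (![S, P, R] n - ![S, P, R] l) := by
  fin_cases l <;> fin_cases m <;> fin_cases n <;> simp [bary] at hlm hmn hln ⊢ <;> module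

theorem bary_add_add (x y : ℝ) {l m n : Fin 3} (hlm : l ≠ m) (hmn : m ≠ n) (hln : l ≠ n) :
    bary x y l + bary x y m + bary x y n = 1 := by
  fin_cases l <;> fin_cases m <;> fin_cases n <;> simp [bary] at hlm hmn hln ⊢ <;> ring

theorem bary_nonneg {x y : ℝ} (hx : 0 ≤ x) (hy : 0 ≤ y) (hxy : x + y ≤ 1) (l : Fin 3) :
    0 ≤ bary x y l := by
  fin_cases l <;> simp [bary] <;> linarith

/-- A point with a barycentric coordinate equal to `1` is a vertex. -/
theorem eq_vertex_of_bary_eq_one {x y : ℝ} (hx : 0 ≤ x) (hy : 0 ≤ y) (hxy : x + y ≤ 1) {l : Fin 3}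
    (hl : bary x y l = 1) : S + x • (P - S) + y • (R - S) = ![S, P, R] l := by
  obtain ⟨m, hlm⟩ : ∃ m, l ≠ m := ⟨l + 1, by simp⟩
  obtain ⟨n, hmn, hln⟩ := Fin.exists_ne_ne hlm
  have hsum := bary_add_add x y hlm hmn hln
  have hm := bary_nonneg hx hy hxy m
  have hn := bary_nonneg hx hy hxy n
  rw [eq_bary_smul S P R x y hlm hmn hln, show bary x y m = 0 by linarith,
    show bary x y n = 0 by linarith]
  simp

theorem vertexAngle_eq (h : Function.Injective ![A, B, C]) {i j k : Fin 3} (hij : i ≠ j)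
    (hjk : j ≠ k) (hik : i ≠ k) :
    vertexAngle (![A, B, C] i) A B C = ∠ (![A, B, C] j) (![A, B, C] i) (![A, B, C] k) := by
  have hBA : B ≠ A := h.ne (a₁ := 1) (a₂ := 0) (by decide)
  have hCA : C ≠ A := h.ne (a₁ := 2) (a₂ := 0) (by decide)
  have hCB : C ≠ B := h.ne (a₁ := 2) (a₂ := 1) (by decide)
  fin_cases i <;> fin_cases j <;> fin_cases k <;>
    simp [vertexAngle, hBA, hCA, hCB, EuclideanGeometry.angle_comm] at hij hjk hik ⊢

theorem vertexAngle_rotate (h : Function.Injective ![S, P, R]) (hX : X ∈ ({S, P, R} : Set Pt)) :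
    vertexAngle X P R S = vertexAngle X S P R := by
  have hPS : P ≠ S := h.ne (a₁ := 1) (a₂ := 0) (by decide)
  have hRS : R ≠ S := h.ne (a₁ := 2) (a₂ := 0) (by decide)
  have hRP : R ≠ P := h.ne (a₁ := 2) (a₂ := 1) (by decide)
  obtain rfl | rfl | rfl := hX <;>
    simp [vertexAngle, hPS, hRS, hRP, hPS.symm, hRS.symm, EuclideanGeometry.angle_comm]

theorem insert_rotate (S P R : Pt) : ({P, R, S} : Set Pt) = {S, P, R} := by
  rw [Set.pair_comm R S, Set.insert_comm]

theorem tri_rotate (S P R : Pt) : tri P R S = tri S P R := by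
  rw [tri, tri, insert_rotate]

theorem IsMinIsoscelesContainer.rotate (h : IsMinIsoscelesContainer A B C S P R) :
    IsMinIsoscelesContainer A B C P R S := by
  obtain ⟨⟨h₁, h₂, h₃⟩, h₄⟩ := h
  refine ⟨⟨?_, ?_, ?_⟩, ?_⟩
  · rwa [affineIndependent_iff_not_collinear_set, insert_rotate,
      ← affineIndependent_iff_not_collinear_set]
  · unfold IsIsosceles at *
    tauto
  · rwa [tri_rotate S P R]
  · rwa [triArea, tri_rotate, ← triArea]

theorem not_hasSmaller {c : ℝ} {p r : Fin 3 → ℝ} (hmin : IsMinIsoscelesContainer A B C S P R)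
    (hdist : dist S P = dist S R)
    (hc : inner ℝ (P - S) (R - S) = c * dist S P ^ 2)
    (hpr : ∀ i, ![A, B, C] i = S + p i • (P - S) + r i • (R - S)) : ¬ HasSmaller c p r := by
  rintro ⟨s₁, s₂, e₁, e₂, f₁, f₂, hpos, hlt, hiso, hmem⟩
  obtain ⟨⟨hind, -, -⟩, hle⟩ := hmin
  rw [affineIndependent_iff_planeDet_ne_zero] at hind
  set u := P - S
  set v := R - S
  have hcoord : ∀ e f : ℝ, ∀ Y : Pt, dist Y (Y + e • u + f • v) ^ 2 =
      dist S P ^ 2 * (e ^ 2 + f ^ 2 + 2 * c * e * f) := by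
    intro e f Y
    have hL : dist S P ^ 2 = u 0 ^ 2 + u 1 ^ 2 := sq_dist_eq S P
    have hL' : dist S P ^ 2 = v 0 ^ 2 + v 1 ^ 2 := hdist ▸ sq_dist_eq S R
    have hin : u 0 * v 0 + u 1 * v 1 = c * dist S P ^ 2 := (inner_eq u v).symm.trans hc
    rw [sq_dist_eq]
    simp
    linear_combination (-e ^ 2) * hL - f ^ 2 * hL' + 2 * e * f * hin
  set S' := S + s₁ • u + s₂ • v
  set P' := S' + e₁ • u + e₂ • v with hP'
  set R' := S' + f₁ • u + f₂ • v with hR'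
  have hdet : planeDet (P' - S') (R' - S') = (e₁ * f₂ - f₁ * e₂) * planeDet u v := by
    simp [planeDet, hP', hR']
    ring
  have hcont : IsIsoscelesContainer A B C S' P' R' := by
    refine ⟨?_, Or.inr (Or.inl ?_), convexHull_min ?_ (convex_convexHull _ _)⟩
    · rw [affineIndependent_iff_planeDet_ne_zero, hdet]
      exact mul_ne_zero hpos.ne' hind
    · rw [dist_comm, ← sq_eq_sq₀ dist_nonneg dist_nonneg, hcoord, hcoord, hiso]
    · have : ∀ i, ![A, B, C] i ∈ tri S' P' R' := by
        intro i
        obtain ⟨α, β, hα, hβ, hαβ, hp, hr⟩ := hmem i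
        refine mem_tri_iff.2 ⟨α, β, hα, hβ, hαβ, ?_⟩
        rw [hpr, hp, hr]
        simp only [hP', hR', S']
        module
      rintro Y (rfl | rfl | rfl)
      exacts [this 0, this 1, this 2]
  have := hle S' P' R' hcont
  rw [triArea_eq S P R, triArea_eq S' P' R', hdet, abs_mul, abs_of_pos hpos] at this
  have hpos' := mul_pos (abs_pos.2 hind) triArea_standard_pos
  nlinarith

theorem exists_common_side_of_dist_eq (hABC : AffineIndependent ℝ ![A, B, C])
    (hmin : IsMinIsoscelesContainer A B C S P R) (hdist : dist S P = dist S R) :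
    ∃ X Y : Pt, X ≠ Y ∧
      X ∈ ({A, B, C} : Set Pt) ∧ Y ∈ ({A, B, C} : Set Pt) ∧
      X ∈ ({S, P, R} : Set Pt) ∧ Y ∈ ({S, P, R} : Set Pt) ∧
      vertexAngle X A B C = vertexAngle X S P R := by
  have hmem : ∀ {A B C : Pt} (i : Fin 3), ![A, B, C] i ∈ ({A, B, C} : Set Pt) := by
    intro A B C i
    fin_cases i <;> simp
  have hq : ∀ i, ∃ x y : ℝ, 0 ≤ x ∧ 0 ≤ y ∧ x + y ≤ 1 ∧
      ![A, B, C] i = S + x • (P - S) + y • (R - S) := fun i ↦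
    mem_tri_iff.1 (hmin.1.2.2 (subset_convexHull ℝ _ (hmem i)))
  choose p r hp hr hpr hq using hq
  have hind := affineIndependent_iff_planeDet_ne_zero.1 hmin.1.1
  have hS : 0 < dist S P := dist_pos.2 (hmin.1.1.injective.ne (a₁ := 0) (a₂ := 1) (by decide))
  set c := inner ℝ (P - S) (R - S) / dist S P ^ 2 with hc
  have hc' : inner ℝ (P - S) (R - S) = c * dist S P ^ 2 := by
    rw [hc, div_mul_cancel₀ _ (by positivity)]
  have hc1 : c ^ 2 < 1 := by
    have hsq : (c * dist S P ^ 2) ^ 2 + planeDet (P - S) (R - S) ^ 2 =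
        dist S P ^ 2 * dist S R ^ 2 := by
      rw [← hc', inner_eq, planeDet, sq_dist_eq, sq_dist_eq]
      ring
    rw [← hdist] at hsq
    have h1 : 0 < planeDet (P - S) (R - S) ^ 2 := by positivity
    have h2 : 0 < (dist S P ^ 2) ^ 2 := by positivity
    by_contra! hcon
    nlinarith
  have hdet : ∀ i j k : Fin 3, i ≠ j → j ≠ k → i ≠ k →
      (p j - p i) * (r k - r i) - (p k - p i) * (r j - r i) ≠ 0 := by
    intro i j k hij hjk hik h0
    have h1 : planeDet (![A, B, C] j - ![A, B, C] i) (![A, B, C] k - ![A, B, C] i) = 0 := by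
      rw [hq i, hq j, hq k]
      trans ((p j - p i) * (r k - r i) - (p k - p i) * (r j - r i)) * planeDet (P - S) (R - S)
      · simp [planeDet]
        ring
      · rw [h0, zero_mul]
    rw [← collinear_iff_planeDet_eq_zero] at h1
    exact (affineIndependent_iff_not_collinear_of_ne hij hik hjk).1 hABC h1
  obtain ⟨i, j, k, l, m, hij, hjk, hik, hlm, hil, hjm, hkm⟩ :=
    (hasSmaller_or_shares hc1 hp hr hpr hdet).resolve_left (not_hasSmaller hmin hdist hc' hq)
  obtain ⟨n, hmn, hln⟩ := Fin.exists_ne_ne hlm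
  have hi : ![A, B, C] i = ![S, P, R] l :=
    (hq i).trans (eq_vertex_of_bary_eq_one (hp i) (hr i) (hpr i) hil)
  have hj : ![A, B, C] j = ![S, P, R] m :=
    (hq j).trans (eq_vertex_of_bary_eq_one (hp j) (hr j) (hpr j) hjm)
  have hk : ![A, B, C] k - ![S, P, R] l =
      bary (p k) (r k) n • (![S, P, R] n - ![S, P, R] l) := by
    rw [hq k, eq_bary_smul S P R _ _ hlm hmn hln, hkm]
    simp
  have hpos : 0 < bary (p k) (r k) n := by
    refine (bary_nonneg (hp k) (hr k) (hpr k) n).lt_of_ne' fun h0 ↦ ?_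
    rw [h0, zero_smul, sub_eq_zero, ← hi] at hk
    exact hik (hABC.injective hk).symm
  refine ⟨![A, B, C] i, ![A, B, C] j, hABC.injective.ne hij, hmem i, hmem j, hi ▸ hmem l,
    hj ▸ hmem m, ?_⟩
  rw [vertexAngle_eq hABC.injective hij hjk hik, hi, vertexAngle_eq hmin.1.1.injective hlm hmn hln,
    hj, EuclideanGeometry.angle, EuclideanGeometry.angle, vsub_eq_sub, vsub_eq_sub, vsub_eq_sub, hk,
    InnerProductGeometry.angle_smul_right_of_pos _ _ hpos]

end Bridge

/-- a minimum area isosceles container `T' = S P R` of a triangle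
`A B C` shares a side with `A B C` (two common vertices `X ≠ Y`), and the two
triangles have equal angles at one endpoint `X` of this common side. -/
theorem statement0 (A B C S P R : Pt)
    (hABC : AffineIndependent ℝ ![A, B, C])
    (hmin : IsMinIsoscelesContainer A B C S P R) :
    ∃ X Y : Pt, X ≠ Y ∧
      X ∈ ({A, B, C} : Set Pt) ∧ Y ∈ ({A, B, C} : Set Pt) ∧
      X ∈ ({S, P, R} : Set Pt) ∧ Y ∈ ({S, P, R} : Set Pt) ∧
      vertexAngle X A B C = vertexAngle X S P R := by
  have hinj := hmin.1.1.injective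
  have hinj' := hmin.rotate.1.1.injective
  rcases hmin.1.2.1 with h | h | h
  · obtain ⟨X, Y, hXY, hX, hY, hX', hY', h⟩ :=
      exists_common_side_of_dist_eq hABC hmin.rotate.rotate (by rw [h.symm, dist_comm])
    rw [insert_rotate, insert_rotate] at hX' hY'
    refine ⟨X, Y, hXY, hX, hY, hX', hY', ?_⟩
    rw [h, vertexAngle_rotate hinj' (by rwa [insert_rotate]), vertexAngle_rotate hinj hX']
  · exact exists_common_side_of_dist_eq hABC hmin (by rw [← h, dist_comm])
  · obtain ⟨X, Y, hXY, hX, hY, hX', hY', h⟩ :=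
      exists_common_side_of_dist_eq hABC hmin.rotate (by rw [← h, dist_comm])
    rw [insert_rotate] at hX' hY'
    exact ⟨X, Y, hXY, hX, hY, hX', hY', h.trans (vertexAngle_rotate hinj hX')⟩
end
end

section
/- Let ABC be a triangle with side lengths a < b < c, and let T' be a minimum area isosceles container for ABC. Then T' equals (as a convex set) one of the nine special containers associated with ABC: a special container of the first kind (AB'C, ABC', or ABC''), of the second kind (AB₁C, ABC₁, or ABC₂), or of the third kind (ĀBC, AB̄C, or ABC̄). -/
open EuclideanGeometry MeasureTheory Real

noncomputable section

namespace IsoscelesContainer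

open Filter Topology

/-- Twice the signed area of the triangle `p q r`. -/
def cr (p q r : ℝ × ℝ) : ℝ := (q.1 - p.1) * (r.2 - p.2) - (q.2 - p.2) * (r.1 - p.1)

/-- The squared Euclidean distance in coordinates. -/
def sd (p q : ℝ × ℝ) : ℝ := (p.1 - q.1) ^ 2 + (p.2 - q.2) ^ 2

/-- The coordinate form of `IsIsosceles`. -/
def Iso (p q r : ℝ × ℝ) : Prop := sd q r = sd r p ∨ sd r p = sd p q ∨ sd p q = sd q r

/-- `x` lies in the (nondegenerate) triangle `p q r`. -/
def Ins (p q r x : ℝ × ℝ) : Prop :=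
  0 ≤ cr p q r * cr p q x ∧ 0 ≤ cr p q r * cr q r x ∧ 0 ≤ cr p q r * cr r p x

/-- In coordinates, `u v w` is a minimum area isosceles container of the triangle `x y z`. -/
structure IsMin (x y z u v w : ℝ × ℝ) : Prop where
  inner_ne : cr x y z ≠ 0
  outer_ne : cr u v w ≠ 0
  iso : Iso u v w
  ins₁ : Ins u v w x
  ins₂ : Ins u v w y
  ins₃ : Ins u v w z
  le : ∀ p q r, cr p q r ≠ 0 → Iso p q r → Ins p q r x → Ins p q r y → Ins p q r z →
    |cr u v w| ≤ |cr p q r|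

lemma cr_rot (p q r : ℝ × ℝ) : cr q r p = cr p q r := by simp only [cr]; ring

lemma cr_swap (p q r : ℝ × ℝ) : cr q p r = -cr p q r := by simp only [cr]; ring

lemma sd_comm (p q : ℝ × ℝ) : sd p q = sd q p := by simp only [sd]; ring

lemma Iso.rot {p q r : ℝ × ℝ} (h : Iso p q r) : Iso q r p := by
  unfold Iso at *; tauto

lemma Iso.swap {p q r : ℝ × ℝ} (h : Iso p q r) : Iso q p r := by
  unfold Iso at *
  rw [sd_comm p r, sd_comm r q, sd_comm q p]
  rcases h with h | h | h <;> simp [h]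

lemma Ins.rot {p q r x : ℝ × ℝ} (h : Ins p q r x) : Ins q r p x := by
  unfold Ins at *
  rw [cr_rot p q r]; tauto

lemma Ins.swap {p q r x : ℝ × ℝ} (h : Ins p q r x) : Ins q p r x := by
  unfold Ins at *
  rw [cr_swap p q r, cr_swap p q x, cr_swap r p x, cr_swap q r x]
  simp only [neg_mul_neg]; tauto

namespace IsMin

variable {x y z u v w : ℝ × ℝ}

lemma rotInner (h : IsMin x y z u v w) : IsMin y z x u v w :=
  ⟨by rw [cr_rot]; exact h.inner_ne, h.outer_ne, h.iso, h.ins₂, h.ins₃, h.ins₁,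
    fun p q r h0 hi hy hz hx => h.le p q r h0 hi hx hy hz⟩

lemma swapInner (h : IsMin x y z u v w) : IsMin y x z u v w :=
  ⟨by rw [cr_swap, neg_ne_zero]; exact h.inner_ne, h.outer_ne, h.iso, h.ins₂, h.ins₁, h.ins₃,
    fun p q r h0 hi hy hx hz => h.le p q r h0 hi hx hy hz⟩

lemma rotOuter (h : IsMin x y z u v w) : IsMin x y z v w u :=
  ⟨h.inner_ne, by rw [cr_rot]; exact h.outer_ne, h.iso.rot, h.ins₁.rot, h.ins₂.rot, h.ins₃.rot,
    by rw [cr_rot]; exact h.le⟩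

lemma swapOuter (h : IsMin x y z u v w) : IsMin x y z v u w :=
  ⟨h.inner_ne, by rw [cr_swap, neg_ne_zero]; exact h.outer_ne, h.iso.swap, h.ins₁.swap,
    h.ins₂.swap, h.ins₃.swap, by rw [cr_swap, abs_neg]; exact h.le⟩

/-- Minimality is invariant under a similarity `f` with inverse `g`. -/
lemma map (h : IsMin x y z u v w) {f g : ℝ × ℝ → ℝ × ℝ} (hfg : ∀ p, f (g p) = p) {k l : ℝ}
    (hk : k ≠ 0) (hl : l ≠ 0) (hcr : ∀ p q r, cr (f p) (f q) (f r) = k * cr p q r)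
    (hsd : ∀ p q, sd (f p) (f q) = l * sd p q) :
    IsMin (f x) (f y) (f z) (f u) (f v) (f w) := by
  have hiso : ∀ p q r, Iso (f p) (f q) (f r) ↔ Iso p q r := by
    intro p q r
    simp only [Iso, hsd, mul_right_inj' hl]
  have hins : ∀ p q r s, Ins (f p) (f q) (f r) (f s) ↔ Ins p q r s := by
    intro p q r s
    have hk2 : 0 < k ^ 2 := by positivity
    have e : ∀ a b, 0 ≤ k * a * (k * b) ↔ 0 ≤ a * b := by
      intro a b
      rw [show k * a * (k * b) = k ^ 2 * (a * b) by ring]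
      exact mul_nonneg_iff_of_pos_left hk2
    simp only [Ins, hcr, e]
  refine ⟨?_, ?_, (hiso _ _ _).2 h.iso, (hins _ _ _ _).2 h.ins₁, (hins _ _ _ _).2 h.ins₂,
    (hins _ _ _ _).2 h.ins₃, ?_⟩
  · rw [hcr]; exact mul_ne_zero hk h.inner_ne
  · rw [hcr]; exact mul_ne_zero hk h.outer_ne
  · intro p q r h0 hi h1 h2 h3
    rw [← hfg p, ← hfg q, ← hfg r] at h0 hi h1 h2 h3 ⊢
    rw [hiso] at hi
    rw [hins] at h1 h2 h3
    rw [hcr] at h0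
    rw [hcr, hcr, abs_mul, abs_mul]
    exact mul_le_mul_of_nonneg_left (h.le _ _ _ (right_ne_zero_of_mul h0) hi h1 h2 h3)
      (abs_nonneg k)

/-- Up to similarity, one side of the container joins `(0, 0)` to `(1, 0)` and the third vertex
lies in the upper half-plane. -/
lemma normalize (h : IsMin x y z u v w) : ∃ f : ℝ × ℝ → ℝ × ℝ, ∃ k : ℝ, k ≠ 0 ∧
    (∀ p q r, cr (f p) (f q) (f r) = k * cr p q r) ∧ 0 < (f w).2 ∧
    f u = (0, 0) ∧ f v = (1, 0) ∧
    IsMin (f x) (f y) (f z) (0, 0) (1, 0) (f w) := by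
  have hD := h.outer_ne
  obtain ⟨d, hd⟩ : ∃ d : ℝ × ℝ, d = (v.1 - u.1, v.2 - u.2) := ⟨_, rfl⟩
  have hd1 : v.1 - u.1 = d.1 := by rw [hd]
  have hd2 : v.2 - u.2 = d.2 := by rw [hd]
  have hn : 0 < d.1 ^ 2 + d.2 ^ 2 := by
    by_contra hc
    have h1 : d.1 = 0 := by nlinarith [sq_nonneg d.1, sq_nonneg d.2]
    have h2 : d.2 = 0 := by nlinarith [sq_nonneg d.1, sq_nonneg d.2]
    apply hD
    simp only [cr, hd1, hd2, h1, h2]; ring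
  obtain ⟨s, hs, hsD⟩ : ∃ s : ℝ, s ^ 2 = 1 ∧ 0 < s * cr u v w := by
    rcases lt_or_gt_of_ne hD with h' | h'
    · exact ⟨-1, by norm_num, by linarith⟩
    · exact ⟨1, by norm_num, by linarith⟩
  have hs0 : s ≠ 0 := by rintro rfl; norm_num at hs
  set n := d.1 ^ 2 + d.2 ^ 2 with hndef
  let f : ℝ × ℝ → ℝ × ℝ := fun p =>
    ((d.1 * (p.1 - u.1) + d.2 * (p.2 - u.2)) / n, s * (d.1 * (p.2 - u.2) - d.2 * (p.1 - u.1)) / n)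
  let g : ℝ × ℝ → ℝ × ℝ := fun p =>
    (u.1 + d.1 * p.1 - s * d.2 * p.2, u.2 + d.2 * p.1 + s * d.1 * p.2)
  have hfg : ∀ p, f (g p) = p := by
    intro p
    simp only [f, g]
    ext
    · simp only; field_simp; rw [hndef]; ring
    · simp only; field_simp; rw [hndef]; linear_combination (d.1^2+d.2^2) * p.2 * hs
  have hcr : ∀ p q r, cr (f p) (f q) (f r) = s / n * cr p q r := by
    intro p q r
    simp only [f, cr]; field_simp; rw [hndef]; ring
  have hsd : ∀ p q, sd (f p) (f q) = 1 / n * sd p q := by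
    intro p q
    simp only [f, sd]; field_simp; rw [hndef]
    linear_combination (d.1 * (p.2 - q.2) - d.2 * (p.1 - q.1)) ^ 2 * hs
  have hfu : f u = (0, 0) := by simp [f]
  have hfv : f v = (1, 0) := by
    simp only [f, hd1, hd2]
    ext
    · simp only; field_simp; rw [hndef]
    · simp only; ring
  refine ⟨f, s / n, by positivity, hcr, ?_, hfu, hfv, ?_⟩
  · have : (f w).2 = s * cr u v w / n := by simp only [f, cr, hd1, hd2]
    rw [this]; positivity
  · have := h.map hfg (by positivity) (by positivity) hcr hsd
    rwa [hfu, hfv] at this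

/-- A smaller isosceles container contradicts minimality. -/
lemma false_of_smaller (h : IsMin x y z (0, 0) (1, 0) w) {p q r : ℝ × ℝ} (hw : 0 < w.2)
    (h0 : 0 < cr p q r) (hlt : cr p q r < w.2) (hiso : Iso p q r)
    (hx : 0 ≤ cr p q x ∧ 0 ≤ cr q r x ∧ 0 ≤ cr r p x)
    (hy : 0 ≤ cr p q y ∧ 0 ≤ cr q r y ∧ 0 ≤ cr r p y)
    (hz : 0 ≤ cr p q z ∧ 0 ≤ cr q r z ∧ 0 ≤ cr r p z) : False := by
  have hins : ∀ s, (0 ≤ cr p q s ∧ 0 ≤ cr q r s ∧ 0 ≤ cr r p s) → Ins p q r s :=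
    fun s hs => ⟨mul_nonneg h0.le hs.1, mul_nonneg h0.le hs.2.1, mul_nonneg h0.le hs.2.2⟩
  have := h.le p q r h0.ne' hiso (hins x hx) (hins y hy) (hins z hz)
  have e : cr (0, 0) (1, 0) w = w.2 := by simp [cr]
  rw [e, abs_of_pos hw, abs_of_pos h0] at this
  linarith

/-- An area-increasing similarity cannot map the inner triangle into its minimal container. -/
lemma false_of_expanding (h : IsMin x y z (0, 0) (1, 0) w) (hw : 0 < w.2) {a b t₁ t₂ : ℝ}
    (hab : 1 < a ^ 2 + b ^ 2)
    (hins : ∀ p, p = x ∨ p = y ∨ p = z → ∀ g : ℝ × ℝ,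
      g = (a * p.1 - b * p.2 + t₁, b * p.1 + a * p.2 + t₂) →
      0 ≤ g.2 ∧ 0 ≤ cr (1, 0) w g ∧ 0 ≤ cr w (0, 0) g) : False := by
  have hn : 0 < a ^ 2 + b ^ 2 := by linarith
  let g : ℝ × ℝ → ℝ × ℝ := fun p =>
    ((a * (p.1 - t₁) + b * (p.2 - t₂)) / (a ^ 2 + b ^ 2),
      (-b * (p.1 - t₁) + a * (p.2 - t₂)) / (a ^ 2 + b ^ 2))
  have hcr : ∀ p q r, cr (g p) (g q) (g r) = cr p q r / (a ^ 2 + b ^ 2) := by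
    intro p q r
    simp only [g, cr]; field_simp; ring
  have hsd : ∀ p q, sd (g p) (g q) = sd p q / (a ^ 2 + b ^ 2) := by
    intro p q
    simp only [g, sd]; field_simp; ring
  have hg : ∀ p : ℝ × ℝ, g (a * p.1 - b * p.2 + t₁, b * p.1 + a * p.2 + t₂) = p := by
    intro p
    simp only [g]
    ext
    · simp only; field_simp; ring
    · simp only; field_simp; ring
  have e : cr (0, 0) (1, 0) w = w.2 := by simp [cr]
  have key : ∀ p, p = x ∨ p = y ∨ p = z → 0 ≤ cr (g (0, 0)) (g (1, 0)) p ∧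
      0 ≤ cr (g (1, 0)) (g w) p ∧ 0 ≤ cr (g w) (g (0, 0)) p := by
    intro p hp
    obtain ⟨h1, h2, h3⟩ := hins p hp _ rfl
    rw [← hg p]
    simp only [hcr]
    refine ⟨div_nonneg ?_ hn.le, div_nonneg h2 hn.le, div_nonneg h3 hn.le⟩
    simpa [cr] using h1
  refine h.false_of_smaller (p := g (0, 0)) (q := g (1, 0)) (r := g w) hw ?_ ?_ ?_
    (key x (by simp)) (key y (by simp)) (key z (by simp))
  · rw [hcr, e]; positivity
  · rw [hcr, e]; exact div_lt_self hw hab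
  · have := h.iso
    simpa only [Iso, hsd, div_left_inj' hn.ne'] using this

lemma ins_normal (hw : 0 < w.2) (h : Ins (0, 0) (1, 0) w x) :
    0 ≤ x.2 ∧ 0 ≤ cr (1, 0) w x ∧ 0 ≤ cr w (0, 0) x := by
  have e : cr (0, 0) (1, 0) w = w.2 := by simp [cr]
  have e' : cr (0, 0) (1, 0) x = x.2 := by simp [cr]
  unfold Ins at h
  rwa [e, e', mul_nonneg_iff_of_pos_left hw, mul_nonneg_iff_of_pos_left hw,
    mul_nonneg_iff_of_pos_left hw] at h

end IsMin

lemma eventually_pos {f : ℝ → ℝ} (hf : ContinuousAt f 0) (h0 : 0 < f 0) :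
    ∀ᶠ e in 𝓝[>] (0 : ℝ), 0 < f e :=
  (hf.eventually (lt_mem_nhds h0)).filter_mono nhdsWithin_le_nhds

namespace IsMin

variable {x y z u v w : ℝ × ℝ}

/-- A side of a minimal container meets the vertices of the inner triangle. -/
lemma exists_on_side (h : IsMin x y z u v w) :
    cr v w x = 0 ∨ cr v w y = 0 ∨ cr v w z = 0 := by
  by_contra! hc
  obtain ⟨f, k, hk, hcr, hw, hu, hv, hm⟩ := h.normalize
  have pos : ∀ p, Ins (0, 0) (1, 0) (f w) (f p) → cr v w p ≠ 0 → 0 < cr (1, 0) (f w) (f p) := by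
    intro p hp hne
    refine lt_of_le_of_ne (ins_normal hw hp).2.1 ?_
    rw [← hv, hcr]
    exact (mul_ne_zero hk hne).symm
  have ev : ∀ p : ℝ × ℝ, 0 < cr (1, 0) (f w) p →
      ∀ᶠ e in 𝓝[>] (0 : ℝ), 0 < cr (1, 0) (f w) ((1 + e) * p.1, (1 + e) * p.2) := by
    intro p hp
    refine eventually_pos ?_ (by simpa using hp)
    unfold cr; fun_prop
  obtain ⟨e, ⟨⟨h1, h2⟩, h3⟩, he⟩ := (((ev _ (pos x hm.ins₁ hc.1)).and
    (ev _ (pos y hm.ins₂ hc.2.1))).and (ev _ (pos z hm.ins₃ hc.2.2))).and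
      self_mem_nhdsWithin |>.exists
  have he : 0 < e := he
  refine hm.false_of_expanding hw (a := 1 + e) (b := 0) (t₁ := 0) (t₂ := 0) (by nlinarith) ?_
  intro p hp g hg
  have hg' : g = ((1 + e) * p.1, (1 + e) * p.2) := by rw [hg]; simp
  subst hg'
  have hin : Ins (0, 0) (1, 0) (f w) p := by
    rcases hp with rfl | rfl | rfl
    exacts [hm.ins₁, hm.ins₂, hm.ins₃]
  obtain ⟨i1, -, i3⟩ := ins_normal hw hin
  refine ⟨by simp only; positivity, ?_, ?_⟩
  · rcases hp with rfl | rfl | rfl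
    exacts [h1.le, h2.le, h3.le]
  · have : cr (f w) (0, 0) ((1 + e) * p.1, (1 + e) * p.2) = (1 + e) * cr (f w) (0, 0) p := by
      simp only [cr]; ring
    rw [this]; positivity

/-- In a minimal container it is impossible that every side touches the inner triangle in a
single vertex: a small rotation would improve it. -/
lemma false_of_single_contacts (h : IsMin x y z (0, 0) (1, 0) w) (hw : 0 < w.2)
    {v₁ v₂ v₃ : ℝ × ℝ} (h₁ : cr (1, 0) w v₁ = 0) (h₂ : cr w (0, 0) v₂ = 0) (h₃ : v₃.2 = 0)
    (hc : ∀ p, p = x ∨ p = y ∨ p = z → (p = v₁ ∨ 0 < cr (1, 0) w p) ∧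
      (p = v₂ ∨ 0 < cr w (0, 0) p) ∧ (p = v₃ ∨ 0 < p.2)) : False := by
  obtain ⟨c, hc1⟩ : ∃ c, c = v₁.2 / w.2 := ⟨_, rfl⟩
  obtain ⟨b, hb⟩ : ∃ b, b = v₂.2 / w.2 := ⟨_, rfl⟩
  have e12 : v₁.2 = c * w.2 := by rw [hc1]; field_simp
  have e22 : v₂.2 = b * w.2 := by rw [hb]; field_simp
  have e11 : v₁.1 = 1 + c * (w.1 - 1) := by
    simp only [cr, e12] at h₁
    apply mul_left_cancel₀ hw.ne'; linear_combination -h₁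
  have e21 : v₂.1 = b * w.1 := by
    simp only [cr, e22] at h₂
    apply mul_left_cancel₀ hw.ne'; linear_combination h₂
  set κ := (w.1 - 1 + c * ((w.1 - 1) ^ 2 + w.2 ^ 2) + v₃.1 - b * (w.1 ^ 2 + w.2 ^ 2)) / w.2 with hκ
  obtain ⟨s, hs, hsk⟩ : ∃ s : ℝ, s ^ 2 = 1 ∧ 0 ≤ s * κ := by
    rcases le_total 0 κ with h' | h'
    · exact ⟨1, by norm_num, by linarith⟩
    · exact ⟨-1, by norm_num, by linarith⟩
  set t₁ := s * (-w.1 * v₃.1 + b * (w.1 ^ 2 + w.2 ^ 2)) / w.2 with ht₁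
  let g : ℝ → ℝ × ℝ → ℝ × ℝ := fun e p =>
    ((1 + e * (s * κ)) * p.1 - e * s * p.2 + e * t₁,
      e * s * p.1 + (1 + e * (s * κ)) * p.2 + e * (-s * v₃.1))
  have g0 : ∀ p, g 0 p = p := by intro p; simp [g]
  have gv₁ : ∀ e, cr (1, 0) w (g e v₁) = 0 := by
    intro e
    simp only [g, cr, e11, e12, hκ, ht₁]
    field_simp; ring
  have gv₂ : ∀ e, cr w (0, 0) (g e v₂) = 0 := by
    intro e
    simp only [g, cr, e21, e22, hκ, ht₁]
    field_simp; ring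
  have gv₃ : ∀ e, (g e v₃).2 = 0 := by
    intro e
    simp only [g, h₃]; ring
  have ev : ∀ p, p = x ∨ p = y ∨ p = z → ∀ᶠ e in 𝓝[>] (0 : ℝ),
      0 ≤ (g e p).2 ∧ 0 ≤ cr (1, 0) w (g e p) ∧ 0 ≤ cr w (0, 0) (g e p) := by
    intro p hp
    obtain ⟨c1, c2, c3⟩ := hc p hp
    have a1 : ∀ᶠ e in 𝓝[>] (0 : ℝ), 0 ≤ cr (1, 0) w (g e p) := by
      rcases c1 with rfl | c1
      · exact .of_forall fun e => (gv₁ e).ge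
      · refine (eventually_pos (f := fun e => cr (1, 0) w (g e p)) ?_ (by rwa [g0])).mono
          fun _ => le_of_lt
        unfold cr g; fun_prop
    have a2 : ∀ᶠ e in 𝓝[>] (0 : ℝ), 0 ≤ cr w (0, 0) (g e p) := by
      rcases c2 with rfl | c2
      · exact .of_forall fun e => (gv₂ e).ge
      · refine (eventually_pos (f := fun e => cr w (0, 0) (g e p)) ?_ (by rwa [g0])).mono
          fun _ => le_of_lt
        unfold cr g; fun_prop
    have a3 : ∀ᶠ e in 𝓝[>] (0 : ℝ), 0 ≤ (g e p).2 := by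
      rcases c3 with rfl | c3
      · exact .of_forall fun e => (gv₃ e).ge
      · refine (eventually_pos (f := fun e => (g e p).2) ?_ (by rwa [g0])).mono
          fun _ => le_of_lt
        unfold g; fun_prop
    filter_upwards [a1, a2, a3] with e b1 b2 b3 using ⟨b3, b1, b2⟩
  obtain ⟨e, ⟨⟨h1, h2⟩, h3⟩, he⟩ := (((ev x (by simp)).and (ev y (by simp))).and
    (ev z (by simp))).and self_mem_nhdsWithin |>.exists
  have he : 0 < e := he
  refine h.false_of_expanding hw (a := 1 + e * (s * κ)) (b := e * s) (t₁ := e * t₁)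
    (t₂ := e * (-s * v₃.1)) ?_ ?_
  · have : 0 < e ^ 2 := by positivity
    have : 0 ≤ e * (s * κ) := by positivity
    nlinarith
  · rintro p hp _ rfl
    rcases hp with rfl | rfl | rfl
    exacts [h1, h2, h3]

/-- Some side of a minimal container contains two vertices of the inner triangle. -/
lemma exists_two_on_side (h : IsMin x y z u v w) :
    ((cr u v x = 0 ∧ cr u v y = 0) ∨ (cr u v y = 0 ∧ cr u v z = 0) ∨
      (cr u v z = 0 ∧ cr u v x = 0)) ∨
    ((cr v w x = 0 ∧ cr v w y = 0) ∨ (cr v w y = 0 ∧ cr v w z = 0) ∨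
      (cr v w z = 0 ∧ cr v w x = 0)) ∨
    ((cr w u x = 0 ∧ cr w u y = 0) ∨ (cr w u y = 0 ∧ cr w u z = 0) ∨
      (cr w u z = 0 ∧ cr w u x = 0)) := by
  by_contra! hcon
  obtain ⟨c3, c1, c2⟩ := hcon
  obtain ⟨f, k, hk, hcr, hw, hu, hv, hm⟩ := h.normalize
  have hz : ∀ p q r, cr (f p) (f q) (f r) = 0 ↔ cr p q r = 0 := by
    intro p q r; rw [hcr]; simp [hk]
  have e3 : ∀ p, cr u v p = 0 ↔ (f p).2 = 0 := by
    intro p; rw [← hz, hu, hv]; simp [cr]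
  have e1 : ∀ p, cr v w p = 0 ↔ cr (1, 0) (f w) (f p) = 0 := by
    intro p; rw [← hz, hv]
  have e2 : ∀ p, cr w u p = 0 ↔ cr (f w) (0, 0) (f p) = 0 := by
    intro p; rw [← hz, hu]
  have contact : ∀ F : ℝ × ℝ → ℝ, 0 ≤ F x → 0 ≤ F y → 0 ≤ F z →
      (F x = 0 ∨ F y = 0 ∨ F z = 0) → ((F x = 0 → F y ≠ 0) ∧ (F y = 0 → F z ≠ 0) ∧
        (F z = 0 → F x ≠ 0)) → ∃ t, F t = 0 ∧ ∀ p, p = x ∨ p = y ∨ p = z → p = t ∨ 0 < F p := by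
    intro F hx hy hz h0 hn
    have aux : ∀ p, 0 ≤ F p → F p ≠ 0 → 0 < F p := fun p h1 h2 => lt_of_le_of_ne h1 h2.symm
    rcases h0 with h0 | h0 | h0
    · refine ⟨x, h0, ?_⟩
      rintro p (rfl | rfl | rfl)
      exacts [.inl rfl, .inr (aux _ hy (hn.1 h0)), .inr (aux _ hz fun h' => hn.2.2 h' h0)]
    · refine ⟨y, h0, ?_⟩
      rintro p (rfl | rfl | rfl)
      exacts [.inr (aux _ hx fun h' => hn.1 h' h0), .inl rfl, .inr (aux _ hz (hn.2.1 h0))]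
    · refine ⟨z, h0, ?_⟩
      rintro p (rfl | rfl | rfl)
      exacts [.inr (aux _ hx (hn.2.2 h0)), .inr (aux _ hy fun h' => hn.2.1 h' h0), .inl rfl]
  obtain ⟨x1, x2, x3⟩ := ins_normal hw hm.ins₁
  obtain ⟨y1, y2, y3⟩ := ins_normal hw hm.ins₂
  obtain ⟨z1, z2, z3⟩ := ins_normal hw hm.ins₃
  have s1 := h.exists_on_side
  have s2 := h.rotOuter.exists_on_side
  have s3 := h.rotOuter.rotOuter.exists_on_side
  simp only [ne_eq, e3] at s3 c3
  simp only [ne_eq, e1] at s1 c1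
  simp only [ne_eq, e2] at s2 c2
  obtain ⟨v₁, o1, p1⟩ := contact (fun p => cr (1, 0) (f w) (f p)) x2 y2 z2 s1 c1
  obtain ⟨v₂, o2, p2⟩ := contact (fun p => cr (f w) (0, 0) (f p)) x3 y3 z3 s2 c2
  obtain ⟨v₃, o3, p3⟩ := contact (fun p => (f p).2) x1 y1 z1 s3 c3
  refine hm.false_of_single_contacts hw o1 o2 o3 ?_
  have all : ∀ p, p = x ∨ p = y ∨ p = z → (f p = f v₁ ∨ 0 < cr (1, 0) (f w) (f p)) ∧
      (f p = f v₂ ∨ 0 < cr (f w) (0, 0) (f p)) ∧ (f p = f v₃ ∨ 0 < (f p).2) :=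
    fun p hp => ⟨(p1 p hp).imp_left (congrArg f), (p2 p hp).imp_left (congrArg f),
      (p3 p hp).imp_left (congrArg f)⟩
  rintro p (rfl | rfl | rfl)
  exacts [all x (by simp), all y (by simp), all z (by simp)]

end IsMin
namespace IsMin

section Normalized

variable {x y z w : ℝ × ℝ}

lemma reflect (h : IsMin x y z (0, 0) (1, 0) w) :
    IsMin (1 - x.1, x.2) (1 - y.1, y.2) (1 - z.1, z.2) (0, 0) (1, 0) (1 - w.1, w.2) := by
  have := h.swapOuter.map (f := fun p => (1 - p.1, p.2)) (g := fun p => (1 - p.1, p.2))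
    (k := -1) (l := 1) (by intro p; ext <;> simp) (by norm_num) (by norm_num)
    (by intro p q r; simp only [cr]; ring) (by intro p q; simp only [sd]; ring)
  simpa using this

/-- Moving the apex over a shared side downwards, keeping the triangle isosceles, contradicts
minimality when the third inner vertex is interior. -/
lemma false_of_deform (h : IsMin (0, 0) (1, 0) z (0, 0) (1, 0) w) (hw : 0 < w.2) (hz : 0 < z.2)
    (h₁ : 0 < cr (1, 0) w z) (h₂ : 0 < cr w (0, 0) z) {r : ℝ → ℝ × ℝ} (hr : ContinuousAt r 0)
    (hr0 : r 0 = w) (hlt : ∀ᶠ e in 𝓝[>] (0 : ℝ), (r e).2 < w.2)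
    (hiso : ∀ᶠ e in 𝓝[>] (0 : ℝ), Iso (0, 0) (1, 0) (r e)) : False := by
  have a1 : ∀ᶠ e in 𝓝[>] (0 : ℝ), 0 < (r e).2 :=
    eventually_pos (f := fun e => (r e).2) (by fun_prop) (by rwa [hr0])
  have a2 : ∀ᶠ e in 𝓝[>] (0 : ℝ), 0 < cr (1, 0) (r e) z :=
    eventually_pos (f := fun e => cr (1, 0) (r e) z) (by unfold cr; fun_prop) (by rwa [hr0])
  have a3 : ∀ᶠ e in 𝓝[>] (0 : ℝ), 0 < cr (r e) (0, 0) z :=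
    eventually_pos (f := fun e => cr (r e) (0, 0) z) (by unfold cr; fun_prop) (by rwa [hr0])
  obtain ⟨e, b1, b2, b3, b4, b5⟩ := (a1.and (a2.and (a3.and (hlt.and hiso)))).exists
  refine h.false_of_smaller (p := (0, 0)) (q := (1, 0)) (r := r e) hw ?_ ?_ b5 ?_ ?_
    ⟨?_, b2.le, b3.le⟩
  · simpa [cr] using b1
  · simpa [cr] using b4
  · refine ⟨by simp [cr], ?_, by simp only [cr]; apply le_of_eq; ring⟩
    rw [show cr (1, 0) (r e) (0, 0) = (r e).2 by simp only [cr]; ring]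
    exact b1.le
  · refine ⟨by simp [cr], by simp [cr], ?_⟩
    rw [show cr (r e) (0, 0) (1, 0) = (r e).2 by simp only [cr]; ring]
    exact b1.le
  · simpa [cr] using hz.le

/-- If a minimal container shares a side with the inner triangle, the third inner vertex is on
one of the other two sides. -/
lemma false_of_interior (h : IsMin (0, 0) (1, 0) z (0, 0) (1, 0) w) (hw : 0 < w.2) (hz : 0 < z.2)
    (h₁ : 0 < cr (1, 0) w z) (h₂ : 0 < cr w (0, 0) z) : False := by
  have rot : ∀ a b : ℝ, 0 < b → ∃ r : ℝ → ℝ × ℝ, Continuous r ∧ r 0 = (a, b) ∧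
      ∀ e > 0, (r e).2 < b ∧ (r e).1 ^ 2 + (r e).2 ^ 2 = a ^ 2 + b ^ 2 := by
    intro a b hb
    obtain ⟨s, hs, hsa⟩ : ∃ s : ℝ, s ^ 2 = 1 ∧ s * a ≤ 0 := by
      rcases le_total 0 a with h' | h'
      · exact ⟨-1, by norm_num, by linarith⟩
      · exact ⟨1, by norm_num, by linarith⟩
    refine ⟨fun e => ((a * (1 - e ^ 2) - 2 * (s * e) * b) / (1 + e ^ 2),
      (b * (1 - e ^ 2) + 2 * (s * e) * a) / (1 + e ^ 2)), ?_, by simp, ?_⟩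
    · fun_prop (disch := intro e; positivity)
    · intro e he
      have he2 : 0 < e ^ 2 := by positivity
      constructor
      · simp only
        rw [div_lt_iff₀ (by positivity)]
        nlinarith [mul_pos he2 hb, mul_nonneg he.le (neg_nonneg.2 hsa)]
      · simp only
        field_simp
        linear_combination 4 * e ^ 2 * (a ^ 2 + b ^ 2) * hs
  rcases h.iso with hi | hi | hi
  · refine h.false_of_deform hw hz h₁ h₂ (r := fun e => (w.1, w.2 - e)) (by fun_prop) (by simp)
      ?_ (.of_forall fun e => .inl ?_)
    · filter_upwards [self_mem_nhdsWithin] with e he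
      have : 0 < e := he
      linarith
    · simp only [sd] at hi ⊢
      linear_combination hi
  · obtain ⟨r, hr, hr0, hr1⟩ := rot w.1 w.2 hw
    refine h.false_of_deform hw hz h₁ h₂ hr.continuousAt hr0 ?_ ?_
    · filter_upwards [self_mem_nhdsWithin] with e he using (hr1 e he).1
    · filter_upwards [self_mem_nhdsWithin] with e he
      refine .inr (.inl ?_)
      simp only [sd] at hi ⊢
      linear_combination hi + (hr1 e he).2
  · obtain ⟨r, hr, hr0, hr1⟩ := rot (w.1 - 1) w.2 hw
    refine h.false_of_deform hw hz h₁ h₂ (r := fun e => ((r e).1 + 1, (r e).2)) (by fun_prop)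
      (by simp [hr0]) ?_ ?_
    · filter_upwards [self_mem_nhdsWithin] with e he using (hr1 e he).1
    · filter_upwards [self_mem_nhdsWithin] with e he
      refine .inr (.inr ?_)
      simp only [sd] at hi ⊢
      linear_combination hi - (hr1 e he).2

end Normalized

section SharedApex

variable {x₁ y₁ w₁ w₂ : ℝ}

/-- If an inner vertex is a vertex of a minimal container with the opposite side carrying the
others in its relative interior, the container is not isosceles with equal legs at that vertex. -/
lemma false_of_apex_opposite (h : IsMin (x₁, 0) (y₁, 0) (w₁, w₂) (0, 0) (1, 0) (w₁, w₂))
    (hw : 0 < w₂) (hx0 : 0 < x₁) (hx1 : x₁ < 1) (hy0 : 0 < y₁) (hy1 : y₁ < 1)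
    (hi : w₁ = 1 / 2) : False := by
  obtain ⟨e, he, he'⟩ := exists_between (show 0 < min (min x₁ y₁) (min (1 - x₁) (1 - y₁)) by
    simp [*])
  simp only [lt_min_iff] at he'
  obtain ⟨⟨e1, e2⟩, e3, e4⟩ := he'
  refine h.false_of_smaller (p := (e, 0)) (q := (1 - e, 0)) (r := (w₁, w₂)) hw ?_ ?_ (.inl ?_)
    ⟨?_, ?_, ?_⟩ ⟨?_, ?_, ?_⟩ ⟨?_, ?_, ?_⟩
  all_goals simp only [cr, sd, hi]
  all_goals nlinarith

lemma false_of_apex_side (h : IsMin (x₁, 0) (y₁, 0) (w₁, w₂) (0, 0) (1, 0) (w₁, w₂))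
    (hw : 0 < w₂) (hx0 : 0 < x₁) (hx1 : x₁ < 1) (hy0 : 0 < y₁) (hy1 : y₁ < 1)
    (hi : w₁ ^ 2 + w₂ ^ 2 = 1) : False := by
  rcases eq_or_ne w₁ 0 with h0 | h0
  · subst h0
    have hw1 : w₂ = 1 := by nlinarith
    subst hw1
    obtain ⟨e, he, he'⟩ := exists_between (show 0 < min ((1 - x₁) / 2) ((1 - y₁) / 2) by
      simp [*])
    simp only [lt_min_iff] at he'
    obtain ⟨e1, e2⟩ := he'
    refine h.false_of_expanding (a := 1) (b := e) (t₁ := e) (t₂ := 0) hw (by nlinarith) ?_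
    rintro p (rfl | rfl | rfl) g rfl
    all_goals simp only [cr]
    all_goals refine ⟨?_, ?_, ?_⟩
    all_goals nlinarith
  · obtain ⟨s, hs, hsw⟩ : ∃ s : ℝ, s ^ 2 = 1 ∧ 0 < s * w₁ := by
      rcases lt_or_gt_of_ne h0 with h' | h'
      · exact ⟨-1, by norm_num, by linarith⟩
      · exact ⟨1, by norm_num, by linarith⟩
    let l : ℝ → ℝ := fun e => √((w₁ - s * e) ^ 2 + w₂ ^ 2)
    have hl : Continuous l := by fun_prop
    have hl0 : l 0 = 1 := by simp [l, hi]
    have a1 := eventually_pos (f := fun e => x₁ - s * e) (by fun_prop) (by simpa using hx0)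
    have a2 := eventually_pos (f := fun e => y₁ - s * e) (by fun_prop) (by simpa using hy0)
    have a3 := eventually_pos (f := fun e => s * e + l e - x₁) (by fun_prop)
      (by simp [hl0, hx1])
    have a4 := eventually_pos (f := fun e => s * e + l e - y₁) (by fun_prop)
      (by simp [hl0, hy1])
    have a5 := eventually_pos (f := fun e => 2 * (s * w₁) - e) (by fun_prop) (by simpa using hsw)
    obtain ⟨e, b1, b2, b3, b4, b5, he⟩ :=
      (a1.and (a2.and (a3.and (a4.and (a5.and self_mem_nhdsWithin))))).exists
    have he : 0 < e := he
    have hpos : 0 < (w₁ - s * e) ^ 2 + w₂ ^ 2 := by positivity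
    have hl2 : l e ^ 2 = (w₁ - s * e) ^ 2 + w₂ ^ 2 := Real.sq_sqrt hpos.le
    have hlp : 0 < l e := Real.sqrt_pos.2 hpos
    have hl1 : l e < 1 := by
      have h1 : 0 < e * (2 * (s * w₁) - e) := mul_pos he b5
      have h2 : s ^ 2 * e ^ 2 = e ^ 2 := by rw [hs, one_mul]
      refine (sq_lt_one_iff₀ hlp.le).1 ?_
      rw [hl2]
      linarith
    refine h.false_of_smaller (p := (s * e, 0)) (q := (s * e + l e, 0)) (r := (w₁, w₂)) hw
      ?_ ?_ (.inr (.inl ?_)) ⟨?_, ?_, ?_⟩ ⟨?_, ?_, ?_⟩ ⟨?_, ?_, ?_⟩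
    all_goals simp only [cr, sd]
    all_goals nlinarith

end SharedApex

section SharedBase

variable {y₁ w₁ w₂ c : ℝ}

lemma false_of_apex_far
    (h : IsMin (0, 0) (y₁, 0) (1 + c * (w₁ - 1), c * w₂) (0, 0) (1, 0) (w₁, w₂))
    (hw : 0 < w₂) (hy0 : 0 < y₁) (hy1 : y₁ < 1) (hc0 : 0 < c) (hc1 : c < 1)
    (hi : w₁ = 1 / 2) : False := by
  subst hi
  have hcw : 0 < c * w₂ := by positivity
  refine h.false_of_smaller (p := (0, 0)) (q := (2 - c, 0)) (r := (1 - c / 2, c * w₂)) hw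
      ?_ ?_ (.inl ?_) ⟨?_, ?_, ?_⟩ ⟨?_, ?_, ?_⟩ ⟨?_, ?_, ?_⟩
  all_goals simp only [cr, sd]
  all_goals nlinarith [mul_pos hcw hy0, mul_pos hw (pow_pos (sub_pos.2 hc1) 2)]

lemma false_of_apex_shared
    (h : IsMin (0, 0) (y₁, 0) (1 + c * (w₁ - 1), c * w₂) (0, 0) (1, 0) (w₁, w₂))
    (hw : 0 < w₂) (hy0 : 0 < y₁) (hy1 : y₁ < 1) (hc0 : 0 < c) (hc1 : c < 1)
    (hi : w₁ ^ 2 + w₂ ^ 2 = 1) : False := by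
  have hw1 : w₁ < 1 := by nlinarith
  have hw1' : -1 < w₁ := by nlinarith
  obtain ⟨z₁, hz1⟩ : ∃ z₁, z₁ = 1 + c * (w₁ - 1) := ⟨_, rfl⟩
  obtain ⟨z₂, hz2⟩ : ∃ z₂, z₂ = c * w₂ := ⟨_, rfl⟩
  rw [← hz1, ← hz2] at h
  have hz0 : 0 < z₂ := by rw [hz2]; positivity
  have hzw : z₂ < w₂ := by nlinarith
  have hN0 : 0 < z₁ ^ 2 + z₂ ^ 2 := by positivity
  have hN1 : z₁ ^ 2 + z₂ ^ 2 < 1 := by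
    have : 0 < c * (1 - c) * (1 - w₁) := by
      have := sub_pos.2 hc1; have := sub_pos.2 hw1; positivity
    rw [hz1, hz2]; nlinarith
  obtain ⟨m, hm0, hm⟩ : ∃ m : ℝ, 0 < m ∧ m ^ 2 * (z₁ ^ 2 + z₂ ^ 2) = 1 := by
    refine ⟨(√(z₁ ^ 2 + z₂ ^ 2))⁻¹, by positivity, ?_⟩
    rw [inv_pow, Real.sq_sqrt hN0.le, inv_mul_cancel₀ hN0.ne']
  have hm1 : 1 < m := by
    by_contra! hcon
    nlinarith [mul_le_mul_of_nonneg_right (pow_le_one₀ hm0.le hcon : m ^ 2 ≤ 1) hN0.le]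
  rcases lt_or_ge (m * z₂) w₂ with hlt | hge
  · have hmz : 0 < m * z₂ := by positivity
    refine h.false_of_smaller (p := (0, 0)) (q := (1, 0)) (r := (m * z₁, m * z₂)) hw
      ?_ ?_ (.inr (.inl ?_)) ⟨?_, ?_, ?_⟩ ⟨?_, ?_, ?_⟩ ⟨?_, ?_, ?_⟩
    all_goals simp only [cr, sd]
    all_goals nlinarith [mul_pos hmz hy0]
  · obtain ⟨t, ht⟩ : ∃ t, t = w₂ / (1 + w₁) := ⟨_, rfl⟩
    have hw1p : 0 < 1 + w₁ := by linarith
    have ht0 : 0 < t := by rw [ht]; positivity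
    have htw : t * (1 + w₁) = w₂ := by rw [ht]; field_simp
    have htw' : t * w₂ = 1 - w₁ := by
      apply mul_left_cancel₀ hw1p.ne'; linear_combination w₂ * htw + hi
    have hzt : z₁ = 1 - t * z₂ := by
      rw [hz1, hz2]; linear_combination c * htw'
    have hw2t : w₂ * (1 + t ^ 2) = 2 * t := by linear_combination t * htw' - htw
    have hw1t : w₁ * (1 + t ^ 2) = 1 - t ^ 2 := by linear_combination htw' + t * htw
    have key : 0 < (1 - t ^ 2) + 2 * z₂ * t * (1 + t ^ 2) := by
      rcases le_or_gt t 1 with h1 | h1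
      · have : 0 < 2 * z₂ * t * (1 + t ^ 2) := by positivity
        nlinarith
      · have g1 : w₂ ^ 2 * (z₁ ^ 2 + z₂ ^ 2) ≤ z₂ ^ 2 := by
          calc w₂ ^ 2 * (z₁ ^ 2 + z₂ ^ 2) ≤ (m * z₂) ^ 2 * (z₁ ^ 2 + z₂ ^ 2) :=
                mul_le_mul_of_nonneg_right (pow_le_pow_left₀ hw.le hge 2) hN0.le
            _ = z₂ ^ 2 := by linear_combination z₂ ^ 2 * hm
        have g2 : (2 * t * z₁) ^ 2 ≤ (z₂ * (t ^ 2 - 1)) ^ 2 := by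
          have : (2 * t) ^ 2 * (z₁ ^ 2 + z₂ ^ 2) ≤ z₂ ^ 2 * (1 + t ^ 2) ^ 2 := by
            rw [← hw2t]
            linarith [mul_le_mul_of_nonneg_right g1 (sq_nonneg (1 + t ^ 2))]
          linarith
        have h1' : 0 < t ^ 2 - 1 := by nlinarith
        have g3 : 2 * t * z₁ ≤ z₂ * (t ^ 2 - 1) := le_of_sq_le_sq g2 (by positivity)
        have g4 : 2 * t ≤ z₂ * (3 * t ^ 2 - 1) := by rw [hzt] at g3; linarith
        have g5 : 0 < 3 * t ^ 2 - 1 := by linarith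
        have g6 : 0 < (3 * t ^ 2 - 1) * ((1 - t ^ 2) + 2 * z₂ * t * (1 + t ^ 2)) := by
          have := mul_le_mul_of_nonneg_right g4 (show 0 ≤ 2 * t * (1 + t ^ 2) by positivity)
          linarith [pow_pos ht0 4]
        exact (mul_pos_iff_of_pos_left g5).1 g6
    have a1 := eventually_pos (f := fun e => -2 * t ^ 2 + t * e + (1 + t ^ 2) * (1 + 2 * z₂ * t) +
      (1 + t ^ 2) * (-2 * z₂ * e - z₂ ^ 2 * e * t + z₂ ^ 2 * e ^ 2)) (by fun_prop)
      (by simp; linarith)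
    have a2 := eventually_pos (f := fun e => t - e) (by fun_prop) (by simpa)
    have a3 := eventually_pos (f := fun e => 1 - e * z₂ - y₁) (by fun_prop) (by simpa)
    have a4 := eventually_pos (f := fun e => 2 * (t - e) * z₁ - (1 - (t - e) ^ 2) * z₂)
      (by fun_prop) (by
        simp only [sub_zero]
        have : 2 * t * z₁ - (1 - t ^ 2) * z₂ = (1 + t ^ 2) * (w₂ - z₂) := by
          rw [hzt]; linear_combination -hw2t
        rw [this]
        have := sub_pos.2 hzw
        positivity)
    obtain ⟨e, b1, b2, b3, b4, he⟩ := (a1.and (a2.and (a3.and (a4.and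
      self_mem_nhdsWithin)))).exists
    have he : 0 < e := he
    obtain ⟨l, hl⟩ : ∃ l, l = 1 - e * z₂ := ⟨_, rfl⟩
    obtain ⟨τ, hτ⟩ : ∃ τ, τ = t - e := ⟨_, rfl⟩
    have hlp : 0 < l := by linarith
    rw [← hτ] at b2 b4
    have harea : l ^ 2 * τ * (1 + t ^ 2) < t * (1 + τ ^ 2) := by
      have := mul_pos he b1
      rw [hl, hτ]; linarith
    obtain ⟨k, hk⟩ : ∃ k, k = l / (1 + τ ^ 2) := ⟨_, rfl⟩
    have hk0 : 0 < k := by rw [hk]; positivity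
    have hkl : k * (1 + τ ^ 2) = l := by rw [hk]; field_simp
    have hzl : z₁ - l = -τ * z₂ := by rw [hzt, hl, hτ]; ring
    refine h.false_of_smaller (p := (0, 0)) (q := (l, 0))
      (r := (k * (1 - τ ^ 2), k * (2 * τ))) hw
      ?_ ?_ (.inr (.inl ?_)) ⟨?_, ?_, ?_⟩ ⟨?_, ?_, ?_⟩ ⟨?_, ?_, ?_⟩
    all_goals simp only [cr, sd]
    · ring_nf; positivity
    · have e1 : w₂ = 2 * t / (1 + t ^ 2) := by rw [← hw2t]; field_simp
      rw [e1, hk, lt_div_iff₀ (by positivity)]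
      simp only [sub_zero, zero_mul]
      rw [show l * (l / (1 + τ ^ 2) * (2 * τ)) * (1 + t ^ 2) =
        2 * (l ^ 2 * τ * (1 + t ^ 2)) / (1 + τ ^ 2) by ring, div_lt_iff₀ (by positivity)]
      linarith
    · rw [← hkl]; ring
    · simp
    · ring_nf; positivity
    · ring_nf; simp
    · simp
    · have : 0 < l - y₁ := by rw [hl]; exact b3
      have : 0 ≤ (k * (2 * τ)) * (l - y₁) := by positivity
      linarith
    · have : 0 < k * (2 * τ) * y₁ := by positivity
      linarith
    · have : 0 < l * z₂ := by positivity
      linarith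
    · apply le_of_eq
      rw [hzl, ← hkl]; ring
    · have : 0 < k * (2 * τ * z₁ - (1 - τ ^ 2) * z₂) := by positivity
      linarith

lemma false_of_apex_near
    (h : IsMin (0, 0) (y₁, 0) (1 + c * (w₁ - 1), c * w₂) (0, 0) (1, 0) (w₁, w₂))
    (hw : 0 < w₂) (hy0 : 0 < y₁) (hy1 : y₁ < 1) (hc0 : 0 < c) (hc1 : c < 1)
    (hi : (w₁ - 1) ^ 2 + w₂ ^ 2 = 1) : False := by
  by_cases hhalf : w₁ = 1 / 2
  · exact h.false_of_apex_shared hw hy0 hy1 hc0 hc1 (by rw [hhalf] at hi ⊢; linarith)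
  obtain ⟨a, ha⟩ : ∃ a, a = 1 - w₁ := ⟨_, rfl⟩
  obtain rfl : w₁ = 1 - a := by linarith
  have hcw : 0 < c * w₂ := by positivity
  by_cases h1 : 1 / 2 < a ∧ 2 * c * a ≤ 1
  · obtain ⟨h1, h2⟩ := h1
    obtain ⟨k, hk⟩ : ∃ k, k = 1 / (2 * a) := ⟨_, rfl⟩
    have hk0 : 0 < k := by rw [hk]; positivity
    have hka : 2 * (k * a) = 1 := by rw [hk]; field_simp
    have hk1 : k < 1 := by nlinarith
    have hck : c ≤ k := by nlinarith
    have hkw : 0 < k * w₂ := by positivity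
    refine h.false_of_smaller (p := (0, 0)) (q := (1, 0)) (r := (1 / 2, k * w₂)) hw
      ?_ ?_ (.inl ?_) ⟨?_, ?_, ?_⟩ ⟨?_, ?_, ?_⟩ ⟨?_, ?_, ?_⟩
    all_goals simp only [cr, sd]
    · linarith
    · nlinarith
    · ring
    · simp
    · linarith
    · apply le_of_eq; ring
    · simp
    · nlinarith
    · nlinarith [mul_pos hkw hy0]
    · linarith
    · apply le_of_eq; linear_combination -(c * w₂ / 2) * hka
    · have e : (0 - 1 / 2) * (c * w₂ - k * w₂) - (0 - k * w₂) * (1 + c * (1 - a - 1) - 1 / 2) =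
        (k - c) * w₂ := by linear_combination -(c * w₂ / 2) * hka
      rw [e]
      exact mul_nonneg (sub_nonneg.2 hck) hw.le
  by_cases h2 : 0 < a ∧ a < 1 / 2 ∧ c ≤ 2 * a
  · obtain ⟨h2, h3, h4⟩ := h2
    have haw : 0 < 2 * a * w₂ := by positivity
    refine h.false_of_smaller (p := (0, 0)) (q := (1, 0)) (r := (1 - 2 * a ^ 2, 2 * a * w₂)) hw
      ?_ ?_ (.inr (.inl ?_)) ⟨?_, ?_, ?_⟩ ⟨?_, ?_, ?_⟩ ⟨?_, ?_, ?_⟩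
    all_goals simp only [cr, sd]
    · linarith
    · nlinarith
    · linear_combination 4 * a ^ 2 * hi
    · simp
    · linarith
    · apply le_of_eq; ring
    · simp
    · nlinarith
    · nlinarith [mul_pos haw hy0]
    · linarith
    · ring_nf; simp
    · linarith [mul_nonneg (sub_nonneg.2 h4) hw.le]
  have h3 : 0 < 2 * c - a := by
    rcases le_or_gt a 0 with ha0 | ha0
    · linarith
    rcases lt_trichotomy a (1 / 2) with hlt | heq | hgt
    · by_contra hcon
      exact h2 ⟨ha0, hlt, by linarith⟩
    · exact absurd (by linarith) hhalf
    · by_contra hcon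
      refine h1 ⟨hgt, ?_⟩
      have : a ≤ 1 := by nlinarith
      nlinarith
  have a1 := eventually_pos (f := fun e => e - 2 * c * a + 4 * c ^ 2 - 6 * c ^ 2 * e +
    4 * c ^ 2 * e ^ 2 - c ^ 2 * e ^ 3) (by fun_prop) (by simp; nlinarith)
  have a2 := eventually_pos (f := fun e => (1 - e) ^ 2 - ((e - c * a) ^ 2 + c ^ 2 * w₂ ^ 2))
    (by fun_prop) (by simp; nlinarith)
  have a3 := eventually_pos (f := fun e => 1 - e - y₁) (by fun_prop) (by simpa)
  obtain ⟨e, b1, b2, b3, he⟩ := (a1.and (a2.and (a3.and self_mem_nhdsWithin))).exists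
  have he : 0 < e := he
  obtain ⟨q, hq⟩ : ∃ q, q = 1 - e := ⟨_, rfl⟩
  have hqy : 0 < q - y₁ := by rw [hq]; exact b3
  have hq0 : 0 < q := by linarith
  have hN : 0 < (e - c * a) ^ 2 + c ^ 2 * w₂ ^ 2 := by positivity
  obtain ⟨ρ, hρ⟩ : ∃ ρ, ρ = √((e - c * a) ^ 2 + c ^ 2 * w₂ ^ 2) := ⟨_, rfl⟩
  have hρ0 : 0 < ρ := by rw [hρ]; exact Real.sqrt_pos.2 hN
  have hρ2 : ρ ^ 2 = (e - c * a) ^ 2 + c ^ 2 * w₂ ^ 2 := by rw [hρ]; exact Real.sq_sqrt hN.le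
  have hρq : ρ < q := by
    refine lt_of_pow_lt_pow_left₀ 2 hq0.le ?_
    rw [hρ2, hq]; linarith
  have hqρ : q ^ 2 * c < ρ := by
    refine lt_of_pow_lt_pow_left₀ 2 hρ0.le ?_
    have := mul_pos he b1
    have hi' : c ^ 2 * (a ^ 2 + w₂ ^ 2) = c ^ 2 := by linear_combination c ^ 2 * hi
    rw [hρ2, hq]; linarith
  obtain ⟨k, hk⟩ : ∃ k, k = q / ρ := ⟨_, rfl⟩
  have hkρ : k * ρ = q := by rw [hk]; field_simp
  have hk0 : 0 < k := by rw [hk]; positivity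
  have hk1 : 0 < k - 1 := by
    rw [hk, sub_pos, one_lt_div hρ0]; exact hρq
  have hkc : q * k * c < 1 := by
    rw [hk, show q * (q / ρ) * c = q ^ 2 * c / ρ by ring, div_lt_one hρ0]; exact hqρ
  refine h.false_of_smaller (p := (0, 0)) (q := (q, 0))
      (r := (q + k * (e - c * a), k * (c * w₂))) hw
      ?_ ?_ (.inr (.inr ?_)) ⟨?_, ?_, ?_⟩ ⟨?_, ?_, ?_⟩ ⟨?_, ?_, ?_⟩
  all_goals simp only [cr, sd]
  · have : 0 < q * (k * (c * w₂)) := by positivity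
    linarith
  · have := mul_lt_mul_of_pos_right hkc hw
    linarith
  · have : q ^ 2 = k ^ 2 * ((e - c * a) ^ 2 + c ^ 2 * w₂ ^ 2) := by
      rw [← hρ2, ← hkρ]; ring
    linear_combination this
  · simp
  · have : 0 < k * (c * w₂) * q := by positivity
    linarith
  · ring_nf; simp
  · simp
  · have : 0 < k * (c * w₂) * (q - y₁) := by positivity
    linarith
  · have : 0 < k * (c * w₂) * y₁ := by positivity
    linarith
  · have : 0 < q * (c * w₂) := by positivity
    linarith
  · rw [hq]; ring_nf; simp
  · have : 0 < (k - 1) * (q * (c * w₂)) := by positivity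
    rw [hq] at this ⊢
    linarith

end SharedBase

end IsMin

/-- Two vertices `a`, `b` of the inner triangle `x y z` are vertices of the minimal container `u v w`,
and its third vertex `c` lies on a side of the container. -/
def Attached (x y z u v w : ℝ × ℝ) : Prop :=
  ∃ a b c d, [a, b, c].Perm [x, y, z] ∧ ({a, b, d} : Set (ℝ × ℝ)) = {u, v, w} ∧
    IsMin a b c a b d ∧ cr d a c = 0

namespace Attached

variable {x y z u v w : ℝ × ℝ}

lemma rotInner (h : Attached x y z u v w) : Attached y z x u v w := by
  obtain ⟨a, b, c, d, h1, h2⟩ := h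
  exact ⟨a, b, c, d, h1.trans (List.perm_append_comm (l₁ := [x]) (l₂ := [y, z])), h2⟩

lemma swapInner (h : Attached x y z u v w) : Attached y x z u v w := by
  obtain ⟨a, b, c, d, h1, h2⟩ := h
  exact ⟨a, b, c, d, h1.trans (List.Perm.swap _ _ _), h2⟩

lemma rotOuter (h : Attached x y z u v w) : Attached x y z v w u := by
  obtain ⟨a, b, c, d, h1, h2, h3⟩ := h
  refine ⟨a, b, c, d, h1, ?_, h3⟩
  rw [h2, Set.insert_comm, Set.pair_comm u w]

lemma swapOuter (h : Attached x y z u v w) : Attached x y z v u w := by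
  obtain ⟨a, b, c, d, h1, h2, h3⟩ := h
  refine ⟨a, b, c, d, h1, ?_, h3⟩
  rw [h2, Set.insert_comm]

end Attached

lemma eq_of_cr_eq_zero {u v w x : ℝ × ℝ} (h : cr u v w ≠ 0) (h₁ : cr u v x = 0)
    (h₂ : cr v w x = 0) : x = v := by
  simp only [cr] at *
  ext
  · apply mul_left_cancel₀ h
    linear_combination (w.1 - v.1) * h₁ - (v.1 - u.1) * h₂
  · apply mul_left_cancel₀ h
    linear_combination (w.2 - v.2) * h₁ - (v.2 - u.2) * h₂

/-- The coordinate form of `Iso` for a normalized container. -/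
lemma iso_normal {w : ℝ × ℝ} (h : Iso (0, 0) (1, 0) w) :
    w.1 = 1 / 2 ∨ w.1 ^ 2 + w.2 ^ 2 = 1 ∨ (w.1 - 1) ^ 2 + w.2 ^ 2 = 1 := by
  simp only [Iso, sd] at h
  rcases h with h | h | h
  · left; linarith
  · right; left; linarith
  · right; right; linarith

namespace IsMin

variable {x y z u v w : ℝ × ℝ}

lemma attached_of_shared (h : IsMin x y z x y w) : Attached x y z x y w := by
  by_cases h₁ : cr w x z = 0
  · exact ⟨x, y, z, w, List.Perm.refl _, rfl, h, h₁⟩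
  by_cases h₂ : cr y w z = 0
  · refine ⟨y, x, z, w, List.Perm.swap _ _ _, Set.insert_comm _ _ _, h.swapInner.swapOuter, ?_⟩
    rw [cr_swap, h₂, neg_zero]
  exfalso
  have h₃ := h.inner_ne
  obtain ⟨f, k, hk, hcr, hw, hu, hv, hm⟩ := h.normalize
  obtain ⟨b1, b2, b3⟩ := ins_normal hw hm.ins₃
  have e (p q r) (hne : cr p q r ≠ 0) : cr (f p) (f q) (f r) ≠ 0 := by
    rw [hcr]; exact mul_ne_zero hk hne
  have e₁ := e _ _ _ h₁
  have e₂ := e _ _ _ h₂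
  have e₃ := e _ _ _ h₃
  rw [hu] at e₁ e₃
  rw [hv] at e₂ e₃
  rw [hu, hv] at hm
  refine hm.false_of_interior hw (lt_of_le_of_ne b1 ?_) (lt_of_le_of_ne b2 e₂.symm)
    (lt_of_le_of_ne b3 e₁.symm)
  intro h0
  apply e₃
  simp [cr, ← h0]

lemma attached_of_vertex (h : IsMin u y z u v w) (hy : cr u v y = 0) (hz : cr v w z = 0) :
    Attached u y z u v w := by
  by_cases h₁ : cr v w y = 0
  · obtain rfl := eq_of_cr_eq_zero h.outer_ne hy h₁
    exact h.attached_of_shared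
  by_cases h₂ : cr w u z = 0
  · obtain rfl := eq_of_cr_eq_zero (by rw [cr_rot]; exact h.outer_ne) hz h₂
    exact h.rotInner.rotInner.rotOuter.rotOuter.attached_of_shared.rotOuter.rotInner
  exfalso
  have h₃ : cr w u y ≠ 0 := by
    intro h0
    obtain rfl := eq_of_cr_eq_zero (by rw [cr_rot, cr_rot]; exact h.outer_ne) h0 hy
    exact h.inner_ne (by simp [cr])
  have h₄ : cr u v z ≠ 0 := by
    intro h0
    obtain rfl := eq_of_cr_eq_zero h.outer_ne h0 hz
    apply h.inner_ne
    simp only [cr] at hy ⊢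
    linarith
  obtain ⟨f, k, hk, hcr, hw, hu, hv, hm⟩ := h.normalize
  have e (p q r) (hne : cr p q r ≠ 0) : cr (f p) (f q) (f r) ≠ 0 := by
    rw [hcr]; exact mul_ne_zero hk hne
  have e' (p q r) (hne : cr p q r = 0) : cr (f p) (f q) (f r) = 0 := by
    rw [hcr, hne, mul_zero]
  have e₁ := e _ _ _ h₁
  have e₂ := e _ _ _ h₂
  have e₃ := e _ _ _ h₃
  have e₄ := e _ _ _ h₄
  have ey := e' _ _ _ hy
  have ez := e' _ _ _ hz
  rw [hu] at e₂ e₃ e₄ ey hm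
  rw [hv] at e₁ e₄ ey ez
  obtain ⟨b1, b2, b3⟩ := ins_normal hw hm.ins₃
  obtain ⟨a1, a2, a3⟩ := ins_normal hw hm.ins₂
  have c2 := lt_of_le_of_ne a2 e₁.symm
  have c3 := lt_of_le_of_ne a3 e₃.symm
  have c4 := lt_of_le_of_ne b3 e₂.symm
  revert hm hw c2 c3 c4 e₄ ey ez b1
  clear * -
  generalize f w = w
  generalize f y = y
  generalize f z = z
  obtain ⟨w₁, w₂⟩ := w
  obtain ⟨y₁, y₂⟩ := y
  obtain ⟨z₁, z₂⟩ := z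
  intro hw hm e₄ ey ez b1 c2 c3 c4
  simp only [cr] at *
  obtain rfl : y₂ = 0 := by linarith
  have hy0 : 0 < y₁ := by
    have : 0 < w₂ * y₁ := by linarith
    exact (pos_iff_pos_of_mul_pos this).1 hw
  have hy1 : y₁ < 1 := by
    have : 0 < w₂ * (1 - y₁) := by linarith
    linarith [(pos_iff_pos_of_mul_pos this).1 hw]
  have hz2 : 0 < z₂ := lt_of_le_of_ne b1 (by rintro rfl; simp at e₄)
  obtain ⟨c, rfl⟩ : ∃ c, z₂ = c * w₂ := ⟨z₂ / w₂, by field_simp⟩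
  obtain rfl : z₁ = 1 + c * (w₁ - 1) := by
    apply mul_left_cancel₀ hw.ne'
    linear_combination -ez
  have hc0 : 0 < c := (pos_iff_pos_of_mul_pos hz2).2 hw
  have hc1 : c < 1 := by
    have : 0 < w₂ * (1 - c) := by linarith
    linarith [(pos_iff_pos_of_mul_pos this).1 hw]
  rcases iso_normal hm.iso with hi | hi | hi
  · exact hm.false_of_apex_far hw hy0 hy1 hc0 hc1 hi
  · exact hm.false_of_apex_shared hw hy0 hy1 hc0 hc1 hi
  · exact hm.false_of_apex_near hw hy0 hy1 hc0 hc1 hi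

lemma attached_of_apex (h : IsMin x y w u v w) (hx : cr u v x = 0) (hy : cr u v y = 0) :
    Attached x y w u v w := by
  have key : ∀ {x y u v : ℝ × ℝ}, IsMin x y w u v w → x = v → Attached x y w u v w := by
    rintro x y u v h rfl
    exact h.rotInner.rotInner.swapInner.rotOuter.attached_of_shared
      |>.swapInner.rotInner.rotOuter.rotOuter
  by_cases h₁ : cr v w x = 0
  · exact key h (eq_of_cr_eq_zero h.outer_ne hx h₁)
  by_cases h₂ : cr v w y = 0
  · exact (key h.swapInner (eq_of_cr_eq_zero h.outer_ne hy h₂)).swapInner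
  have hne : cr w u v ≠ 0 := by rw [cr_rot, cr_rot]; exact h.outer_ne
  by_cases h₃ : cr w u x = 0
  · exact (key h.swapOuter (eq_of_cr_eq_zero hne h₃ hx)).swapOuter
  by_cases h₄ : cr w u y = 0
  · exact (key h.swapInner.swapOuter (eq_of_cr_eq_zero hne h₄ hy)).swapOuter.swapInner
  exfalso
  obtain ⟨f, k, hk, hcr, hw, hu, hv, hm⟩ := h.normalize
  have e (p q r) (hne : cr p q r ≠ 0) : cr (f p) (f q) (f r) ≠ 0 := by
    rw [hcr]; exact mul_ne_zero hk hne
  have e' (p q r) (hne : cr p q r = 0) : cr (f p) (f q) (f r) = 0 := by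
    rw [hcr, hne, mul_zero]
  have e₁ := e _ _ _ h₁
  have e₂ := e _ _ _ h₂
  have e₃ := e _ _ _ h₃
  have e₄ := e _ _ _ h₄
  have ex := e' _ _ _ hx
  have ey := e' _ _ _ hy
  rw [hu] at e₃ e₄ ex ey
  rw [hv] at e₁ e₂ ex ey
  obtain ⟨-, a1, a2⟩ := ins_normal hw hm.ins₁
  obtain ⟨-, b1, b2⟩ := ins_normal hw hm.ins₂
  have c1 := lt_of_le_of_ne a1 e₁.symm
  have c2 := lt_of_le_of_ne a2 e₃.symm
  have d1 := lt_of_le_of_ne b1 e₂.symm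
  have d2 := lt_of_le_of_ne b2 e₄.symm
  revert hm hw c1 c2 d1 d2 ex ey
  clear * -
  generalize f w = w
  generalize f y = y
  generalize f x = x
  obtain ⟨w₁, w₂⟩ := w
  obtain ⟨y₁, y₂⟩ := y
  obtain ⟨x₁, x₂⟩ := x
  intro hw hm ex ey c1 c2 d1 d2
  simp only [cr] at *
  obtain rfl : y₂ = 0 := by linarith
  obtain rfl : x₂ = 0 := by linarith
  have inner {a : ℝ} (ha : 0 < w₂ * a) : 0 < a := (pos_iff_pos_of_mul_pos ha).1 hw
  have hx0 : 0 < x₁ := inner (by linarith)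
  have hx1 : 0 < 1 - x₁ := inner (by linarith)
  have hy0 : 0 < y₁ := inner (by linarith)
  have hy1 : 0 < 1 - y₁ := inner (by linarith)
  rcases iso_normal hm.iso with hi | hi | hi
  · exact hm.false_of_apex_opposite hw hx0 (by linarith) hy0 (by linarith) hi
  · exact hm.false_of_apex_side hw hx0 (by linarith) hy0 (by linarith) hi
  · refine hm.reflect.false_of_apex_side hw hx1 (by linarith) hy1 (by linarith) ?_
    simp only at hi ⊢
    linarith

lemma attached_of_two_on_side (h : IsMin x y z u v w) (hx : cr u v x = 0) (hy : cr u v y = 0) :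
    Attached x y z u v w := by
  have hvw : cr v w u ≠ 0 := by rw [cr_rot]; exact h.outer_ne
  have hwu : cr w u v ≠ 0 := by rw [cr_rot, cr_rot]; exact h.outer_ne
  have flip : ∀ {p q r : ℝ × ℝ}, cr p q r = 0 → cr q p r = 0 := by
    intro p q r hp; rw [cr_swap, hp, neg_zero]
  have corner : ∀ {u v x y : ℝ × ℝ}, IsMin x y z u v w → cr u v x = 0 → cr u v y = 0 →
      cr v w x = 0 → Attached x y z u v w := by
    intro u v x y h hx hy hvx
    obtain rfl := eq_of_cr_eq_zero h.outer_ne hx hvx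
    have hwu : cr w u x ≠ 0 := by rw [cr_rot, cr_rot]; exact h.outer_ne
    rcases h.rotOuter.exists_on_side with h' | h' | h'
    · exact absurd h' hwu
    · obtain rfl := eq_of_cr_eq_zero hwu h' hy
      exact h.swapOuter.attached_of_shared.swapOuter
    · exact (h.swapOuter.attached_of_vertex (flip hy) (flip h')).swapOuter
  rcases h.exists_on_side with h₁ | h₁ | h₁
  · exact corner h hx hy h₁
  · exact (corner h.swapInner hy hx h₁).swapInner
  rcases h.rotOuter.exists_on_side with h₂ | h₂ | h₂
  · exact (corner h.swapOuter (flip hx) (flip hy) (flip h₂)).swapOuter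
  · exact (corner h.swapInner.swapOuter (flip hy) (flip hx) (flip h₂)).swapOuter.swapInner
  · obtain rfl := eq_of_cr_eq_zero hvw h₁ h₂
    exact h.attached_of_apex hx hy

theorem attached (h : IsMin x y z u v w) : Attached x y z u v w := by
  have key : ∀ {u v w}, IsMin x y z u v w → ((cr u v x = 0 ∧ cr u v y = 0) ∨
      (cr u v y = 0 ∧ cr u v z = 0) ∨ (cr u v z = 0 ∧ cr u v x = 0)) → Attached x y z u v w := by
    rintro u v w h (⟨h₁, h₂⟩ | ⟨h₁, h₂⟩ | ⟨h₁, h₂⟩)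
    · exact h.attached_of_two_on_side h₁ h₂
    · exact (h.rotInner.attached_of_two_on_side h₁ h₂).rotInner.rotInner
    · exact (h.rotInner.rotInner.attached_of_two_on_side h₁ h₂).rotInner
  rcases h.exists_two_on_side with h' | h' | h'
  · exact key h h'
  · exact (key h.rotOuter h').rotOuter.rotOuter
  · exact (key h.rotOuter.rotOuter h').rotOuter

end IsMin

/-- The coordinates of a point of the plane. -/
def coord (P : Pt) : ℝ × ℝ := (P 0, P 1)

lemma pt_ext {P Q : Pt} (h₀ : P 0 = Q 0) (h₁ : P 1 = Q 1) : P = Q := by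
  ext i; fin_cases i <;> assumption

lemma coord_injective : Function.Injective coord := fun _ _ h =>
  pt_ext (congrArg Prod.fst h) (congrArg Prod.snd h)

lemma coord_surjective (p : ℝ × ℝ) : ∃ P : Pt, coord P = p := ⟨!₂[p.1, p.2], by simp [coord]⟩

lemma dist_eq_sqrt_sd (P Q : Pt) : dist P Q = √(sd (coord P) (coord Q)) := by
  simp [EuclideanSpace.dist_eq, Fin.sum_univ_two, sd, coord, Real.dist_eq]

lemma dist_eq_dist_iff (P Q P' Q' : Pt) :
    dist P Q = dist P' Q' ↔ sd (coord P) (coord Q) = sd (coord P') (coord Q') := by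
  rw [dist_eq_sqrt_sd, dist_eq_sqrt_sd, Real.sqrt_inj] <;> simp only [sd] <;> positivity

lemma isIsosceles_iff (S P R : Pt) :
    IsIsosceles S P R ↔ Iso (coord S) (coord P) (coord R) := by
  simp only [IsIsosceles, Iso, dist_eq_dist_iff]

lemma affineIndependent_iff (S P R : Pt) :
    AffineIndependent ℝ ![S, P, R] ↔ cr (coord S) (coord P) (coord R) ≠ 0 := by
  rw [affineIndependent_iff_not_collinear_set, not_iff_not,
    collinear_iff_of_mem (p₀ := S) (by simp)]
  constructor
  · rintro ⟨v, hv⟩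
    obtain ⟨a, rfl⟩ := hv P (by simp)
    obtain ⟨b, rfl⟩ := hv R (by simp)
    simp only [cr, coord, vadd_eq_add, PiLp.add_apply, PiLp.smul_apply, smul_eq_mul]
    ring
  · intro h
    simp only [cr, coord] at h
    by_cases hP : P = S
    · subst hP
      refine ⟨R - P, ?_⟩
      simp only [Set.mem_insert_iff, Set.mem_singleton_iff]
      rintro p (rfl | rfl | rfl)
      · exact ⟨0, by simp⟩
      · exact ⟨0, by simp⟩
      · exact ⟨1, by simp⟩
    · have hn : (P 0 - S 0) ^ 2 + (P 1 - S 1) ^ 2 ≠ 0 := by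
        intro h0
        apply hP
        apply pt_ext <;> nlinarith [sq_nonneg (P 0 - S 0), sq_nonneg (P 1 - S 1)]
      refine ⟨P - S, ?_⟩
      simp only [Set.mem_insert_iff, Set.mem_singleton_iff]
      rintro p (rfl | rfl | rfl)
      · exact ⟨0, by simp⟩
      · exact ⟨1, by simp⟩
      · refine ⟨((P 0 - S 0) * (p 0 - S 0) + (P 1 - S 1) * (p 1 - S 1)) /
          ((P 0 - S 0) ^ 2 + (P 1 - S 1) ^ 2), ?_⟩
        apply pt_ext <;>
          simp only [vadd_eq_add, PiLp.add_apply, PiLp.smul_apply, smul_eq_mul, PiLp.sub_apply] <;>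
          field_simp
        · linear_combination -(P 1 - S 1) * h
        · linear_combination (P 0 - S 0) * h

lemma mem_tri_iff {S P R : Pt} (h : cr (coord S) (coord P) (coord R) ≠ 0) (X : Pt) :
    X ∈ tri S P R ↔ Ins (coord S) (coord P) (coord R) (coord X) := by
  constructor
  · intro hX
    have hsub : tri S P R ⊆ {X | Ins (coord S) (coord P) (coord R) (coord X)} := by
      refine convexHull_min ?_ ?_
      · simp only [Set.insert_subset_iff, Set.singleton_subset_iff, Set.mem_ofPred_eq]
        have h0 := mul_self_nonneg (cr (coord S) (coord P) (coord R))
        refine ⟨⟨?_, ?_, ?_⟩, ⟨?_, ?_, ?_⟩, ⟨?_, ?_, ?_⟩⟩ <;> simp only [cr] at h0 ⊢ <;>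
          nlinarith [h0]
      · rintro X ⟨h1, h2, h3⟩ Y ⟨k1, k2, k3⟩ a b ha hb hab
        have hcr : ∀ p q : ℝ × ℝ, cr p q (coord (a • X + b • Y)) =
            a * cr p q (coord X) + b * cr p q (coord Y) := by
          intro p q
          obtain rfl := eq_sub_of_add_eq hab
          simp only [cr, coord, PiLp.add_apply, PiLp.smul_apply, smul_eq_mul]
          ring
        have hnn : ∀ k s t : ℝ, 0 ≤ k * s → 0 ≤ k * t → 0 ≤ k * (a * s + b * t) := by
          intro k s t hs ht
          rw [show k * (a * s + b * t) = a * (k * s) + b * (k * t) by ring]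
          positivity
        simp only [Set.mem_ofPred_eq, Ins, hcr]
        exact ⟨hnn _ _ _ h1 k1, hnn _ _ _ h2 k2, hnn _ _ _ h3 k3⟩
    exact hsub hX
  · rintro ⟨h1, h2, h3⟩
    have hdiv : ∀ {k s : ℝ}, 0 ≤ k * s → 0 ≤ s / k := by
      intro k s hs
      rwa [div_eq_mul_inv, mul_comm, ← div_eq_inv_mul, div_nonneg_iff, ← mul_nonneg_iff, mul_comm]
    have hsum := (convex_convexHull ℝ {S, P, R}).sum_mem (t := Finset.univ)
      (w := ![cr (coord P) (coord R) (coord X) / cr (coord S) (coord P) (coord R),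
        cr (coord R) (coord S) (coord X) / cr (coord S) (coord P) (coord R),
        cr (coord S) (coord P) (coord X) / cr (coord S) (coord P) (coord R)])
      (z := ![S, P, R]) ?_ ?_ ?_
    · refine Eq.subst (motive := (· ∈ tri S P R)) ?_ hsum
      simp only [Fin.sum_univ_three]
      apply pt_ext <;> simp <;> field_simp <;> simp only [cr, coord] <;> ring
    · intro i _
      fin_cases i
      · exact hdiv h2
      · exact hdiv h3
      · exact hdiv h1
    · simp only [Fin.sum_univ_three]
      simp
      field_simp
      simp only [cr]; ring
    · intro i _
      apply subset_convexHull
      fin_cases i <;> simp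

lemma tri_subset_tri_iff {A B C S P R : Pt} (h : cr (coord S) (coord P) (coord R) ≠ 0) :
    tri A B C ⊆ tri S P R ↔ Ins (coord S) (coord P) (coord R) (coord A) ∧
      Ins (coord S) (coord P) (coord R) (coord B) ∧
      Ins (coord S) (coord P) (coord R) (coord C) := by
  simp only [← mem_tri_iff h]
  rw [tri, (show Convex ℝ (tri S P R) from convex_convexHull ℝ _).convexHull_subset_iff]
  simp [Set.insert_subset_iff]

/-- The area of the triangle with vertices `(0, 0)`, `(1, 0)`, `(0, 1)`. -/
def unitArea : ℝ := triArea 0 (EuclideanSpace.single 0 1) (EuclideanSpace.single 1 1)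

lemma unitArea_pos : 0 < unitArea := by
  have hai : AffineIndependent ℝ
      ![(0 : Pt), EuclideanSpace.single 0 1, EuclideanSpace.single 1 1] := by
    rw [affineIndependent_iff]; simp [cr, coord]
  refine ENNReal.toReal_pos ?_ ?_
  · refine (MeasureTheory.Measure.measure_pos_of_nonempty_interior _ ?_).ne'
    have : affineSpan ℝ (Set.range
        ![(0 : Pt), EuclideanSpace.single 0 1, EuclideanSpace.single 1 1]) = ⊤ := by
      rw [hai.affineSpan_eq_top_iff_card_eq_finrank_add_one]; simp
    rw [tri, interior_convexHull_nonempty_iff_affineSpan_eq_top, ← this]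
    simp only [Matrix.range_cons, Matrix.range_empty, Set.union_empty, Set.singleton_union]
  · exact (Set.Finite.isCompact_convexHull ℝ (Set.toFinite _)).measure_lt_top.ne

lemma triArea_eq (S P R : Pt) :
    triArea S P R = |cr (coord S) (coord P) (coord R)| * unitArea := by
  let b := (EuclideanSpace.basisFun (Fin 2) ℝ).toBasis
  let M : Matrix (Fin 2) (Fin 2) ℝ := !![P 0 - S 0, R 0 - S 0; P 1 - S 1, R 1 - S 1]
  let L : Pt →ₗ[ℝ] Pt := Matrix.toLin b b M
  have hdet : LinearMap.det L = cr (coord S) (coord P) (coord R) := by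
    simp only [L, LinearMap.det_toLin, M, Matrix.det_fin_two_of, cr, coord]
    ring
  have e0 : L (EuclideanSpace.single 0 1) = P - S := by
    have := Matrix.toLin_self b b M 0
    simp only [b, OrthonormalBasis.coe_toBasis, EuclideanSpace.basisFun_apply] at this
    rw [this]
    apply pt_ext <;> simp [Fin.sum_univ_two, M]
  have e1 : L (EuclideanSpace.single 1 1) = R - S := by
    have := Matrix.toLin_self b b M 1
    simp only [b, OrthonormalBasis.coe_toBasis, EuclideanSpace.basisFun_apply] at this
    rw [this]
    apply pt_ext <;> simp [Fin.sum_univ_two, M]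
  have himg : tri S P R =
      (fun X => S + X) '' (L '' tri 0 (EuclideanSpace.single 0 1) (EuclideanSpace.single 1 1)) := by
    have h1 : L '' tri 0 (EuclideanSpace.single 0 1) (EuclideanSpace.single 1 1) =
        tri 0 (P - S) (R - S) := by
      rw [tri, LinearMap.image_convexHull, tri, Set.image_insert_eq, Set.image_pair, map_zero,
        e0, e1]
    have h2 := convexHull_vadd (𝕜 := ℝ) S ({0, P - S, R - S} : Set Pt)
    rw [h1]
    simpa [tri, ← Set.image_vadd, Set.image_insert_eq, Set.image_pair] using h2
  have hvol : volume (tri S P R) = ENNReal.ofReal |LinearMap.det L| *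
      volume (tri (0 : Pt) (EuclideanSpace.single 0 1) (EuclideanSpace.single 1 1)) := by
    rw [himg, Set.image_add_left, measure_preimage_add, Measure.addHaar_image_linearMap]
  rw [triArea, hvol, ENNReal.toReal_mul, ENNReal.toReal_ofReal (abs_nonneg _), hdet]
  rfl

lemma isMin_of_isMinIsoscelesContainer {A B C S P R : Pt} (hABC : AffineIndependent ℝ ![A, B, C])
    (h : IsMinIsoscelesContainer A B C S P R) :
    IsMin (coord A) (coord B) (coord C) (coord S) (coord P) (coord R) := by
  obtain ⟨⟨hi, hiso, hsub⟩, hle⟩ := h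
  rw [affineIndependent_iff] at hi hABC
  obtain ⟨h1, h2, h3⟩ := (tri_subset_tri_iff hi).1 hsub
  refine ⟨hABC, hi, (isIsosceles_iff _ _ _).1 hiso, h1, h2, h3, ?_⟩
  intro p q r h0 hiso' hA hB hC
  obtain ⟨p, rfl⟩ := coord_surjective p
  obtain ⟨q, rfl⟩ := coord_surjective q
  obtain ⟨r, rfl⟩ := coord_surjective r
  have := hle p q r ⟨(affineIndependent_iff _ _ _).2 h0, (isIsosceles_iff _ _ _).2 hiso',
    (tri_subset_tri_iff h0).2 ⟨hA, hB, hC⟩⟩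
  rw [triArea_eq, triArea_eq] at this
  exact le_of_mul_le_mul_right this unitArea_pos

/-- A minimum area isosceles container is of the form `X Y W` for two vertices `X`, `Y` of the
triangle, and the third vertex `Z` of the triangle lies on the side `X W`. -/
theorem exists_vertices {A B C S P R : Pt} (hABC : AffineIndependent ℝ ![A, B, C])
    (h : IsMinIsoscelesContainer A B C S P R) :
    ∃ X Y Z W : Pt, ∃ τ : ℝ, [X, Y, Z].Perm [A, B, C] ∧ tri S P R = tri X Y W ∧
      IsIsosceles X Y W ∧ 0 < τ ∧ τ ≤ 1 ∧ Z - X = τ • (W - X) := by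
  obtain ⟨a, b, c, d, hperm, hset, hmin, h0⟩ :=
    (isMin_of_isMinIsoscelesContainer hABC h).attached
  obtain ⟨X, rfl⟩ := coord_surjective a
  obtain ⟨Y, rfl⟩ := coord_surjective b
  obtain ⟨Z, rfl⟩ := coord_surjective c
  obtain ⟨W, rfl⟩ := coord_surjective d
  obtain ⟨hin, hout, hiso, -, -, ⟨k1, k2, -⟩, -⟩ := hmin
  refine ⟨X, Y, Z, W, cr (coord X) (coord Y) (coord Z) / cr (coord X) (coord Y) (coord W),
    (List.map_perm_map_iff coord_injective).1 hperm, ?_, (isIsosceles_iff _ _ _).2 hiso, ?_, ?_, ?_⟩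
  · have : coord '' {X, Y, W} = coord '' {S, P, R} := by
      simpa only [Set.image_insert_eq, Set.image_singleton] using hset
    rw [tri, tri, Set.image_injective.2 coord_injective this]
  · have := lt_of_le_of_ne k1 (mul_ne_zero hout hin).symm
    rcases pos_and_pos_or_neg_and_neg_of_mul_pos this with ⟨s, t⟩ | ⟨s, t⟩
    · exact div_pos t s
    · exact div_pos_of_neg_of_neg t s
  · have hsum : cr (coord X) (coord Y) (coord Z) =
        cr (coord X) (coord Y) (coord W) - cr (coord Y) (coord W) (coord Z) := by
      have : cr (coord X) (coord Y) (coord Z) + cr (coord Y) (coord W) (coord Z) +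
          cr (coord W) (coord X) (coord Z) = cr (coord X) (coord Y) (coord W) := by
        simp only [cr]; ring
      linarith
    have hnn : 0 ≤ cr (coord Y) (coord W) (coord Z) / cr (coord X) (coord Y) (coord W) := by
      rcases lt_or_gt_of_ne hout with s | s
      · exact div_nonneg_of_nonpos (by nlinarith) s.le
      · exact div_nonneg (by nlinarith) s.le
    rw [hsum, sub_div, div_self hout]
    linarith
  · apply pt_ext <;> simp only [PiLp.sub_apply, PiLp.smul_apply, smul_eq_mul] <;> field_simp <;>
      simp only [cr, coord] at h0 ⊢
    · linear_combination (Y 0 - X 0) * h0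
    · linear_combination (Y 1 - X 1) * h0

lemma perm_three {α : Type*} {x y z a b c : α} (h : [x, y, z].Perm [a, b, c]) :
    (x = a ∧ y = b ∧ z = c) ∨ (x = a ∧ y = c ∧ z = b) ∨ (x = b ∧ y = a ∧ z = c) ∨
      (x = b ∧ y = c ∧ z = a) ∨ (x = c ∧ y = a ∧ z = b) ∨ (x = c ∧ y = b ∧ z = a) := by
  have := List.mem_permutations'.2 h
  simp [List.permutations'] at this
  tauto

lemma tri_rot (X Y W : Pt) : tri X Y W = tri Y W X := by
  rw [tri, tri, Set.insert_comm, Set.pair_comm X W]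

lemma tri_swap (X Y W : Pt) : tri X Y W = tri Y X W := by
  rw [tri, tri, Set.insert_comm]

end IsoscelesContainer

/-- every minimum area isosceles container of a triangle `A B C`
with side lengths `a < b < c` equals (as a convex set) one of the nine special
containers: first kind (`AB'C`, `ABC'`, `ABC''`), second kind
(`AB₁C`, `ABC₁`, `ABC₂`), or third kind (`ĀBC`, `AB̄C`, `ABC̄`). -/
theorem statement1 (A B C S P R : Pt)
    (hABC : AffineIndependent ℝ ![A, B, C])
    (hab : dist B C < dist C A) (hbc : dist C A < dist A B)
    (hmin : IsMinIsoscelesContainer A B C S P R) :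
    (∃ B' : Pt, OnRay C B B' ∧ dist C B' = dist C A ∧
      tri S P R = tri A B' C) ∨
    (∃ C' : Pt, OnRay A C C' ∧ dist A C' = dist A B ∧
      tri S P R = tri A B C') ∨
    (∃ C'' : Pt, OnRay B C C'' ∧ dist B C'' = dist A B ∧
      tri S P R = tri A B C'') ∨
    (∃ B₁ : Pt, OnRay A B B₁ ∧ B₁ ≠ A ∧ dist B₁ C = dist C A ∧
      tri S P R = tri A B₁ C) ∨
    (∃ C₁ : Pt, OnRay A C C₁ ∧ C₁ ≠ A ∧ dist B C₁ = dist A B ∧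
      tri S P R = tri A B C₁) ∨
    (∃ C₂ : Pt, OnRay B C C₂ ∧ C₂ ≠ B ∧ dist A C₂ = dist A B ∧
      tri S P R = tri A B C₂) ∨
    (∃ Abar : Pt, Abar ∈ line[ℝ, A, C] ∧ dist Abar B = dist Abar C ∧
      tri S P R = tri Abar B C) ∨
    (∃ Bbar : Pt, Bbar ∈ line[ℝ, B, C] ∧ dist Bbar A = dist Bbar C ∧
      tri S P R = tri A Bbar C) ∨
    (∃ Cbar : Pt, Cbar ∈ line[ℝ, B, C] ∧ dist Cbar A = dist Cbar B ∧
      tri S P R = tri A B Cbar) := by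
  obtain ⟨X, Y, Z, W, τ, hperm, htri, hiso, hτ0, hτ1, hZ⟩ :=
    IsoscelesContainer.exists_vertices hABC hmin
  have hray : OnRay X Z W := by
    rw [OnRay, hZ]; exact SameRay.sameRay_nonneg_smul_left _ hτ0.le
  have hW : W = AffineMap.lineMap X Z τ⁻¹ := by
    rw [AffineMap.lineMap_apply, vsub_eq_sub, hZ, smul_smul, inv_mul_cancel₀ hτ0.ne']
    simp
  have hline : W ∈ line[ℝ, X, Z] := hW ▸ AffineMap.lineMap_mem_affineSpan_pair _ _ _
  have hWX : Z ≠ X → W ≠ X := by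
    rintro hne rfl
    rw [sub_self, smul_zero, sub_eq_zero] at hZ
    exact hne hZ
  have hXZ : dist X Z = τ * dist X W := by
    rw [dist_comm, dist_eq_norm, hZ, norm_smul, ← dist_eq_norm, dist_comm W,
      Real.norm_of_nonneg hτ0.le]
  have hZW : dist Z W = (1 - τ) * dist X W := by
    rw [dist_eq_norm, show Z - W = (1 - τ) • (X - W) by
      rw [sub_eq_iff_eq_add.1 hZ]; module, norm_smul,
      Real.norm_of_nonneg (sub_nonneg.2 hτ1), ← dist_eq_norm]
  have hYZ : dist Y Z ≤ (1 - τ) * dist Y X + τ * dist Y W := by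
    rw [dist_eq_norm, show Y - Z = (1 - τ) • (Y - X) + τ • (Y - W) by
      rw [sub_eq_iff_eq_add.1 hZ]; module]
    refine (norm_add_le _ _).trans_eq ?_
    rw [norm_smul, norm_smul, Real.norm_of_nonneg hτ0.le,
      Real.norm_of_nonneg (sub_nonneg.2 hτ1), ← dist_eq_norm, ← dist_eq_norm]
  have hXW : 0 ≤ dist X W := dist_nonneg
  have hCA : 0 < dist C A := dist_nonneg.trans_lt hab
  have hAB : 0 < dist A B := hCA.trans hbc
  rw [IsIsosceles, dist_comm W X, dist_comm Y W] at hiso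
  rw [htri]
  rcases hiso with hi | hi | hi
  · have hle : dist X Z ≤ dist Y Z := by
      have := dist_triangle W Z Y
      rw [dist_comm W Z, dist_comm Z Y] at this
      linarith
    rcases IsoscelesContainer.perm_three hperm with ⟨rfl, rfl, rfl⟩ | ⟨rfl, rfl, rfl⟩ |
      ⟨rfl, rfl, rfl⟩ | ⟨rfl, rfl, rfl⟩ | ⟨rfl, rfl, rfl⟩ | ⟨rfl, rfl, rfl⟩
    · linarith [dist_comm X Z]
    · linarith [dist_comm Y Z]
    · iterate 8 right
      exact ⟨W, hline, by rw [hi, dist_comm], IsoscelesContainer.tri_swap _ _ _⟩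
    · linarith [dist_comm X Z]
    · iterate 7 right
      left
      exact ⟨W, Set.pair_comm X Z ▸ hline, by rw [hi, dist_comm], IsoscelesContainer.tri_rot _ _ _⟩
    · iterate 6 right
      left
      refine ⟨W, Set.pair_comm X Z ▸ hline, by rw [hi, dist_comm], ?_⟩
      rw [IsoscelesContainer.tri_swap, IsoscelesContainer.tri_rot, IsoscelesContainer.tri_rot]
  · have hle : dist X Z ≤ dist X Y := by rw [hXZ, ← hi]; exact mul_le_of_le_one_left hXW hτ1
    rcases IsoscelesContainer.perm_three hperm with ⟨rfl, rfl, rfl⟩ | ⟨rfl, rfl, rfl⟩ |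
      ⟨rfl, rfl, rfl⟩ | ⟨rfl, rfl, rfl⟩ | ⟨rfl, rfl, rfl⟩ | ⟨rfl, rfl, rfl⟩
    · right
      left
      exact ⟨W, hray, hi, rfl⟩
    · linarith [dist_comm X Y]
    · iterate 2 right
      left
      exact ⟨W, hray, by rw [hi, dist_comm], IsoscelesContainer.tri_swap _ _ _⟩
    · linarith [dist_comm X Z]
    · left
      exact ⟨W, hray, hi, IsoscelesContainer.tri_rot _ _ _⟩
    · linarith [dist_comm Y X]
  · have hle : dist Y Z ≤ dist X Y := by
      rw [dist_comm Y X, dist_comm Y W, ← hi] at hYZ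
      linarith
    rcases IsoscelesContainer.perm_three hperm with ⟨rfl, rfl, rfl⟩ | ⟨rfl, rfl, rfl⟩ |
      ⟨rfl, rfl, rfl⟩ | ⟨rfl, rfl, rfl⟩ | ⟨rfl, rfl, rfl⟩ | ⟨rfl, rfl, rfl⟩
    · iterate 4 right
      left
      exact ⟨W, hray, hWX (dist_pos.1 hCA), by rw [hi, dist_comm], rfl⟩
    · iterate 3 right
      left
      refine ⟨W, hray, hWX (dist_pos.1 hAB).symm, by rw [← hi, dist_comm], ?_⟩
      rw [IsoscelesContainer.tri_swap, IsoscelesContainer.tri_rot]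
    · iterate 5 right
      left
      refine ⟨W, hray, hWX ?_, by rw [dist_comm Y W, ← hi, dist_comm],
        IsoscelesContainer.tri_swap _ _ _⟩
      rintro rfl
      linarith [dist_comm Y Z]
    · linarith [dist_comm X Y, dist_comm Y Z]
    · linarith [dist_comm X Y, dist_comm Y Z]
    · linarith [dist_comm X Y, dist_comm Y Z]
end
end

section
/- Let ABC be a triangle with side lengths a < b < c, and let T' be a minimum area isosceles container for ABC. If T' is an acute triangle, then T' equals (as a convex set) one of the special containers of the first kind AB'C, ABC', ABC''. -/
open EuclideanGeometry MeasureTheory Real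

noncomputable section

/-- In the oblique coordinates `(x, y) ↦ S + x (P - S) + y (R - S)` attached to an isosceles
triangle with apex `S`, unit legs and apex cosine `c`, no isosceles triangle containing the three
points `(x i, y i)` has a smaller area than the triangle `S P R` itself. -/
def CoordMin (c : ℝ) (x y : Fin 3 → ℝ) : Prop :=
  ∀ s₁ s₂ a₁ a₂ b₁ b₂ : ℝ,
    a₁ ^ 2 + a₂ ^ 2 + 2 * c * (a₁ * a₂) = b₁ ^ 2 + b₂ ^ 2 + 2 * c * (b₁ * b₂) →
    a₁ * b₂ - a₂ * b₁ ≠ 0 →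
    (∀ i, ∃ u v : ℝ, 0 ≤ u ∧ 0 ≤ v ∧ u + v ≤ 1 ∧
      x i = s₁ + u * a₁ + v * b₁ ∧ y i = s₂ + u * a₂ + v * b₂) →
    1 ≤ |a₁ * b₂ - a₂ * b₁|

namespace CoordMin

variable {c : ℝ} {x y : Fin 3 → ℝ}

lemma swap (h : CoordMin c x y) : CoordMin c y x := by
  intro s₁ s₂ a₁ a₂ b₁ b₂ hq hd hm
  have := h s₂ s₁ a₂ a₁ b₂ b₁ (by linarith) (fun h0 => hd (by linarith)) (fun i => by
    obtain ⟨u, v, hu, hv, huv, h1, h2⟩ := hm i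
    exact ⟨u, v, hu, hv, huv, h2, h1⟩)
  rwa [abs_sub_comm]

/-- Some contained point lies on the leg `S P`, apart from `P`: otherwise slide the apex inward
along the other leg. -/
lemma exists_on_leg (h : CoordMin c x y) (hc0 : 0 < c) (hc1 : c < 1)
    (hx : ∀ i, 0 ≤ x i) (hy : ∀ i, 0 ≤ y i) (hxy : ∀ i, x i + y i ≤ 1) :
    ∃ i, y i = 0 ∧ x i < 1 := by
  by_contra! hne
  have key : ∀ i, ∃ m : ℝ, 0 < m ∧ ∀ s, 0 ≤ s → s ≤ m → s * (1 - x i) ≤ y i := by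
    intro i
    rcases (hy i).eq_or_lt with h0 | h0
    · exact ⟨1, one_pos, fun s _ _ => by nlinarith [hne i h0.symm, hxy i]⟩
    · exact ⟨y i, h0, fun s _ _ => by nlinarith [hx i, hxy i]⟩
  choose m hm0 hm using key
  obtain ⟨s, hs0, hsc, hsm⟩ : ∃ s : ℝ, 0 < s ∧ s ≤ c ∧ ∀ i, s ≤ m i := by
    refine ⟨min c (min (m 0) (min (m 1) (m 2))), ?_, min_le_left _ _, ?_⟩
    · simp [hm0, hc0]
    · intro i; fin_cases i <;> simp
  set L := √(1 + s ^ 2 - 2 * c * s) with hL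
  have hpos : 0 < 1 + s ^ 2 - 2 * c * s := by nlinarith
  have hL0 : 0 < L := Real.sqrt_pos.2 hpos
  have hL2 : L ^ 2 = 1 + s ^ 2 - 2 * c * s := Real.sq_sqrt hpos.le
  have hL1 : L < 1 := by nlinarith
  have hLs : 1 - s ≤ L := by
    apply Real.le_sqrt_of_sq_le; nlinarith
  have := h 0 s 1 (-s) 0 L (by nlinarith) (by simpa using hL0.ne') (fun i => by
    refine ⟨x i, (y i - s * (1 - x i)) / L, hx i,
      div_nonneg (by linarith [hm i s hs0.le (hsm i)]) hL0.le, ?_, by ring, ?_⟩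
    · have : (y i - s * (1 - x i)) / L ≤ 1 - x i := by
        rw [div_le_iff₀ hL0]
        nlinarith [hxy i, hy i]
      linarith
    · field_simp; ring)
  simp only [one_mul, mul_zero, sub_zero, abs_of_pos hL0] at this
  linarith

/-- Some contained point lies on the base. -/
lemma exists_on_base (h : CoordMin c x y)
    (hx : ∀ i, 0 ≤ x i) (hy : ∀ i, 0 ≤ y i) (hxy : ∀ i, x i + y i ≤ 1) :
    ∃ i, x i + y i = 1 := by
  by_contra! hne
  have hlt : ∀ i, x i + y i < 1 := fun i => lt_of_le_of_ne (hxy i) (hne i)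
  obtain ⟨m, hm0, hm1, hm⟩ : ∃ m : ℝ, 0 < m ∧ m < 1 ∧ ∀ i, x i + y i ≤ m := by
    refine ⟨max (1 / 2) (max (x 0 + y 0) (max (x 1 + y 1) (x 2 + y 2))), ?_, ?_, ?_⟩
    · simp
    · simp only [max_lt_iff]
      exact ⟨by norm_num, hlt 0, hlt 1, hlt 2⟩
    · intro i; fin_cases i <;> simp
  have := h 0 0 m 0 0 m (by ring) (by simp [hm0.ne']) (fun i =>
    ⟨x i / m, y i / m, div_nonneg (hx i) hm0.le, div_nonneg (hy i) hm0.le,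
      by rw [← add_div, div_le_one hm0]; exact hm i, by field_simp; ring, by field_simp; ring⟩)
  rw [mul_zero, sub_zero, abs_of_pos (by positivity)] at this
  nlinarith

/-- If one contained point is the apex, then the farther of the other two is a base vertex and the
remaining one lies on the opposite leg. -/
lemma of_apex (h : CoordMin c x y) (hc0 : 0 < c) (hc1 : c < 1)
    (hx : ∀ i, 0 ≤ x i) (hy : ∀ i, 0 ≤ y i) (hxy : ∀ i, x i + y i ≤ 1) {i j k : Fin 3}
    (hijk : ∀ l, l = i ∨ l = j ∨ l = k) (hxi : x i = 0) (hyi : y i = 0)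
    (hd : x j * y k - y j * x k ≠ 0)
    (hle : x k ^ 2 + y k ^ 2 + 2 * c * (x k * y k) ≤ x j ^ 2 + y j ^ 2 + 2 * c * (x j * y j)) :
    (x j = 1 ∧ y j = 0 ∧ x k = 0) ∨ (x j = 0 ∧ y j = 1 ∧ y k = 0) := by
  have hxj := hx j; have hyj := hy j; have hxk := hx k; have hyk := hy k; have hj := hxy j
  set q := x k ^ 2 + y k ^ 2 + 2 * c * (x k * y k) with hq
  set p := x j ^ 2 + y j ^ 2 + 2 * c * (x j * y j) with hp
  set D := x j * y k - y j * x k with hD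
  have hq0 : 0 < q := by
    rcases hxk.eq_or_lt with h0 | h0
    · rcases hyk.eq_or_lt with h1 | h1
      · exact absurd (by rw [hD, ← h0, ← h1]; ring) hd
      · positivity
    · positivity
  have hp0 : 0 < p := hq0.trans_le hle
  set r := √(p / q) with hr
  have hr2 : r ^ 2 = p / q := Real.sq_sqrt (by positivity)
  have hr0 : 0 < r := Real.sqrt_pos.2 (by positivity)
  have hr1 : 1 ≤ r := Real.one_le_sqrt.2 ((one_le_div hq0).2 hle)
  have hrq : r ^ 2 * q = p := by rw [hr2]; field_simp
  have hdet : x j * (r * y k) - y j * (r * x k) = r * D := by rw [hD]; ring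
  have h1 := h 0 0 (x j) (y j) (r * x k) (r * y k)
    (by rw [← hp, ← hrq, hq]; ring) (by rw [hdet]; exact mul_ne_zero hr0.ne' hd) (fun l => by
      rcases hijk l with rfl | rfl | rfl
      · exact ⟨0, 0, le_rfl, le_rfl, by simp, by simp [hxi], by simp [hyi]⟩
      · exact ⟨1, 0, by simp, le_rfl, by simp, by simp, by simp⟩
      · exact ⟨0, r⁻¹, le_rfl, by positivity, by simpa using inv_le_one_of_one_le₀ hr1,
          by field_simp; ring, by field_simp; ring⟩)
  rw [hdet] at h1
  have h2 : 1 ≤ (r * D) ^ 2 := by rw [← sq_abs]; exact one_le_pow₀ h1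
  have h3 : q ≤ p * D ^ 2 := by
    have : q * 1 ≤ q * (r * D) ^ 2 := mul_le_mul_of_nonneg_left h2 hq0.le
    calc q ≤ q * (r * D) ^ 2 := by linarith
      _ = p * D ^ 2 := by rw [← hrq]; ring
  have hp1 : p = (x j + y j) ^ 2 - 2 * (1 - c) * (x j * y j) := by rw [hp]; ring
  have hxyj : 0 ≤ x j * y j := by positivity
  have hsq : (x j + y j) ^ 2 ≤ 1 := pow_le_one₀ (by linarith) hj
  have hple : p ≤ 1 := by
    have : 0 ≤ (1 - c) * (x j * y j) := mul_nonneg (by linarith) hxyj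
    linarith
  have hgram : p * q - D ^ 2 = (x j * x k + y j * y k) ^ 2
      + 2 * c * ((x j * x k + y j * y k) * (x j * y k + x k * y j))
      + 4 * c ^ 2 * ((x j * x k) * (y j * y k)) := by
    rw [hp, hq, hD]; ring
  have hDle : (x j * x k + y j * y k) ^ 2 ≤ p * q - D ^ 2 := by
    rw [hgram]
    have e1 : 0 ≤ 2 * c * ((x j * x k + y j * y k) * (x j * y k + x k * y j)) := by positivity
    have e2 : 0 ≤ 4 * c ^ 2 * ((x j * x k) * (y j * y k)) := by positivity
    linarith
  have hB2 := sq_nonneg (x j * x k + y j * y k)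
  have h4 : q ≤ p * p * q := by
    have : p * D ^ 2 ≤ p * (p * q) := mul_le_mul_of_nonneg_left (by linarith) hp0.le
    linarith
  have h5 : 1 ≤ p := by
    by_contra! hlt
    have : p * p < 1 := by nlinarith
    linarith [mul_lt_mul_of_pos_right this hq0]
  have hpe : p = 1 := le_antisymm hple h5
  rw [hpe] at h3 hDle
  have hB0 : x j * x k + y j * y k = 0 := pow_eq_zero_iff two_ne_zero |>.1 (by linarith)
  have hxyj0 : x j * y j = 0 := by
    have : (1 - c) * (x j * y j) ≤ 0 := by linarith
    exact le_antisymm (nonpos_of_mul_nonpos_right this (by linarith)) hxyj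
  rcases mul_eq_zero.1 hxyj0 with h0 | h0
  · right
    have : y j = 1 := by
      rw [hpe, h0] at hp
      exact (pow_eq_one_iff_of_nonneg hyj two_ne_zero).1 (by linarith)
    refine ⟨h0, this, ?_⟩
    rw [h0, this] at hB0; linarith
  · left
    have : x j = 1 := by
      rw [hpe, h0] at hp
      exact (pow_eq_one_iff_of_nonneg hxj two_ne_zero).1 (by linarith)
    refine ⟨this, h0, ?_⟩
    rw [h0, this] at hB0; linarith

/-- The contained points cannot be a base vertex together with one interior point of each leg. -/
lemma false_of_base_vertex (h : CoordMin c x y) (hc0 : 0 < c) (hc1 : c < 1) {i j k : Fin 3}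
    (hijk : ∀ l, l = i ∨ l = j ∨ l = k) (hyi : y i = 0) (hxi0 : 0 < x i) (hxi1 : x i < 1)
    (hxj : x j = 0) (hyj0 : 0 < y j) (hyj1 : y j < 1) (hxk : x k = 1) (hyk : y k = 0) :
    False := by
  set a := x i with ha
  set b := y j with hb
  rcases le_or_gt (2 * b) c with hbc | hbc
  · have hN : 0 < 1 + b ^ 2 - 2 * c * b := by nlinarith
    set N := √(1 + b ^ 2 - 2 * c * b) with hNdef
    have hN2 : N ^ 2 = 1 + b ^ 2 - 2 * c * b := Real.sq_sqrt hN.le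
    have hN0 : 0 < N := Real.sqrt_pos.2 hN
    have hN1 : N < 1 := by nlinarith
    have hNb : b < N := by nlinarith
    set m := max N (1 - a) with hm
    have hm1 : m < 1 := max_lt hN1 (by linarith)
    have hmN : N ≤ m := le_max_left _ _
    have hma : 1 - a ≤ m := le_max_right _ _
    have hm0 : 0 < m := hN0.trans_le hmN
    have hdet : -m * (m / N * b) - 0 * (m / N * -1) = -(m ^ 2 * b / N) := by field_simp; ring
    have h1 := h 1 0 (-m) 0 (m / N * -1) (m / N * b)
      (by field_simp; rw [hN2]; ring) (by rw [hdet]; simp [hm0.ne', hN0.ne', hyj0.ne'])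
      (fun l => by
        rcases hijk l with rfl | rfl | rfl
        · exact ⟨(1 - a) / m, 0, div_nonneg (by linarith) hm0.le, le_rfl,
            by rw [add_zero, div_le_one hm0]; exact hma, by rw [← ha]; field_simp; ring,
            by rw [hyi]; simp⟩
        · exact ⟨0, N / m, le_rfl, by positivity, by rw [zero_add, div_le_one hm0]; exact hmN,
            by rw [hxj]; field_simp; ring, by rw [← hb]; field_simp; ring⟩
        · exact ⟨0, 0, le_rfl, le_rfl, by simp, by simp [hxk], by simp [hyk]⟩)
    rw [hdet, abs_neg, abs_of_pos (by positivity), le_div_iff₀ hN0] at h1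
    nlinarith
  · obtain ⟨s, hs0, hsa, hs1, hs2⟩ : ∃ s : ℝ, 0 < s ∧ s ≤ a ∧ 3 * b * s < 2 * b - c ∧
        2 * s ≤ 1 - b ^ 2 := by
      refine ⟨min a (min ((2 * b - c) / (6 * b)) ((1 - b ^ 2) / 2)), ?_, min_le_left _ _, ?_, ?_⟩
      · have : 0 < 1 - b ^ 2 := by nlinarith
        have : 0 < 2 * b - c := by linarith
        simp only [lt_min_iff]
        refine ⟨hxi0, ?_, ?_⟩ <;> positivity
      · have : min a (min ((2 * b - c) / (6 * b)) ((1 - b ^ 2) / 2)) ≤ (2 * b - c) / (6 * b) :=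
          (min_le_right _ _).trans (min_le_left _ _)
        rw [le_div_iff₀ (by positivity)] at this
        nlinarith
      · have : min a (min ((2 * b - c) / (6 * b)) ((1 - b ^ 2) / 2)) ≤ (1 - b ^ 2) / 2 :=
          (min_le_right _ _).trans (min_le_right _ _)
        linarith
    have hs : s < 1 := by linarith
    have hN : 0 < s ^ 2 + b ^ 2 - 2 * c * s * b := by
      nlinarith [mul_pos hs0 hyj0, sq_nonneg (s - b)]
    set N := √(s ^ 2 + b ^ 2 - 2 * c * s * b) with hNdef
    have hN2 : N ^ 2 = s ^ 2 + b ^ 2 - 2 * c * s * b := Real.sq_sqrt hN.le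
    have hN0 : 0 < N := Real.sqrt_pos.2 hN
    have hNs : N ≤ 1 - s := by
      apply Real.sqrt_le_iff.2 ⟨by linarith, ?_⟩
      nlinarith [mul_pos (mul_pos hc0 hs0) hyj0]
    have hs' : 0 < 1 - s := by linarith
    have hdet : (1 - s) * ((1 - s) / N * b) - 0 * ((1 - s) / N * -s) = (1 - s) ^ 2 * b / N := by
      field_simp; ring
    have h1 := h s 0 (1 - s) 0 ((1 - s) / N * -s) ((1 - s) / N * b)
      (by field_simp; rw [hN2]; ring) (by rw [hdet]; positivity)
      (fun l => by
        rcases hijk l with rfl | rfl | rfl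
        · exact ⟨(a - s) / (1 - s), 0, div_nonneg (by linarith) hs'.le, le_rfl,
            by rw [add_zero, div_le_one hs']; linarith, by rw [← ha]; field_simp; ring,
            by rw [hyi]; simp⟩
        · exact ⟨0, N / (1 - s), le_rfl, by positivity,
            by rw [zero_add, div_le_one hs']; exact hNs,
            by rw [hxj]; field_simp; ring, by rw [← hb]; field_simp; ring⟩
        · exact ⟨1, 0, by simp, le_rfl, by simp, by rw [hxk]; ring, by simp [hyk]⟩)
    rw [hdet, abs_of_pos (by positivity), le_div_iff₀ hN0, one_mul] at h1
    have h2 : N ^ 2 ≤ ((1 - s) ^ 2 * b) ^ 2 := pow_le_pow_left₀ hN0.le h1 2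
    have h3 : (1 - s) ^ 4 ≤ 1 - 4 * s + 6 * s ^ 2 := by
      nlinarith [pow_pos hs0 3]
    have h4 : (1 - s) ^ 4 * b ^ 2 ≤ (1 - 4 * s + 6 * s ^ 2) * b ^ 2 :=
      mul_le_mul_of_nonneg_right h3 (sq_nonneg b)
    have h5 : 2 * s * b * (2 * b - c - 3 * b * s) ≤ 0 := by nlinarith
    have h6 : 0 < 2 * s * b * (2 * b - c - 3 * b * s) :=
      mul_pos (by positivity) (by linarith)
    linarith

/-- The contained points cannot be interior points of the three sides: a small rotation combined
with a contraction gives a smaller similar container. -/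
lemma false_of_interior (h : CoordMin c x y) (hc0 : 0 < c) (hc1 : c < 1) {i j k : Fin 3}
    (hijk : ∀ l, l = i ∨ l = j ∨ l = k) (hyi : y i = 0) (hxi0 : 0 < x i) (hxi1 : x i < 1)
    (hxj : x j = 0) (hyj0 : 0 < y j) (hyj1 : y j < 1) (hk : x k + y k = 1) (hxk : 0 < x k)
    (hyk : 0 < y k) : False := by
  set a := x i with ha
  set b := y j with hb
  set e := x k with he
  have hyk' : y k = 1 - e := by linarith
  rw [hyk'] at hyk
  set κ := (2 * e - 1) * c + 1 - 2 * e - b + a with hκ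
  have he1 : e < 1 := by linarith
  have hκ1 : |κ| ≤ 4 := by
    rw [abs_le]; constructor <;> nlinarith [mul_pos hxk hc0, mul_pos hyk hc0]
  obtain ⟨m, hm0, hm1, hm2, hm3, hm4, hm5, hm6⟩ : ∃ m : ℝ, 0 < m ∧ m ≤ a ∧ m ≤ 1 - a ∧ m ≤ b ∧
      m ≤ 1 - b ∧ m ≤ e ∧ m ≤ 1 - e := by
    refine ⟨min a (min (1 - a) (min b (min (1 - b) (min e (1 - e))))), ?_, ?_⟩
    · simp only [lt_min_iff]
      exact ⟨hxi0, by linarith, hyj0, by linarith, hxk, hyk⟩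
    · simp
  obtain ⟨t, ht0, htm, htκ⟩ : ∃ t : ℝ, t ≠ 0 ∧ |t| ≤ m / 8 ∧ t * κ ≤ 0 := by
    rcases le_total κ 0 with h0 | h0
    · exact ⟨m / 8, by positivity, by rw [abs_of_pos (by positivity)],
        mul_nonpos_of_nonneg_of_nonpos (by positivity) h0⟩
    · exact ⟨-(m / 8), by simp [hm0.ne'], by rw [abs_neg, abs_of_pos (by positivity)],
        mul_nonpos_of_nonpos_of_nonneg (by linarith) h0⟩
  have small : ∀ p r : ℝ, m ≤ p → |r| ≤ 8 → 0 ≤ p + t * r := by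
    intro p r hp hr
    have : |t * r| ≤ m / 8 * 8 := by
      rw [abs_mul]; exact mul_le_mul htm hr (abs_nonneg _) (by positivity)
    linarith [neg_abs_le (t * r)]
  obtain ⟨hκl, hκu⟩ := abs_le.1 hκ1
  have hca : 0 < c * a := by positivity
  have hcb : 0 < c * b := by positivity
  have hce : 0 < c * e := by positivity
  have hca1 : c * a < 1 := mul_lt_one_of_nonneg_of_lt_one_left hc0.le hc1 hxi1.le
  have hcb1 : c * b < 1 := mul_lt_one_of_nonneg_of_lt_one_left hc0.le hc1 hyj1.le
  have hce1 : c * e < 1 := mul_lt_one_of_nonneg_of_lt_one_left hc0.le hc1 he1.le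
  set Δ := 1 + t ^ 2 * (1 - c ^ 2) with hΔ
  have hΔ1 : 1 < Δ := by
    have : 0 < t ^ 2 := by positivity
    have : 0 < 1 - c ^ 2 := by nlinarith
    have : 0 < t ^ 2 * (1 - c ^ 2) := by positivity
    linarith
  have hΔ0 : 0 < Δ := by linarith
  set μ := 1 + t * κ with hμ
  have hμ0 : 0 < μ := by
    have := small m κ le_rfl (hκ1.trans (by norm_num))
    linarith
  have hμ1 : μ ≤ 1 := by linarith
  set d₁ := 1 - t * c with hd₁
  set d₂ := 1 + t * c with hd₂
  have hdd : d₁ * d₂ + t * t = Δ := by rw [hd₁, hd₂, hΔ]; ring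
  have hdet : μ / Δ * d₁ * (μ / Δ * d₂) - μ / Δ * t * (μ / Δ * -t) = μ ^ 2 / Δ := by
    calc _ = (μ / Δ) ^ 2 * (d₁ * d₂ + t * t) := by ring
      _ = _ := by rw [hdd]; field_simp
  have n1 : 0 ≤ a + t * (c * a - b) :=
    small _ _ hm1 (abs_le.2 ⟨by linarith, by linarith⟩)
  have n2 : 0 ≤ (1 - a) + t * (κ - (c * a - b)) :=
    small _ _ hm2 (abs_le.2 ⟨by linarith, by linarith⟩)
  have n3 : 0 ≤ b + t * (a - c * b) :=
    small _ _ hm3 (abs_le.2 ⟨by linarith, by linarith⟩)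
  have n4 : 0 ≤ (1 - b) + t * (κ - (a - c * b)) :=
    small _ _ hm4 (abs_le.2 ⟨by linarith, by linarith⟩)
  have n5 : 0 ≤ e + t * (c * e + (1 - e - b)) :=
    small _ _ hm5 (abs_le.2 ⟨by linarith, by linarith⟩)
  have n6 : 0 ≤ (1 - e) + t * (-(c * (1 - e)) - (e - a)) :=
    small _ _ hm6 (abs_le.2 ⟨by linarith, by linarith⟩)
  have h1 := h (a - (a + t * (c * a - b)) / Δ * d₁) (-((a + t * (c * a - b)) / Δ * t))
    (μ / Δ * d₁) (μ / Δ * t) (μ / Δ * -t) (μ / Δ * d₂)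
    (by rw [hd₁, hd₂]; ring) (by rw [hdet]; positivity)
    (fun l => by
      rcases hijk l with rfl | rfl | rfl
      · refine ⟨(a + t * (c * a - b)) / μ, 0, div_nonneg n1 hμ0.le, le_rfl, ?_, ?_, ?_⟩
        · rw [add_zero, div_le_one hμ0]; linarith
        · rw [← ha]; field_simp; ring
        · rw [hyi]; field_simp; ring
      · refine ⟨0, (b + t * (a - c * b)) / μ, le_rfl, div_nonneg n3 hμ0.le, ?_, ?_, ?_⟩
        · rw [zero_add, div_le_one hμ0]; linarith
        · rw [hxj]; field_simp; rw [hΔ, hd₁]; ring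
        · rw [← hb]; field_simp; rw [hΔ, hd₂]; ring
      · refine ⟨(e + t * (c * e + (1 - e - b))) / μ,
          ((1 - e) + t * (-(c * (1 - e)) - (e - a))) / μ, div_nonneg n5 hμ0.le,
          div_nonneg n6 hμ0.le, ?_, ?_, ?_⟩
        · rw [← add_div, div_le_one hμ0, hμ, hκ]; linarith
        · rw [← he]; field_simp; rw [hΔ, hd₁]; ring
        · rw [hyk']; field_simp; rw [hΔ, hd₂]; ring)
  rw [hdet, abs_of_pos (by positivity), le_div_iff₀ hΔ0] at h1
  linarith [pow_le_one₀ hμ0.le hμ1 (n := 2)]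

/-- Some contained point is the apex. -/
lemma exists_apex (h : CoordMin c x y) (hc0 : 0 < c) (hc1 : c < 1)
    (hx : ∀ i, 0 ≤ x i) (hy : ∀ i, 0 ≤ y i) (hxy : ∀ i, x i + y i ≤ 1) :
    ∃ i, x i = 0 ∧ y i = 0 := by
  by_contra! hne
  obtain ⟨i, hyi, hxi⟩ := h.exists_on_leg hc0 hc1 hx hy hxy
  obtain ⟨j, hxj, hyj⟩ := h.swap.exists_on_leg hc0 hc1 hy hx (fun i => by linarith [hxy i])
  obtain ⟨k, hk⟩ := h.exists_on_base hx hy hxy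
  have hxi0 : 0 < x i := (hx i).lt_of_ne fun h0 => hne i h0.symm hyi
  have hyj0 : 0 < y j := (hy j).lt_of_ne fun h0 => hne j hxj h0.symm
  have hij : i ≠ j := by rintro rfl; linarith
  have hik : i ≠ k := by rintro rfl; linarith
  have hjk : j ≠ k := by rintro rfl; linarith
  have hijk : ∀ l, l = i ∨ l = j ∨ l = k := by omega
  rcases (hx k).eq_or_lt with hxk | hxk
  · exact h.swap.false_of_base_vertex hc0 hc1 (i := j) (j := i) (k := k) (by omega)
      hxj hyj0 hyj hyi hxi0 hxi (by linarith) hxk.symm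
  rcases (hy k).eq_or_lt with hyk | hyk
  · exact h.false_of_base_vertex hc0 hc1 hijk hyi hxi0 hxi hxj hyj0 hyj (by linarith) hyk.symm
  exact h.false_of_interior hc0 hc1 hijk hyi hxi0 hxi hxj hyj0 hyj hk hxk hyk

end CoordMin

/-- Twice the signed area of the triangle `A B C`. -/
def cross (A B C : Pt) : ℝ :=
  (B 0 - A 0) * (C 1 - A 1) - (B 1 - A 1) * (C 0 - A 0)

lemma cross_rotate (A B C : Pt) : cross B C A = cross A B C := by
  simp only [cross]; ring

lemma cross_ne_zero_of_forall_eq {T : Fin 3 → Pt} (hT : cross (T 0) (T 1) (T 2) ≠ 0)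
    {i j k : Fin 3} (hijk : ∀ l, l = i ∨ l = j ∨ l = k) : cross (T i) (T j) (T k) ≠ 0 := by
  intro h
  apply hT
  fin_cases i <;> fin_cases j <;> fin_cases k <;> first
    | exact absurd (hijk 0) (by decide)
    | exact absurd (hijk 1) (by decide)
    | exact absurd (hijk 2) (by decide)
    | (simp only [cross, Fin.zero_eta, Fin.mk_one, Fin.reduceFinMk] at h ⊢; linarith)

lemma tri_rotate_s2 (A B C : Pt) : tri B C A = tri A B C := by
  unfold tri; congr 1; ext; simp; tauto

lemma tri_swap_left (A B C : Pt) : tri B A C = tri A B C := by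
  unfold tri; rw [Set.insert_comm]

lemma tri_swap_right (A B C : Pt) : tri A C B = tri A B C := by
  unfold tri; rw [Set.pair_comm]

lemma affineIndependent_iff_cross_ne_zero (A B C : Pt) :
    AffineIndependent ℝ ![A, B, C] ↔ cross A B C ≠ 0 := by
  rw [affineIndependent_iff_linearIndependent_vsub ℝ _ (0 : Fin 3),
    ← linearIndependent_equiv (finSuccAboveEquiv (0 : Fin 3))]
  have : (fun i : {x : Fin 3 // x ≠ 0} => ![A, B, C] i -ᵥ ![A, B, C] 0) ∘
      (finSuccAboveEquiv (0 : Fin 3)) = ![B - A, C - A] := by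
    ext i; fin_cases i <;> rfl
  rw [this, LinearIndependent.pair_iff]
  constructor
  · intro h hc
    simp only [cross] at hc
    have h1 := h (C 1 - A 1) (-(B 1 - A 1)) (by
      ext l; fin_cases l <;> simp <;> linarith)
    have h2 := h (C 0 - A 0) (-(B 0 - A 0)) (by
      ext l; fin_cases l <;> simp <;> linarith)
    have h3 := h 1 0 (by
      ext l; fin_cases l <;> simp <;> linarith)
    exact one_ne_zero h3.1
  · intro h s t hst
    have e0 := congrArg (fun v : Pt => v 0) hst
    have e1 := congrArg (fun v : Pt => v 1) hst
    simp at e0 e1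
    constructor
    · refine (mul_eq_zero.1 (?_ : s * cross A B C = 0)).resolve_right h
      simp only [cross]
      linear_combination (C 1 - A 1) * e0 - (C 0 - A 0) * e1
    · refine (mul_eq_zero.1 (?_ : t * cross A B C = 0)).resolve_right h
      simp only [cross]
      linear_combination (B 0 - A 0) * e1 - (B 1 - A 1) * e0

lemma mem_tri_iff_s2 {A B C X : Pt} : X ∈ tri A B C ↔
    ∃ u v : ℝ, 0 ≤ u ∧ 0 ≤ v ∧ u + v ≤ 1 ∧ X = A + u • (B - A) + v • (C - A) := by
  constructor
  · intro h
    refine convexHull_min (t := {X | ∃ u v : ℝ, 0 ≤ u ∧ 0 ≤ v ∧ u + v ≤ 1 ∧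
      X = A + u • (B - A) + v • (C - A)}) ?_ ?_ h
    · rintro Y (rfl | rfl | rfl)
      · exact ⟨0, 0, by simp⟩
      · exact ⟨1, 0, by simp⟩
      · exact ⟨0, 1, by simp⟩
    · rintro _ ⟨u, v, hu, hv, huv, rfl⟩ _ ⟨u', v', hu', hv', huv', rfl⟩ s t hs ht hst
      refine ⟨s * u + t * u', s * v + t * v', by positivity, by positivity, ?_, ?_⟩
      · nlinarith
      · obtain rfl : t = 1 - s := by linarith
        module
  · rintro ⟨u, v, hu, hv, huv, rfl⟩
    have hc : Convex ℝ (tri A B C) := convex_convexHull ℝ _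
    have hs : ({A, B, C} : Set Pt) ⊆ tri A B C := subset_convexHull ℝ _
    have := hc.sum_mem (t := Finset.univ) (w := ![1 - u - v, u, v]) (z := ![A, B, C])
      (by intro i _; fin_cases i <;> simp <;> linarith)
      (by simp only [Fin.sum_univ_three, Matrix.cons_val]; ring)
      (by intro i _; apply hs; fin_cases i <;> simp)
    convert this using 1
    simp only [Fin.sum_univ_three, Matrix.cons_val]
    module

/-- Up to a universal factor, the area of a triangle is the absolute value of `cross`. -/
lemma exists_triArea_eq : ∃ κ : ℝ, 0 < κ ∧ ∀ A B C : Pt, triArea A B C = |cross A B C| * κ := by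
  let b := (EuclideanSpace.basisFun (Fin 2) ℝ).toBasis
  refine ⟨triArea 0 (b 0) (b 1), ?_, fun A B C => ?_⟩
  · refine ENNReal.toReal_pos ?_ ?_
    · have hne : (interior (tri 0 (b 0) (b 1))).Nonempty := by
        unfold tri
        rw [interior_convexHull_nonempty_iff_affineSpan_eq_top]
        have hind : AffineIndependent ℝ ![0, b 0, b 1] := by
          rw [affineIndependent_iff_cross_ne_zero]
          simp [cross, b]
        have := hind.affineSpan_eq_top_iff_card_eq_finrank_add_one.2 (by simp)
        rw [← this]
        congr 1
        rw [Matrix.range_cons, Matrix.range_cons_cons_empty, Set.singleton_union]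
      exact (Measure.measure_pos_of_nonempty_interior _ hne).ne'
    · exact ((Set.toFinite {0, b 0, b 1}).isCompact_convexHull ℝ).measure_lt_top.ne
  · let f : Pt →ₗ[ℝ] Pt := Matrix.toLin b b !![B 0 - A 0, C 0 - A 0; B 1 - A 1, C 1 - A 1]
    have hf0 : f (b 0) = B - A := by
      rw [Matrix.toLin_self]
      ext l; fin_cases l <;> simp [b, Fin.sum_univ_two]
    have hf1 : f (b 1) = C - A := by
      rw [Matrix.toLin_self]
      ext l; fin_cases l <;> simp [b, Fin.sum_univ_two]
    have himg : tri A B C = (fun X => A + X) '' (f '' tri 0 (b 0) (b 1)) := by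
      ext X
      simp only [Set.mem_image, exists_exists_and_eq_and, mem_tri_iff_s2]
      constructor
      · rintro ⟨u, v, hu, hv, huv, rfl⟩
        exact ⟨_, ⟨u, v, hu, hv, huv, rfl⟩, by simp [hf0, hf1, add_assoc]⟩
      · rintro ⟨_, ⟨u, v, hu, hv, huv, rfl⟩, rfl⟩
        exact ⟨u, v, hu, hv, huv, by simp [hf0, hf1, add_assoc]⟩
    have hdet : LinearMap.det f = cross A B C := by
      simp only [f, LinearMap.det_toLin, Matrix.det_fin_two_of, cross]
      ring
    unfold triArea
    rw [himg, Set.image_add_left, measure_preimage_add, Measure.addHaar_image_linearMap, hdet,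
      ENNReal.toReal_mul, ENNReal.toReal_ofReal (abs_nonneg _)]

lemma norm_sq_eq (v : Pt) : ‖v‖ ^ 2 = v 0 ^ 2 + v 1 ^ 2 := by
  rw [EuclideanSpace.real_norm_sq_eq, Fin.sum_univ_two]

lemma eq_of_onRay {X Y Z W : Pt} (hXY : X ≠ Y) (hZ : OnRay X Y Z) (hW : OnRay X Y W)
    (h : dist X Z = dist X W) : Z = W := by
  have := norm_injOn_ray_left (sub_ne_zero.2 hXY.symm) hZ hW
    (by simpa [dist_eq_norm, norm_sub_rev X] using h)
  exact sub_left_injective this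

/-- An acute-apex isosceles triangle of minimum area around `T` has a vertex of `T` as its apex, the
farther other vertex of `T` as a base vertex, and the remaining one on the opposite leg. -/
lemma exists_tri_eq_of_apex {S P R : Pt} {T : Fin 3 → Pt} (hT : cross (T 0) (T 1) (T 2) ≠ 0)
    (hSPR : cross S P R ≠ 0) (hiso : dist S P = dist R S) (hacute : ∠ P S R < π / 2)
    (hsub : tri (T 0) (T 1) (T 2) ⊆ tri S P R)
    (hmin : ∀ S' P' R' : Pt, IsIsoscelesContainer (T 0) (T 1) (T 2) S' P' R' →
      triArea S P R ≤ triArea S' P' R') :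
    ∃ i, ∀ j k, (∀ l, l = i ∨ l = j ∨ l = k) → dist (T i) (T k) ≤ dist (T i) (T j) →
      ∀ W, OnRay (T i) (T k) W → dist (T i) W = dist (T i) (T j) →
        tri S P R = tri (T i) (T j) W := by
  obtain ⟨κ, hκ, harea⟩ := exists_triArea_eq
  have hmem : ∀ i, T i ∈ tri S P R := fun i => hsub (subset_convexHull ℝ _ (by
    fin_cases i <;> simp))
  choose x y hx hy hxy hTxy using fun i => mem_tri_iff_s2.1 (hmem i)
  set p := P - S with hp
  set r := R - S with hr
  have hpr : ‖p‖ = ‖r‖ := by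
    rw [hp, hr, ← dist_eq_norm, ← dist_eq_norm, dist_comm, hiso]
  have hcross : cross S P R = p 0 * r 1 - p 1 * r 0 := by simp [cross, hp, hr]
  have hnp := norm_sq_eq p
  have hnr := norm_sq_eq r
  rw [← hpr] at hnr
  have hp0 : 0 < ‖p‖ ^ 2 := by
    rw [hnp]
    by_contra! h
    have h0 : p 0 = 0 := by nlinarith [sq_nonneg (p 0), sq_nonneg (p 1)]
    have h1 : p 1 = 0 := by nlinarith [sq_nonneg (p 0), sq_nonneg (p 1)]
    exact hSPR (by rw [hcross, h0, h1]; ring)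
  set d := p 0 * r 0 + p 1 * r 1 with hd
  have hd0 : 0 < d := by
    have : inner ℝ p r = d := by
      simp [PiLp.inner_apply, Fin.sum_univ_two, hd]; ring
    rw [← this]
    have h1 : 0 < inner ℝ p r / (‖p‖ * ‖r‖) := Real.arccos_lt_pi_div_two.1 hacute
    rw [← hpr, ← sq] at h1
    exact (div_pos_iff_of_pos_right hp0).1 h1
  have hdlt : d < ‖p‖ ^ 2 := by
    have h1 : d ^ 2 + cross S P R ^ 2 = (‖p‖ ^ 2) ^ 2 := by
      rw [hcross, hd]; linear_combination (-‖p‖ ^ 2) * hnr - (r 0 ^ 2 + r 1 ^ 2) * hnp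
    have h2 : 0 < cross S P R ^ 2 := by positivity
    exact lt_of_pow_lt_pow_left₀ 2 hp0.le (by linarith)
  set c := d / ‖p‖ ^ 2 with hc
  have hc0 : 0 < c := by positivity
  have hc1 : c < 1 := (div_lt_one hp0).2 hdlt
  have hcd : c * ‖p‖ ^ 2 = d := div_mul_cancel₀ d hp0.ne'
  have hnorm : ∀ a b : ℝ, ‖a • p + b • r‖ ^ 2 = ‖p‖ ^ 2 * (a ^ 2 + b ^ 2 + 2 * c * (a * b)) := by
    intro a b
    have h1 : ‖p‖ ^ 2 * (a ^ 2 + b ^ 2 + 2 * c * (a * b)) =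
        ‖p‖ ^ 2 * a ^ 2 + ‖p‖ ^ 2 * b ^ 2 + 2 * (a * b) * d := by rw [← hcd]; ring
    rw [h1, norm_sq_eq]
    simp only [PiLp.add_apply, PiLp.smul_apply, smul_eq_mul, hd]
    linear_combination (-a ^ 2) * hnp - b ^ 2 * hnr
  have hcm : CoordMin c x y := by
    intro s₁ s₂ a₁ a₂ b₁ b₂ hq hdet hm
    set S' := S + s₁ • p + s₂ • r with hS'
    have hcr : cross S' (S' + (a₁ • p + a₂ • r)) (S' + (b₁ • p + b₂ • r)) =
        (a₁ * b₂ - a₂ * b₁) * cross S P R := by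
      rw [hcross]; simp [cross]; ring
    have h1 := hmin S' (S' + (a₁ • p + a₂ • r)) (S' + (b₁ • p + b₂ • r)) ⟨?_, ?_, ?_⟩
    · rw [harea, harea, hcr, abs_mul] at h1
      have h2 := le_of_mul_le_mul_right h1 hκ
      exact (le_mul_iff_one_le_left (abs_pos.2 hSPR)).1 h2
    · rw [affineIndependent_iff_cross_ne_zero, hcr]
      exact mul_ne_zero hdet hSPR
    · right; left
      rw [dist_self_add_left, dist_self_add_right]
      refine (sq_eq_sq₀ (norm_nonneg _) (norm_nonneg _)).1 ?_
      rw [hnorm, hnorm, hq]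
    · have hTm : ∀ i, T i ∈ tri S' (S' + (a₁ • p + a₂ • r)) (S' + (b₁ • p + b₂ • r)) := by
        intro i
        obtain ⟨u, v, hu, hv, huv, h1, h2⟩ := hm i
        refine mem_tri_iff_s2.2 ⟨u, v, hu, hv, huv, ?_⟩
        rw [hTxy i, h1, h2, hS']
        module
      refine convexHull_min ?_ (convex_convexHull ℝ _)
      rintro _ (rfl | rfl | rfl) <;> exact hTm _
  obtain ⟨i, hxi, hyi⟩ := hcm.exists_apex hc0 hc1 hx hy hxy
  have hTi : T i = S := by rw [hTxy i, hxi, hyi]; simp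
  refine ⟨i, fun j k hijk hle W hW hWd => ?_⟩
  have hdist : ∀ l, dist (T i) (T l) ^ 2 =
      ‖p‖ ^ 2 * (x l ^ 2 + y l ^ 2 + 2 * c * (x l * y l)) := by
    intro l
    rw [← hnorm, hTi, hTxy l, add_assoc, dist_self_add_right]
  have hTcross : cross (T i) (T j) (T k) ≠ 0 := cross_ne_zero_of_forall_eq hT hijk
  have hjk : x j * y k - y j * x k ≠ 0 := by
    intro h
    apply hTcross
    rw [hTi, hTxy j, hTxy k]
    simp only [cross, PiLp.add_apply, PiLp.smul_apply, smul_eq_mul]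
    linear_combination (p 0 * r 1 - p 1 * r 0) * h
  have hsq : dist (T i) (T k) ^ 2 ≤ dist (T i) (T j) ^ 2 := by gcongr
  rw [hdist, hdist] at hsq
  have hray : ∀ z : ℝ, 0 ≤ z → ∀ Q, T k = S + z • (Q - S) → OnRay (T i) (T k) Q := by
    intro z hz Q hQ
    rw [OnRay, hQ, hTi, add_sub_cancel_left]
    exact SameRay.sameRay_nonneg_smul_left _ hz
  have hne : T i ≠ T k := by
    intro h
    apply hTcross
    rw [h]; simp [cross]
  have hSP : dist (T i) P = dist (T i) R := by rw [hTi, hiso, dist_comm]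
  rcases hcm.of_apex hc0 hc1 hx hy hxy hijk hxi hyi hjk (le_of_mul_le_mul_left hsq hp0) with
    ⟨h1, h2, h3⟩ | ⟨h1, h2, h3⟩
  · have hj : T j = P := by rw [hTxy j, h1, h2, hp]; simp
    have hk := hray (y k) (hy k) R (by rw [hTxy k, h3, hr]; simp)
    rw [eq_of_onRay hne hW hk (by rw [hWd, hj, hSP]), hTi, hj]
  · have hj : T j = R := by rw [hTxy j, h1, h2, hr]; simp
    have hk := hray (x k) (hx k) P (by rw [hTxy k, h3, hp]; simp)
    rw [eq_of_onRay hne hW hk (by rw [hWd, hj, hSP]), hTi, hj, tri_swap_right]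

/-- if a minimum area isosceles container `S P R` of a triangle
`A B C` with side lengths `a < b < c` is acute, then it equals one of the
special containers of the first kind `AB'C`, `ABC'`, `ABC''`. -/
theorem statement2 (A B C B' C' C'' S P R : Pt)
    (hABC : AffineIndependent ℝ ![A, B, C])
    (hab : dist B C < dist C A) (hbc : dist C A < dist A B)
    (hB'ray : OnRay C B B') (hB'dist : dist C B' = dist C A)
    (hC'ray : OnRay A C C') (hC'dist : dist A C' = dist A B)
    (hC''ray : OnRay B C C'') (hC''dist : dist B C'' = dist A B)
    (hmin : IsMinIsoscelesContainer A B C S P R)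
    (hacute : ∠ P S R < π / 2 ∧ ∠ S P R < π / 2 ∧ ∠ S R P < π / 2) :
    tri S P R = tri A B' C ∨ tri S P R = tri A B C' ∨
      tri S P R = tri A B C'' := by
  obtain ⟨⟨hind, hiso, hsub⟩, hle⟩ := hmin
  rw [affineIndependent_iff_cross_ne_zero] at hABC hind
  have hcase : ∀ S P R : Pt, cross S P R ≠ 0 → dist S P = dist R S → ∠ P S R < π / 2 →
      tri A B C ⊆ tri S P R →
      (∀ S' P' R' : Pt, IsIsoscelesContainer A B C S' P' R' →
        triArea S P R ≤ triArea S' P' R') →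
      tri S P R = tri A B' C ∨ tri S P R = tri A B C' ∨ tri S P R = tri A B C'' := by
    intro S P R hSPR hiso hang hsub hle
    obtain ⟨i, hi⟩ := exists_tri_eq_of_apex (T := ![A, B, C]) hABC hSPR hiso hang hsub hle
    fin_cases i
    · exact Or.inr (Or.inl (hi 1 2 (by decide) (by simpa [dist_comm] using hbc.le) C' hC'ray
        hC'dist))
    · have := hi 0 2 (by decide) (by simpa [dist_comm] using (hab.trans hbc).le) C'' hC''ray
        (by simpa [dist_comm] using hC''dist)
      exact Or.inr (Or.inr (this.trans (tri_swap_left A B C'')))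
    · have := hi 0 1 (by decide) (by simpa [dist_comm] using hab.le) B' hB'ray hB'dist
      exact Or.inl (this.trans (tri_rotate_s2 C A B').symm)
  have hR : tri R S P = tri S P R := (tri_rotate_s2 ..).symm
  have hP : tri P R S = tri S P R := tri_rotate_s2 ..
  rcases hiso with h | h | h
  · rw [← hR] at hsub ⊢
    refine hcase R S P (by rwa [← cross_rotate]) (by rw [h]) hacute.2.2 hsub fun S' P' R' hc => ?_
    rw [triArea, hR]
    exact hle S' P' R' hc
  · exact hcase S P R hind (by rw [h]) hacute.1 hsub hle
  · rw [← hP] at hsub ⊢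
    refine hcase P R S (by rwa [cross_rotate]) (by rw [h]) (by rw [angle_comm]; exact hacute.2.1)
      hsub fun S' P' R' hc => ?_
    rw [triArea, hP]
    exact hle S' P' R' hc
end
end
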